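/- Let k ∈ ℕ be fixed. Then there exists a constant 𝒦₇(k) > 0 depending only on k such that for every n ≥ 2 and every n×n real matrix A with σ_A > 0: sup_{z∈ℝ} | E(|𝒯_A|^k · 1_{(−∞,z]}(𝒯_A)) − ∫_{−∞}^{z} |x|^k ψ(x) dx | ≤ 𝒦₇(k)·( β_A/n + (1/n)·Σ_{i,j=1}^{n} |â_{ij}|^{k+4} ). -/

import Mathlib

open Finset MeasureTheory

/-- Density of the standard normal distribution. -/
noncomputable def gaussD (x : ℝ) : ℝ := (Real.sqrt (2 * Real.pi))⁻¹ * Real.exp (-(x ^ 2) / 2)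

/-- Distribution function of the standard normal distribution. -/
noncomputable def gaussCDF (x : ℝ) : ℝ := ∫ t in Set.Iic x, gaussD t

section RankDefs

variable {m : ℕ}

/-- Row mean `a_{i·}`. -/
noncomputable def rowMean (A : Matrix (Fin m) (Fin m) ℝ) (i : Fin m) : ℝ := (∑ j, A i j) / (m : ℝ)

/-- Column mean `a_{·j}`. -/
noncomputable def colMean (A : Matrix (Fin m) (Fin m) ℝ) (j : Fin m) : ℝ := (∑ i, A i j) / (m : ℝ)

/-- Grand mean `a_{··}`. -/
noncomputable def totMean (A : Matrix (Fin m) (Fin m) ℝ) : ℝ := (∑ i, ∑ j, A i j) / (m : ℝ) ^ 2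

/-- Centered entries `a_{ij} − a_{i·} − a_{·j} + a_{··}`. -/
noncomputable def ctr (A : Matrix (Fin m) (Fin m) ℝ) (i j : Fin m) : ℝ :=
  A i j - rowMean A i - colMean A j + totMean A

/-- `σ_A²`. -/
noncomputable def sigma2 (A : Matrix (Fin m) (Fin m) ℝ) : ℝ :=
  (∑ i, ∑ j, ctr A i j ^ 2) / ((m : ℝ) - 1)

/-- `σ_A`. -/
noncomputable def sdev (A : Matrix (Fin m) (Fin m) ℝ) : ℝ := Real.sqrt (sigma2 A)

/-- Standardized matrix `Â = (â_{ij})`. -/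
noncomputable def hatM (A : Matrix (Fin m) (Fin m) ℝ) : Matrix (Fin m) (Fin m) ℝ :=
  fun i j => ctr A i j / sdev A

/-- `μ_A = n·a_{··}`. -/
noncomputable def muM (A : Matrix (Fin m) (Fin m) ℝ) : ℝ := (m : ℝ) * totMean A

/-- The linear rank statistic `T_A(π) = Σ_i a_{iπ(i)}`. -/
noncomputable def rankT (A : Matrix (Fin m) (Fin m) ℝ) (π : Equiv.Perm (Fin m)) : ℝ :=
  ∑ i, A i (π i)

/-- Expectation with respect to the uniform distribution on permutations. -/
noncomputable def permExp (f : Equiv.Perm (Fin m) → ℝ) : ℝ :=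
  (∑ π : Equiv.Perm (Fin m), f π) / (Nat.factorial m : ℝ)

/-- The standardized rank statistic `𝒯_A = (T_A − μ_A)/σ_A`. -/
noncomputable def rankTstd (A : Matrix (Fin m) (Fin m) ℝ) (π : Equiv.Perm (Fin m)) : ℝ :=
  (rankT A π - muM A) / sdev A

/-- `F_A`, the distribution function of `T_A`. -/
noncomputable def Fr (A : Matrix (Fin m) (Fin m) ℝ) (z : ℝ) : ℝ :=
  permExp (fun π => if rankT A π ≤ z then (1 : ℝ) else 0)

/-- `ℱ_A`, the distribution function of `𝒯_A`. -/
noncomputable def Fstd (A : Matrix (Fin m) (Fin m) ℝ) (z : ℝ) : ℝ :=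
  permExp (fun π => if rankTstd A π ≤ z then (1 : ℝ) else 0)

/-- `β_A = Σ_{i,j} |â_{ij}|³`. -/
noncomputable def betaM (A : Matrix (Fin m) (Fin m) ℝ) : ℝ := ∑ i, ∑ j, |hatM A i j| ^ 3

/-- `δ_A = Σ_{i,j} |â_{ij}|⁴`. -/
noncomputable def deltaM (A : Matrix (Fin m) (Fin m) ℝ) : ℝ := ∑ i, ∑ j, |hatM A i j| ^ 4

/-- `η_A = Σ_{i,j} |â_{ij}|⁵`. -/
noncomputable def etaM (A : Matrix (Fin m) (Fin m) ℝ) : ℝ := ∑ i, ∑ j, |hatM A i j| ^ 5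

/-- `D_A = (δ_A/n)^{1/2}`. -/
noncomputable def DM (A : Matrix (Fin m) (Fin m) ℝ) : ℝ := Real.sqrt (deltaM A / (m : ℝ))

/-- `E_A = (η_A/n)^{1/3}`. -/
noncomputable def EM (A : Matrix (Fin m) (Fin m) ℝ) : ℝ := (etaM A / (m : ℝ)) ^ ((1 : ℝ) / 3)

/-- `λ_{1,A} = (1/n)Σ_{i,j} â_{ij}³`. -/
noncomputable def lam1 (A : Matrix (Fin m) (Fin m) ℝ) : ℝ := (∑ i, ∑ j, hatM A i j ^ 3) / (m : ℝ)

/-- `λ_{2,A}`. -/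
noncomputable def lam2 (A : Matrix (Fin m) (Fin m) ℝ) : ℝ :=
  (∑ i, ∑ j, hatM A i j ^ 4) / (m : ℝ) + 3 / (m : ℝ)
    - 3 / (m : ℝ) ^ 2 *
        ∑ i, ∑ j, ∑ k, (hatM A i j ^ 2 * hatM A i k ^ 2 + hatM A i j ^ 2 * hatM A k j ^ 2)

/-- First-order Edgeworth expansion `e_{1,A}`. -/
noncomputable def edge1 (A : Matrix (Fin m) (Fin m) ℝ) (x : ℝ) : ℝ :=
  gaussCDF x - gaussD x * (lam1 A / 6) * (x ^ 2 - 1)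

/-- Second-order Edgeworth expansion `e_{2,A}`. -/
noncomputable def edge2 (A : Matrix (Fin m) (Fin m) ℝ) (x : ℝ) : ℝ :=
  gaussCDF x - gaussD x *
    (lam1 A / 6 * (x ^ 2 - 1) + lam2 A / 24 * (x ^ 3 - 3 * x)
      + lam1 A ^ 2 / 72 * (x ^ 5 - 10 * x ^ 3 + 15 * x))

/-- `k`-th iterated difference `Δ_y^k G`. -/
noncomputable def Δiter (y : ℝ) (k : ℕ) (G : ℝ → ℝ) : ℝ → ℝ :=
  (fun (G : ℝ → ℝ) (z : ℝ) => G (z + y) - G z)^[k] G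

/-- The interpolating polynomial `P_y^k(x; z, F)` of `F` at the points `z, z+y, …, z+ky`. -/
noncomputable def interp (y : ℝ) (k : ℕ) (z : ℝ) (F : ℝ → ℝ) (x : ℝ) : ℝ :=
  F z + ∑ s ∈ Finset.Icc 1 k,
    Δiter y s F z * ∏ i ∈ Finset.Icc 1 s, (x - z - ((i : ℝ) - 1) * y) / ((i : ℝ) * y)

end RankDefs

/-!
The statement is reduced to matrices with bounded entries by discarding the entries of `hatM A` of
modulus larger than one. The rank statistic `X` of their moduli is zero or at least one, so that
this changes the truncated power by at most a constant times `X * |T| ^ k + X ^ (k + 1)`, where `T`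
is the statistic of the remaining matrix; the expectation of this is of the order of the
normalized sums of absolute powers on the right-hand side.

For bounded entries, Stein's method is applied to the exchangeable pair of `π` and `π * swap i j`.
Given the images of `i` and `j`, the rest of the statistic is the rank statistic of a minor. For
the derivative `φ` of a solution of Stein's equation, the pair identity therefore compares
expectations `E φ(T + y)` for `T` itself and for the statistics of minors, at various
translations `y`. These depend on `y` in a Lipschitz way, uniformly in the width `ε` of the ramp
that replaces the indicator function: `φ` is Lipschitz except for a part of slope `|x| ^ k / ε`,
living on an interval of length `ε`, and a concentration inequality, again a consequence of the
pair identity, shows that `T` falls into such an interval with weighted probability of order `ε`.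
The width is taken of the order of `betaM A / n`, and the sharp truncation lies between two ramps.
-/

section PermutationExpectation

variable {n : ℕ}

lemma permExp_add (F G : Equiv.Perm (Fin n) → ℝ) :
    permExp (fun π => F π + G π) = permExp F + permExp G := by
  simp [permExp, sum_add_distrib, add_div]

lemma permExp_sub (F G : Equiv.Perm (Fin n) → ℝ) :
    permExp (fun π => F π - G π) = permExp F - permExp G := by
  simp [permExp, sum_sub_distrib, sub_div]

lemma permExp_const_mul (c : ℝ) (F : Equiv.Perm (Fin n) → ℝ) :
    permExp (fun π => c * F π) = c * permExp F := by
  simp [permExp, ← mul_sum, mul_div_assoc]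

lemma permExp_const (c : ℝ) : permExp (fun _ : Equiv.Perm (Fin n) => c) = c := by
  have : (n.factorial : ℝ) ≠ 0 := by positivity
  simp [permExp, Fintype.card_perm, this]

lemma permExp_sum {ι : Type*} (s : Finset ι) (F : ι → Equiv.Perm (Fin n) → ℝ) :
    permExp (fun π => ∑ a ∈ s, F a π) = ∑ a ∈ s, permExp (F a) := by
  simp only [permExp]
  rw [sum_comm, sum_div]

lemma permExp_mono {F G : Equiv.Perm (Fin n) → ℝ} (h : ∀ π, F π ≤ G π) :
    permExp F ≤ permExp G :=
  div_le_div_of_nonneg_right (sum_le_sum fun π _ => h π) (by positivity)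

lemma permExp_nonneg {F : Equiv.Perm (Fin n) → ℝ} (h : ∀ π, 0 ≤ F π) : 0 ≤ permExp F :=
  div_nonneg (sum_nonneg fun π _ => h π) (by positivity)

lemma abs_permExp_le (F : Equiv.Perm (Fin n) → ℝ) : |permExp F| ≤ permExp (fun π => |F π|) := by
  simp only [permExp, abs_div, Nat.abs_cast]
  gcongr
  exact abs_sum_le_sum_abs _ _

lemma permExp_comp_equiv (e : Equiv.Perm (Fin n) ≃ Equiv.Perm (Fin n))
    (F : Equiv.Perm (Fin n) → ℝ) : permExp (fun π => F (e π)) = permExp F := by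
  rw [permExp, Equiv.sum_comp e, permExp]

end PermutationExpectation

section Insertion

variable {n : ℕ}

/-- The permutation of `Fin (n + 1)` that sends `i` to `p` and acts as `σ` on the remaining
indices, both sides being relabelled increasingly by `Fin n`. -/
noncomputable def insertPerm (i p : Fin (n + 1)) (σ : Equiv.Perm (Fin n)) :
    Equiv.Perm (Fin (n + 1)) :=
  (finSuccEquiv' i).trans ((Equiv.optionCongr σ).trans (finSuccEquiv' p).symm)

lemma insertPerm_apply_self (i p : Fin (n + 1)) (σ : Equiv.Perm (Fin n)) :
    insertPerm i p σ i = p := by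
  simp [insertPerm]

lemma insertPerm_apply_succAbove (i p : Fin (n + 1)) (σ : Equiv.Perm (Fin n)) (x : Fin n) :
    insertPerm i p σ (i.succAbove x) = p.succAbove (σ x) := by
  simp [insertPerm]

lemma insertPerm_inv (i p : Fin (n + 1)) (σ : Equiv.Perm (Fin n)) :
    (insertPerm i p σ)⁻¹ = insertPerm p i σ⁻¹ := by
  ext x
  simp [insertPerm, Equiv.Perm.inv_def]

lemma insertPerm_bijective (i : Fin (n + 1)) :
    Function.Bijective fun x : Fin (n + 1) × Equiv.Perm (Fin n) => insertPerm i x.1 x.2 := by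
  rw [Fintype.bijective_iff_injective_and_card]
  refine ⟨?_, by simp [Fintype.card_perm, Nat.factorial_succ]⟩
  rintro ⟨p, σ⟩ ⟨p', σ'⟩ h
  have apply_eq (x : Fin (n + 1)) : insertPerm i p σ x = insertPerm i p' σ' x :=
    DFunLike.congr_fun h x
  obtain rfl : p = p' := by simpa only [insertPerm_apply_self] using apply_eq i
  obtain rfl : σ = σ' := by
    ext x
    have := apply_eq (i.succAbove x)
    simp only [insertPerm_apply_succAbove] at this
    exact congrArg _ (Fin.succAbove_right_injective this)
  rfl

lemma permExp_eq_avg_insertPerm_row (i : Fin (n + 1)) (G : Equiv.Perm (Fin (n + 1)) → ℝ) :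
    permExp G = (∑ p, permExp fun σ => G (insertPerm i p σ)) / ((n : ℝ) + 1) := by
  have sum_eq : ∑ π, G π = ∑ p, ∑ σ, G (insertPerm i p σ) := by
    rw [← Fintype.sum_prod_type', ← (insertPerm_bijective i).sum_comp]
  simp only [permExp, sum_eq, ← sum_div, div_div, Nat.factorial_succ]
  push_cast
  rw [mul_comm]

lemma permExp_eq_avg_insertPerm_col (p : Fin (n + 1)) (G : Equiv.Perm (Fin (n + 1)) → ℝ) :
    permExp G = (∑ i, permExp fun σ => G (insertPerm i p σ)) / ((n : ℝ) + 1) := by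
  rw [← permExp_comp_equiv (Equiv.inv _) G, permExp_eq_avg_insertPerm_row p]
  congr! 2 with i
  rw [← permExp_comp_equiv (Equiv.inv _) fun σ => G (insertPerm i p σ)]
  simp [insertPerm_inv]

/-- The matrix `B` with row `i` and column `p` deleted. -/
def minor (B : Matrix (Fin (n + 1)) (Fin (n + 1)) ℝ) (i p : Fin (n + 1)) :
    Matrix (Fin n) (Fin n) ℝ :=
  B.submatrix i.succAbove p.succAbove

@[simp]
lemma minor_apply (B : Matrix (Fin (n + 1)) (Fin (n + 1)) ℝ) (i p : Fin (n + 1)) (x y : Fin n) :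
    minor B i p x y = B (i.succAbove x) (p.succAbove y) := rfl

lemma minor_minor_succAbove_predAbove (B : Matrix (Fin (n + 2)) (Fin (n + 2)) ℝ)
    (i p : Fin (n + 2)) (j q : Fin (n + 1)) :
    minor (minor B i (p.succAbove q)) j (q.predAbove p) = minor (minor B i p) j q := by
  ext x y
  simp [Fin.succAbove_succAbove_succAbove_predAbove]

lemma rankT_insertPerm (B : Matrix (Fin (n + 1)) (Fin (n + 1)) ℝ) (i p : Fin (n + 1))
    (σ : Equiv.Perm (Fin n)) : rankT B (insertPerm i p σ) = rankT (minor B i p) σ + B i p := by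
  simp [rankT, Fin.sum_univ_succAbove _ i, insertPerm_apply_self, insertPerm_apply_succAbove,
    add_comm]

lemma permExp_two_images_rankT (B : Matrix (Fin (n + 2)) (Fin (n + 2)) ℝ) (i : Fin (n + 2))
    (j : Fin (n + 1)) (G : Fin (n + 2) → Fin (n + 2) → ℝ → ℝ) :
    permExp (fun π => G (π i) (π (i.succAbove j)) (rankT B π)) =
      (∑ p, ∑ q : Fin (n + 1), permExp fun σ => G p (p.succAbove q)
        (rankT (minor (minor B i p) j q) σ + (B i p + B (i.succAbove j) (p.succAbove q)))) /
          (((n : ℝ) + 2) * ((n : ℝ) + 1)) := by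
  rw [permExp_eq_avg_insertPerm_row i]
  simp only [insertPerm_apply_self, insertPerm_apply_succAbove, rankT_insertPerm]
  simp_rw [permExp_eq_avg_insertPerm_row j]
  simp only [insertPerm_apply_self, rankT_insertPerm, minor_apply, add_assoc, add_comm (B i _)]
  rw [← sum_div, div_div]
  push_cast
  congr 1
  ring

end Insertion

section Exchange

variable {n : ℕ}

/-- The increment of the rank statistic of `B` when the images `p` of `i` and `q` of `j` are
exchanged. -/
def swapGain (B : Matrix (Fin n) (Fin n) ℝ) (i j p q : Fin n) : ℝ :=
  B i q + B j p - B i p - B j q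

/-- The sum of all entries of a matrix. -/
def entrySum (B : Matrix (Fin n) (Fin n) ℝ) : ℝ := ∑ i, ∑ j, B i j

@[simp]
lemma swapGain_self_row (B : Matrix (Fin n) (Fin n) ℝ) (i p q : Fin n) :
    swapGain B i i p q = 0 := by
  unfold swapGain; ring

@[simp]
lemma swapGain_self_col (B : Matrix (Fin n) (Fin n) ℝ) (i j p : Fin n) :
    swapGain B i j p p = 0 := by
  unfold swapGain; ring

lemma swapGain_swap_swap (B : Matrix (Fin n) (Fin n) ℝ) (i j p q : Fin n) :
    swapGain B j i q p = swapGain B i j p q := by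
  unfold swapGain; ring

lemma swapGain_swap_cols (B : Matrix (Fin n) (Fin n) ℝ) (i j p q : Fin n) :
    swapGain B i j q p = -swapGain B i j p q := by
  unfold swapGain; ring

lemma swapGain_minor (B : Matrix (Fin (n + 1)) (Fin (n + 1)) ℝ) (a b : Fin (n + 1))
    (i j p q : Fin n) : swapGain (minor B a b) i j p q =
      swapGain B (a.succAbove i) (a.succAbove j) (b.succAbove p) (b.succAbove q) := rfl

lemma rankT_mul_swap (B : Matrix (Fin n) (Fin n) ℝ) (π : Equiv.Perm (Fin n)) (i j : Fin n) :
    rankT B (π * Equiv.swap i j) = rankT B π + swapGain B i j (π i) (π j) := by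
  rcases eq_or_ne i j with rfl | hij
  · simp [rankT]
  have summand_eq (x : Fin n) : B x ((π * Equiv.swap i j) x) = B x (π x)
      + (if x = i then B i (π j) - B i (π i) else 0)
      + (if x = j then B j (π i) - B j (π j) else 0) := by
    rcases eq_or_ne x i with rfl | hxi
    · simp [hij]
    rcases eq_or_ne x j with rfl | hxj
    · simp [hxi]
    · simp [hxi, hxj, Equiv.swap_apply_of_ne_of_ne hxi hxj]
  simp only [rankT, summand_eq, sum_add_distrib, sum_ite_eq', mem_univ, if_true, swapGain]
  ring

lemma sum_swapGain_perm (B : Matrix (Fin n) (Fin n) ℝ) (π : Equiv.Perm (Fin n)) :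
    ∑ i, ∑ j, swapGain B i j (π i) (π j) = 2 * entrySum B - 2 * n * rankT B π := by
  have sum_perm_cols : ∑ i, ∑ j, B i (π j) = entrySum B :=
    sum_congr rfl fun i _ => Equiv.sum_comp π (B i)
  have sum_perm_cols' : ∑ i, ∑ j, B j (π i) = entrySum B := by rw [sum_comm, sum_perm_cols]
  simp only [swapGain, sum_sub_distrib, sum_add_distrib, sum_perm_cols, sum_perm_cols',
    sum_const, card_univ, Fintype.card_fin, nsmul_eq_mul, ← mul_sum, rankT]
  ring

lemma permExp_swapGain_mul_sub (B : Matrix (Fin n) (Fin n) ℝ) (F : ℝ → ℝ) (i j : Fin n) :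
    permExp (fun π => swapGain B i j (π i) (π j) *
      (F (rankT B π + swapGain B i j (π i) (π j)) - F (rankT B π))) =
      -2 * permExp fun π => swapGain B i j (π i) (π j) * F (rankT B π) := by
  -- `π` and `π * swap i j` are exchangeable, and the gain changes sign between them.
  have exchanged : permExp (fun π => swapGain B i j (π i) (π j) *
      F (rankT B π + swapGain B i j (π i) (π j))) =
      permExp fun π => -1 * (swapGain B i j (π i) (π j) * F (rankT B π)) := by
    rw [← permExp_comp_equiv (Equiv.mulRight (Equiv.swap i j))]
    congr with π
    simp [rankT_mul_swap, swapGain_swap_cols B i j (π i)]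
  simp only [mul_sub, permExp_sub, exchanged, permExp_const_mul]
  ring

/-- The exchangeable pair identity of Stein's method. -/
lemma sum_permExp_swapGain_mul_sub (B : Matrix (Fin n) (Fin n) ℝ) (F : ℝ → ℝ) :
    ∑ i, ∑ j, permExp (fun π => swapGain B i j (π i) (π j) *
      (F (rankT B π + swapGain B i j (π i) (π j)) - F (rankT B π))) =
      4 * permExp fun π => (n * rankT B π - entrySum B) * F (rankT B π) := by
  simp only [permExp_swapGain_mul_sub, ← mul_sum, ← permExp_sum, ← sum_mul, sum_swapGain_perm]
  rw [← permExp_const_mul, ← permExp_const_mul]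
  congr with π
  ring

/-- The expectation of `φ (T_B + y)`, as a function of the translation `y`. -/
noncomputable def rankExp (φ : ℝ → ℝ) (B : Matrix (Fin n) (Fin n) ℝ) (y : ℝ) : ℝ :=
  permExp fun π => φ (rankT B π + y)

lemma rankExp_zero (φ : ℝ → ℝ) (B : Matrix (Fin n) (Fin n) ℝ) :
    rankExp φ B 0 = permExp fun π => φ (rankT B π) := by
  simp [rankExp]

lemma permExp_stein_identity (B : Matrix (Fin (n + 2)) (Fin (n + 2)) ℝ) (f : ℝ → ℝ) :
    4 * permExp (fun π => (((n : ℝ) + 2) * rankT B π - entrySum B) * f (rankT B π)) =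
      (∑ i, ∑ j : Fin (n + 1), ∑ p, ∑ q : Fin (n + 1),
        swapGain B i (i.succAbove j) p (p.succAbove q) *
          (rankExp f (minor (minor B i p) j q) (B i p + B (i.succAbove j) (p.succAbove q) +
              swapGain B i (i.succAbove j) p (p.succAbove q)) -
            rankExp f (minor (minor B i p) j q) (B i p + B (i.succAbove j) (p.succAbove q)))) /
          (((n : ℝ) + 2) * ((n : ℝ) + 1)) := by
  have exchange := sum_permExp_swapGain_mul_sub B f
  push_cast at exchange
  rw [← exchange, sum_div]
  refine sum_congr rfl fun i _ => ?_
  rw [Fin.sum_univ_succAbove _ i, sum_div]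
  simp only [swapGain_self_row, zero_mul, permExp_const, zero_add]
  refine sum_congr rfl fun j _ => ?_
  rw [permExp_two_images_rankT B i j fun p q t => swapGain B i (i.succAbove j) p q *
    (f (t + swapGain B i (i.succAbove j) p q) - f t)]
  simp only [permExp_const_mul, permExp_sub, add_assoc, rankExp]

end Exchange

section SwapSums

variable {n : ℕ}

/-- The sum of `g` over all exchange increments of `B`. The sums of `(· ^ 2)` and `(|·| ^ 3)` play
the roles of the variance and of the third absolute moment of `B`. -/
def swapSum (g : ℝ → ℝ) (B : Matrix (Fin n) (Fin n) ℝ) : ℝ :=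
  ∑ i, ∑ j, ∑ p, ∑ q, g (swapGain B i j p q)

/-- The total size of the exchange increments available when `π i = p`. -/
def crossGain (B : Matrix (Fin n) (Fin n) ℝ) (i p : Fin n) : ℝ := ∑ j, ∑ q, |swapGain B i j p q|

lemma swapSum_nonneg {g : ℝ → ℝ} (hg : ∀ x, 0 ≤ g x) (B : Matrix (Fin n) (Fin n) ℝ) :
    0 ≤ swapSum g B :=
  sum_nonneg fun _ _ => sum_nonneg fun _ _ => sum_nonneg fun _ _ => sum_nonneg fun _ _ => hg _

lemma sum_four_eq_sum_succAbove (F : Fin (n + 1) → Fin (n + 1) → Fin (n + 1) → Fin (n + 1) → ℝ)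
    (hrow : ∀ i p q, F i i p q = 0) (hcol : ∀ i j p, F i j p p = 0) :
    ∑ i, ∑ j, ∑ p, ∑ q, F i j p q =
      ∑ i, ∑ j : Fin n, ∑ p, ∑ q : Fin n, F i (i.succAbove j) p (p.succAbove q) := by
  refine sum_congr rfl fun i _ => ?_
  rw [Fin.sum_univ_succAbove _ i]
  simp only [hrow, sum_const_zero, zero_add]
  refine sum_congr rfl fun j _ => sum_congr rfl fun p _ => ?_
  rw [Fin.sum_univ_succAbove _ p, hcol, zero_add]

lemma swapSum_eq_sum_succAbove {g : ℝ → ℝ} (hg : g 0 = 0)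
    (B : Matrix (Fin (n + 1)) (Fin (n + 1)) ℝ) :
    swapSum g B = ∑ i, ∑ j : Fin n, ∑ p, ∑ q : Fin n,
      g (swapGain B i (i.succAbove j) p (p.succAbove q)) :=
  sum_four_eq_sum_succAbove _ (by simp [hg]) (by simp [hg])

lemma crossGain_eq_sum_succAbove (B : Matrix (Fin (n + 1)) (Fin (n + 1)) ℝ) (i p : Fin (n + 1)) :
    crossGain B i p =
      ∑ j : Fin n, ∑ q : Fin n, |swapGain B i (i.succAbove j) p (p.succAbove q)| := by
  rw [crossGain, Fin.sum_univ_succAbove _ i]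
  simp [Fin.sum_univ_succAbove _ p]

lemma crossGain_minor_le (B : Matrix (Fin (n + 1)) (Fin (n + 1)) ℝ) (i p : Fin (n + 1))
    (j q : Fin n) :
    crossGain (minor B i p) j q ≤ crossGain B (i.succAbove j) (p.succAbove q) := by
  simp only [crossGain, swapGain_minor]
  rw [Fin.sum_univ_succAbove _ i]
  refine le_add_of_nonneg_of_le (sum_nonneg fun _ _ => abs_nonneg _) (sum_le_sum fun j' _ => ?_)
  rw [Fin.sum_univ_succAbove _ p]
  exact le_add_of_nonneg_left (abs_nonneg _)

lemma sum_sq_mul_sum_le_card_mul_sum_cube {ι : Type*} [Fintype ι] {x : ι → ℝ} (hx : ∀ a, 0 ≤ x a) :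
    (∑ a, x a ^ 2) * ∑ a, x a ≤ Fintype.card ι * ∑ a, x a ^ 3 := by
  have monovary : Monovary (fun a => x a ^ 2) x := fun a b hab =>
    pow_le_pow_left₀ (hx a) hab.le 2
  simpa only [← pow_succ] using monovary.sum_mul_sum_le_card_mul_sum

lemma sum_swapGain_sq_mul_crossGain_le (B : Matrix (Fin n) (Fin n) ℝ) :
    ∑ i, ∑ j, ∑ p, ∑ q, swapGain B i j p q ^ 2 * crossGain B i p ≤
      (n : ℝ) ^ 2 * swapSum (|·| ^ 3) B := by
  have fixed_cross (i p : Fin n) : ∑ j, ∑ q, swapGain B i j p q ^ 2 * crossGain B i p ≤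
      (n : ℝ) ^ 2 * ∑ j, ∑ q, |swapGain B i j p q| ^ 3 := by
    have chebyshev := sum_sq_mul_sum_le_card_mul_sum_cube
      (fun jq : Fin n × Fin n => abs_nonneg (swapGain B i jq.1 p jq.2))
    simpa [Fintype.sum_prod_type, ← sum_mul, crossGain, ← pow_two] using chebyshev
  calc ∑ i, ∑ j, ∑ p, ∑ q, swapGain B i j p q ^ 2 * crossGain B i p
      = ∑ i, ∑ p, ∑ j, ∑ q, swapGain B i j p q ^ 2 * crossGain B i p :=
        sum_congr rfl fun i _ => sum_comm
    _ ≤ ∑ i, ∑ p, (n : ℝ) ^ 2 * ∑ j, ∑ q, |swapGain B i j p q| ^ 3 :=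
        sum_le_sum fun i _ => sum_le_sum fun p _ => fixed_cross i p
    _ = (n : ℝ) ^ 2 * ∑ i, ∑ p, ∑ j, ∑ q, |swapGain B i j p q| ^ 3 := by simp only [mul_sum]
    _ = (n : ℝ) ^ 2 * swapSum (|·| ^ 3) B := by
        rw [swapSum]
        exact congrArg _ (sum_congr rfl fun i _ => sum_comm)

lemma sum_swapGain_sq_mul_crossGain_le' (B : Matrix (Fin n) (Fin n) ℝ) :
    ∑ i, ∑ j, ∑ p, ∑ q, swapGain B i j p q ^ 2 * crossGain B j q ≤
      (n : ℝ) ^ 2 * swapSum (|·| ^ 3) B := by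
  refine le_of_eq_of_le ?_ (sum_swapGain_sq_mul_crossGain_le B)
  rw [sum_comm]
  refine sum_congr rfl fun j _ => sum_congr rfl fun i _ => ?_
  rw [sum_comm]
  simp only [swapGain_swap_swap B j i]

end SwapSums

section TranslationLipschitz

variable {n : ℕ} {φ : ℝ → ℝ}

lemma rankExp_eq_avg_minor_row (φ : ℝ → ℝ) (B : Matrix (Fin (n + 1)) (Fin (n + 1)) ℝ)
    (i : Fin (n + 1)) (y : ℝ) :
    rankExp φ B y = (∑ p, rankExp φ (minor B i p) (B i p + y)) / ((n : ℝ) + 1) := by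
  simp only [rankExp, permExp_eq_avg_insertPerm_row i, rankT_insertPerm, add_assoc]

lemma rankExp_eq_avg_minor_col (φ : ℝ → ℝ) (B : Matrix (Fin (n + 1)) (Fin (n + 1)) ℝ)
    (p : Fin (n + 1)) (y : ℝ) :
    rankExp φ B y = (∑ i, rankExp φ (minor B i p) (B i p + y)) / ((n : ℝ) + 1) := by
  simp only [rankExp, permExp_eq_avg_insertPerm_col p, rankT_insertPerm, add_assoc]

lemma hasDerivAt_rankExp {f : ℝ → ℝ} (hf : ∀ x, HasDerivAt f (φ x) x)
    (B : Matrix (Fin n) (Fin n) ℝ) (y : ℝ) : HasDerivAt (rankExp f B) (rankExp φ B y) y :=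
  (HasDerivAt.fun_sum fun _ _ => (hf _).comp_const_add _ y).div_const _

lemma abs_avg_sub_avg_le {a b c : Fin (n + 1) → ℝ} (h : ∀ i, |a i - b i| ≤ c i) :
    |(∑ i, a i) / ((n : ℝ) + 1) - (∑ i, b i) / ((n : ℝ) + 1)| ≤ (∑ i, c i) / ((n : ℝ) + 1) := by
  rw [← sub_div, ← sum_sub_distrib, abs_div, abs_of_nonneg (by positivity : (0 : ℝ) ≤ n + 1)]
  gcongr
  exact (abs_sum_le_sum_abs _ _).trans (sum_le_sum fun i _ => h i)

variable {C : NNReal}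

lemma abs_sub_le_of_lipschitzOnWith_closedBall {g : ℝ → ℝ} {r : ℝ}
    (h : LipschitzOnWith C g (Metric.closedBall 0 r)) {y y' : ℝ} (hy : |y| ≤ r) (hy' : |y'| ≤ r) :
    |g y - g y'| ≤ C * |y - y'| := by
  simpa only [Real.dist_eq] using h.dist_le_mul y (by simpa using hy) y' (by simpa using hy')

lemma lipschitzOnWith_rankExp_of_minor {B : Matrix (Fin (n + 1)) (Fin (n + 1)) ℝ} {r : ℝ}
    (hB : ∀ i j, |B i j| ≤ 1) (i : Fin (n + 1))
    (hL : ∀ p, LipschitzOnWith C (rankExp φ (minor B i p)) (Metric.closedBall 0 (r + 1))) :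
    LipschitzOnWith C (rankExp φ B) (Metric.closedBall 0 r) := by
  refine LipschitzOnWith.of_dist_le_mul fun y hy y' hy' => ?_
  simp only [mem_closedBall_zero_iff, Real.norm_eq_abs] at hy hy'
  rw [Real.dist_eq, Real.dist_eq, rankExp_eq_avg_minor_row φ B i, rankExp_eq_avg_minor_row φ B i]
  have termwise (p : Fin (n + 1)) : |rankExp φ (minor B i p) (B i p + y) -
      rankExp φ (minor B i p) (B i p + y')| ≤ C * |y - y'| := by
    simpa using abs_sub_le_of_lipschitzOnWith_closedBall (hL p)
      ((abs_add_le (B i p) y).trans (by linarith [hB i p]))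
      ((abs_add_le (B i p) y').trans (by linarith [hB i p]))
  refine (abs_avg_sub_avg_le termwise).trans_eq ?_
  simp
  field_simp

lemma abs_rankExp_minor_sub_rankExp_minor_le {B : Matrix (Fin (n + 2)) (Fin (n + 2)) ℝ} {r y : ℝ}
    (hB : ∀ i j, |B i j| ≤ 1) (hy : |y| + 2 ≤ r) (i p : Fin (n + 2))
    (hL : ∀ j q, LipschitzOnWith C (rankExp φ (minor (minor B i p) j q)) (Metric.closedBall 0 r))
    (q : Fin (n + 1)) :
    |rankExp φ (minor B i (p.succAbove q)) (B i (p.succAbove q) + y) -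
      rankExp φ (minor B i p) (B i p + y)| ≤
      C * ((∑ j : Fin (n + 1), |swapGain B i (i.succAbove j) p (p.succAbove q)|) /
        ((n : ℝ) + 1)) := by
  -- Removing also the preimage `j` of the other column makes the two minors equal.
  rw [rankExp_eq_avg_minor_col φ (minor B i _) (q.predAbove p),
    rankExp_eq_avg_minor_col φ (minor B i p) q, ← mul_div_assoc, mul_sum]
  refine abs_avg_sub_avg_le fun j => ?_
  rw [minor_minor_succAbove_predAbove, minor_apply, minor_apply, Fin.succAbove_succAbove_predAbove]
  have translation_le {u v : Fin (n + 2)} {a b : Fin (n + 2)} : |B u a + (B v b + y)| ≤ r := by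
    have := abs_add_three (B u a) (B v b) y
    rw [add_assoc] at this
    linarith [hB u a, hB v b]
  have lipschitz := abs_sub_le_of_lipschitzOnWith_closedBall (hL j q)
    (translation_le (u := i.succAbove j) (a := p) (v := i) (b := p.succAbove q))
    (translation_le (u := i.succAbove j) (a := p.succAbove q) (v := i) (b := p))
  convert lipschitz using 3
  unfold swapGain
  ring

lemma abs_rankExp_sub_rankExp_minor_le {B : Matrix (Fin (n + 2)) (Fin (n + 2)) ℝ} {r y : ℝ}
    (hB : ∀ i j, |B i j| ≤ 1) (hy : |y| + 2 ≤ r) (i p : Fin (n + 2))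
    (hL : ∀ j q, LipschitzOnWith C (rankExp φ (minor (minor B i p) j q)) (Metric.closedBall 0 r)) :
    |rankExp φ B y - rankExp φ (minor B i p) (B i p + y)| ≤
      C * (crossGain B i p / (((n : ℝ) + 2) * ((n : ℝ) + 1))) := by
  have avg_const : rankExp φ (minor B i p) (B i p + y) =
      (∑ _p' : Fin (n + 2), rankExp φ (minor B i p) (B i p + y)) / (((n + 1 : ℕ) : ℝ) + 1) := by
    simp
    field_simp
    ring
  have termwise (p' : Fin (n + 2)) : |rankExp φ (minor B i p') (B i p' + y) -
      rankExp φ (minor B i p) (B i p + y)| ≤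
      C * ((∑ j : Fin (n + 1), |swapGain B i (i.succAbove j) p p'|) / ((n : ℝ) + 1)) := by
    rcases Fin.eq_self_or_eq_succAbove p p' with rfl | ⟨q, rfl⟩
    · simp
    · exact abs_rankExp_minor_sub_rankExp_minor_le hB hy i p hL q
  rw [avg_const, rankExp_eq_avg_minor_row φ B i]
  refine (abs_avg_sub_avg_le termwise).trans_eq ?_
  have crossGain_eq : crossGain B i p =
      ∑ p', ∑ j : Fin (n + 1), |swapGain B i (i.succAbove j) p p'| := by
    rw [crossGain_eq_sum_succAbove, sum_comm, Fin.sum_univ_succAbove _ p]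
    simp
  rw [← mul_sum, ← sum_div, ← crossGain_eq]
  push_cast
  field_simp
  ring

/-- Up to a Lipschitz constant, this bounds the effect on the expectation of conditioning a
permutation on `π i = p` and `π j = q`. -/
noncomputable def couplingCost (B : Matrix (Fin (n + 3)) (Fin (n + 3)) ℝ) (i j p q : Fin (n + 3)) :
    ℝ :=
  crossGain B i p / (((n : ℝ) + 3) * ((n : ℝ) + 2)) +
    crossGain B j q / (((n : ℝ) + 2) * ((n : ℝ) + 1)) + |swapGain B i j p q|

lemma sum_swapGain_sq_mul_couplingCost_le (B : Matrix (Fin (n + 3)) (Fin (n + 3)) ℝ) :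
    ∑ i, ∑ j, ∑ p, ∑ q, swapGain B i j p q ^ 2 * couplingCost B i j p q ≤
      7 * swapSum (|·| ^ 3) B := by
  have first_cross := sum_swapGain_sq_mul_crossGain_le B
  have second_cross := sum_swapGain_sq_mul_crossGain_le' B
  have cube_nonneg : 0 ≤ swapSum (|·| ^ 3) B := swapSum_nonneg (fun _ => by positivity) B
  have split (i j p q : Fin (n + 3)) : swapGain B i j p q ^ 2 * couplingCost B i j p q =
      swapGain B i j p q ^ 2 * crossGain B i p / (((n : ℝ) + 3) * ((n : ℝ) + 2)) +
        swapGain B i j p q ^ 2 * crossGain B j q / (((n : ℝ) + 2) * ((n : ℝ) + 1)) +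
        |swapGain B i j p q| ^ 3 := by
    rw [couplingCost, pow_succ |_|, sq_abs]
    ring
  simp only [split, sum_add_distrib, ← sum_div]
  push_cast at first_cross second_cross
  have first_le := div_le_div_of_nonneg_right first_cross
    (by positivity : (0 : ℝ) ≤ ((n : ℝ) + 3) * ((n : ℝ) + 2))
  have second_le := div_le_div_of_nonneg_right second_cross
    (by positivity : (0 : ℝ) ≤ ((n : ℝ) + 2) * ((n : ℝ) + 1))
  have first_ratio : ((n : ℝ) + 3) ^ 2 * swapSum (|·| ^ 3) B / (((n : ℝ) + 3) * ((n : ℝ) + 2)) ≤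
      3 / 2 * swapSum (|·| ^ 3) B := by
    rw [div_le_iff₀ (by positivity)]
    nlinarith [mul_nonneg cube_nonneg n.cast_nonneg (α := ℝ),
      mul_nonneg cube_nonneg (sq_nonneg (n : ℝ))]
  have second_ratio : ((n : ℝ) + 3) ^ 2 * swapSum (|·| ^ 3) B / (((n : ℝ) + 2) * ((n : ℝ) + 1)) ≤
      9 / 2 * swapSum (|·| ^ 3) B := by
    rw [div_le_iff₀ (by positivity)]
    nlinarith [mul_nonneg cube_nonneg n.cast_nonneg (α := ℝ),
      mul_nonneg cube_nonneg (sq_nonneg (n : ℝ))]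
  change _ + swapSum (|·| ^ 3) B ≤ _
  linarith

lemma abs_swapGain_le {B : Matrix (Fin n) (Fin n) ℝ} (hB : ∀ i j, |B i j| ≤ 1)
    (i j p q : Fin n) : |swapGain B i j p q| ≤ 4 := by
  have := abs_le.mp (hB i q)
  have := abs_le.mp (hB j p)
  have := abs_le.mp (hB i p)
  have := abs_le.mp (hB j q)
  rw [swapGain, abs_le]
  constructor <;> linarith

lemma abs_rankExp_minor_minor_sub_le {B : Matrix (Fin (n + 3)) (Fin (n + 3)) ℝ} {t : ℝ}
    (hB : ∀ i j, |B i j| ≤ 1) (ht : |t| ≤ 4)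
    (hL : ∀ i p j q k l, LipschitzOnWith C (rankExp φ (minor (minor (minor B i p) j q) k l))
      (Metric.closedBall 0 7)) (i p : Fin (n + 3)) (j q : Fin (n + 2)) :
    |rankExp φ (minor (minor B i p) j q) (B i p + B (i.succAbove j) (p.succAbove q) + t) -
        rankExp φ B 0| ≤
      C * (crossGain B i p / (((n : ℝ) + 3) * ((n : ℝ) + 2)) +
        crossGain B (i.succAbove j) (p.succAbove q) / (((n : ℝ) + 2) * ((n : ℝ) + 1)) + |t|) := by
  have hLminor (i p : Fin (n + 3)) (j q : Fin (n + 2)) :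
      LipschitzOnWith C (rankExp φ (minor (minor B i p) j q)) (Metric.closedBall 0 6) :=
    lipschitzOnWith_rankExp_of_minor (fun _ _ => hB _ _) 0
      fun l => by norm_num; exact hL i p j q 0 l
  have outer := abs_rankExp_sub_rankExp_minor_le (y := 0) hB (by norm_num) i p (hLminor i p)
  have inner := abs_rankExp_sub_rankExp_minor_le (B := minor B i p) (y := B i p) (fun _ _ => hB _ _)
    (by linarith [hB i p]) j q (hL i p j q)
  have inner_cost : C * (crossGain (minor B i p) j q / (((n : ℝ) + 2) * ((n : ℝ) + 1))) ≤
      C * (crossGain B (i.succAbove j) (p.succAbove q) / (((n : ℝ) + 2) * ((n : ℝ) + 1))) := by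
    gcongr
    exact crossGain_minor_le B i p j q
  set b := B i p + B (i.succAbove j) (p.succAbove q) with hb
  have hb2 : |b| ≤ 2 := (abs_add_le _ _).trans
    (by linarith [hB i p, hB (i.succAbove j) (p.succAbove q)])
  have translated := abs_sub_le_of_lipschitzOnWith_closedBall (hLminor i p j q) (y := b + t)
    (y' := b) ((abs_add_le b t).trans (by linarith)) (by linarith)
  rw [add_zero, abs_sub_comm] at outer
  rw [minor_apply, add_comm _ (B i p), ← hb, abs_sub_comm] at inner
  rw [add_sub_cancel_left] at translated
  push_cast at outer
  rw [show ((n : ℝ) + 1 + 2) * ((n : ℝ) + 1 + 1) = (n + 3) * (n + 2) by ring] at outer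
  have := abs_sub_le (rankExp φ (minor (minor B i p) j q) (b + t))
    (rankExp φ (minor (minor B i p) j q) b) (rankExp φ B 0)
  have := abs_sub_le (rankExp φ (minor (minor B i p) j q) b)
    (rankExp φ (minor B i p) (B i p)) (rankExp φ B 0)
  linarith

lemma abs_sub_sub_mul_le_of_hasDerivAt {g g' : ℝ → ℝ} {a b κ M : ℝ}
    (hg : ∀ x, HasDerivAt g (g' x) x) (hM : ∀ x ∈ Set.uIcc a b, |g' x - κ| ≤ M) :
    |g b - g a - (b - a) * κ| ≤ M * |b - a| := by
  have mean_value := (convex_uIcc a b).norm_image_sub_le_of_norm_hasDerivWithin_le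
    (f := fun x => g x - x * κ) (f' := fun x => g' x - κ)
    (fun x _ => ((hg x).sub (by simpa using (hasDerivAt_id x).mul_const κ)).hasDerivWithinAt)
    hM Set.left_mem_uIcc Set.right_mem_uIcc
  simp only [Real.norm_eq_abs] at mean_value
  convert mean_value using 2
  ring

lemma abs_swapGain_mul_rankExp_sub_le {B : Matrix (Fin (n + 3)) (Fin (n + 3)) ℝ} {f : ℝ → ℝ}
    (hB : ∀ i j, |B i j| ≤ 1) (hf : ∀ x, HasDerivAt f (φ x) x)
    (hL : ∀ i p j q k l, LipschitzOnWith C (rankExp φ (minor (minor (minor B i p) j q) k l))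
      (Metric.closedBall 0 7)) (i p : Fin (n + 3)) (j q : Fin (n + 2)) :
    |swapGain B i (i.succAbove j) p (p.succAbove q) *
        (rankExp f (minor (minor B i p) j q) (B i p + B (i.succAbove j) (p.succAbove q) +
            swapGain B i (i.succAbove j) p (p.succAbove q)) -
          rankExp f (minor (minor B i p) j q) (B i p + B (i.succAbove j) (p.succAbove q))) -
      swapGain B i (i.succAbove j) p (p.succAbove q) ^ 2 * rankExp φ B 0| ≤
      C * (swapGain B i (i.succAbove j) p (p.succAbove q) ^ 2 *
        couplingCost B i (i.succAbove j) p (p.succAbove q)) := by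
  set d := swapGain B i (i.succAbove j) p (p.succAbove q) with hd
  set b := B i p + B (i.succAbove j) (p.succAbove q)
  set g := rankExp f (minor (minor B i p) j q)
  have deriv_close (x : ℝ) (hx : x ∈ Set.uIcc b (b + d)) :
      |rankExp φ (minor (minor B i p) j q) x - rankExp φ B 0| ≤
        C * couplingCost B i (i.succAbove j) p (p.succAbove q) := by
    have hxd : |x - b| ≤ |d| := by simpa using Set.abs_sub_left_of_mem_uIcc hx
    have close := abs_rankExp_minor_minor_sub_le (t := x - b) hB
      (hxd.trans (abs_swapGain_le hB _ _ _ _)) hL i p j q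
    rw [add_sub_cancel] at close
    refine close.trans ?_
    rw [couplingCost, ← hd]
    gcongr
  have mean_value := abs_sub_sub_mul_le_of_hasDerivAt (hasDerivAt_rankExp hf _) deriv_close
  rw [add_sub_cancel_left] at mean_value
  calc |d * (g (b + d) - g b) - d ^ 2 * rankExp φ B 0|
      = |d| * |g (b + d) - g b - d * rankExp φ B 0| := by rw [← abs_mul]; ring_nf
    _ ≤ |d| * (C * couplingCost B i (i.succAbove j) p (p.succAbove q) * |d|) := by gcongr
    _ = C * (|d| ^ 2 * couplingCost B i (i.succAbove j) p (p.succAbove q)) := by ring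
    _ = _ := by rw [sq_abs]

lemma abs_stein_sub_le {B : Matrix (Fin (n + 3)) (Fin (n + 3)) ℝ} {f : ℝ → ℝ}
    (hB : ∀ i j, |B i j| ≤ 1) (hf : ∀ x, HasDerivAt f (φ x) x)
    (hL : ∀ i p j q k l, LipschitzOnWith C (rankExp φ (minor (minor (minor B i p) j q) k l))
      (Metric.closedBall 0 7)) :
    |4 * permExp (fun π => (((n : ℝ) + 3) * rankT B π - entrySum B) * f (rankT B π)) -
      swapSum (· ^ 2) B / (((n : ℝ) + 3) * ((n : ℝ) + 2)) *
        permExp (fun π => φ (rankT B π))| ≤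
      7 * C * swapSum (|·| ^ 3) B / (((n : ℝ) + 3) * ((n : ℝ) + 2)) := by
  have identity := permExp_stein_identity B f
  push_cast at identity
  rw [show ((n : ℝ) + 1 + 2) = n + 3 by ring, show ((n : ℝ) + 1 + 1) = n + 2 by ring] at identity
  rw [identity, ← rankExp_zero, swapSum_eq_sum_succAbove (by norm_num), div_mul_eq_mul_div,
    ← sub_div, abs_div, abs_of_nonneg (by positivity : (0 : ℝ) ≤ ((n : ℝ) + 3) * (n + 2))]
  refine div_le_div_of_nonneg_right ?_ (by positivity)
  have cost_le := sum_swapGain_sq_mul_couplingCost_le B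
  rw [sum_four_eq_sum_succAbove _ (by simp) (by simp)] at cost_le
  simp only [sum_mul, ← sum_sub_distrib]
  calc _ ≤ ∑ i, ∑ j : Fin (n + 2), ∑ p, ∑ q : Fin (n + 2),
        C * (swapGain B i (i.succAbove j) p (p.succAbove q) ^ 2 *
          couplingCost B i (i.succAbove j) p (p.succAbove q)) := by
        refine (abs_sum_le_sum_abs _ _).trans (sum_le_sum fun i _ => ?_)
        refine (abs_sum_le_sum_abs _ _).trans (sum_le_sum fun j _ => ?_)
        refine (abs_sum_le_sum_abs _ _).trans (sum_le_sum fun p _ => ?_)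
        refine (abs_sum_le_sum_abs _ _).trans (sum_le_sum fun q _ => ?_)
        exact abs_swapGain_mul_rankExp_sub_le hB hf hL i p j q
    _ ≤ C * (7 * swapSum (|·| ^ 3) B) := by
        simp only [← mul_sum]
        gcongr
    _ = 7 * C * swapSum (|·| ^ 3) B := by ring

end TranslationLipschitz

section Regularity

variable {n : ℕ} {g h : ℝ → ℝ}

lemma swapSum_mono (hgh : ∀ x, g x ≤ h x) (B : Matrix (Fin n) (Fin n) ℝ) :
    swapSum g B ≤ swapSum h B :=
  sum_le_sum fun _ _ => sum_le_sum fun _ _ => sum_le_sum fun _ _ => sum_le_sum fun _ _ => hgh _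

lemma swapSum_add (g h : ℝ → ℝ) (B : Matrix (Fin n) (Fin n) ℝ) :
    swapSum (fun x => g x + h x) B = swapSum g B + swapSum h B := by
  simp only [swapSum, sum_add_distrib]

lemma swapSum_sub (g h : ℝ → ℝ) (B : Matrix (Fin n) (Fin n) ℝ) :
    swapSum (fun x => g x - h x) B = swapSum g B - swapSum h B := by
  simp only [swapSum, sum_sub_distrib]

lemma swapSum_const_mul (a : ℝ) (g : ℝ → ℝ) (B : Matrix (Fin n) (Fin n) ℝ) :
    swapSum (fun x => a * g x) B = a * swapSum g B := by
  simp only [swapSum, mul_sum]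

lemma swapSum_const (a : ℝ) (B : Matrix (Fin n) (Fin n) ℝ) :
    swapSum (fun _ => a) B = (n : ℝ) ^ 4 * a := by
  simp [swapSum]
  ring

lemma swapSum_minor_le (hg : ∀ x, 0 ≤ g x) (B : Matrix (Fin (n + 1)) (Fin (n + 1)) ℝ)
    (i p : Fin (n + 1)) : swapSum g (minor B i p) ≤ swapSum g B := by
  have sum_succAbove_le {f : Fin (n + 1) → ℝ} (hf : ∀ a, 0 ≤ f a) (c : Fin (n + 1)) :
      ∑ a : Fin n, f (c.succAbove a) ≤ ∑ a, f a := by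
    rw [Fin.sum_univ_succAbove f c]
    exact le_add_of_nonneg_left (hf c)
  have sum_nonneg₁ (a b c : Fin (n + 1)) : 0 ≤ ∑ d, g (swapGain B a b c d) :=
    sum_nonneg fun _ _ => hg _
  have sum_nonneg₂ (a b : Fin (n + 1)) : 0 ≤ ∑ c, ∑ d, g (swapGain B a b c d) :=
    sum_nonneg fun _ _ => sum_nonneg₁ _ _ _
  simp only [swapSum, swapGain_minor]
  refine (sum_le_sum fun a _ => ?_).trans
    (sum_succAbove_le (fun a => sum_nonneg fun b _ => sum_nonneg₂ a b) i)
  refine (sum_le_sum fun b _ => ?_).trans (sum_succAbove_le (sum_nonneg₂ _) i)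
  exact (sum_le_sum fun c _ => sum_succAbove_le (fun _ => hg _) p).trans
    (sum_succAbove_le (sum_nonneg₁ _ _) p)

lemma sq_le_sq_add_abs_cube_div (x : ℝ) {t : ℝ} (ht : 0 < t) : x ^ 2 ≤ t ^ 2 + |x| ^ 3 / t := by
  rw [← sq_abs x]
  rcases le_total |x| t with hxt | hxt
  · exact le_add_of_le_of_nonneg (pow_le_pow_left₀ (abs_nonneg x) hxt 2) (by positivity)
  · refine le_add_of_nonneg_of_le (sq_nonneg t) ((le_div_iff₀ ht).mpr ?_)
    rw [pow_succ |x| 2]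
    gcongr

lemma swapSum_sq_le_minor_add (B : Matrix (Fin (n + 1)) (Fin (n + 1)) ℝ) (i p : Fin (n + 1))
    {t : ℝ} (ht : 0 < t) :
    swapSum (· ^ 2) B ≤
      swapSum (· ^ 2) (minor B i p) + 4 * t ^ 2 * ((n : ℝ) + 1) ^ 3 +
        swapSum (|·| ^ 3) B / t := by
  -- Passing to a minor decreases `swapSum` of the nonnegative `t ^ 2 + |x| ^ 3 / t - x ^ 2`.
  have defect_le := swapSum_minor_le (g := fun x => t ^ 2 - (x ^ 2 - t⁻¹ * |x| ^ 3))
    (fun x => by linarith [sq_le_sq_add_abs_cube_div x ht, inv_mul_eq_div t (|x| ^ 3)]) B i p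
  simp only [swapSum_sub, swapSum_const_mul, swapSum_const] at defect_le
  simp only [inv_mul_eq_div] at defect_le
  have cube_nonneg : 0 ≤ swapSum (|·| ^ 3) (minor B i p) / t :=
    div_nonneg (swapSum_nonneg (fun _ => by positivity) _) ht.le
  have pow_four_sub_le : ((n : ℝ) + 1) ^ 4 - n ^ 4 ≤ 4 * (n + 1) ^ 3 := by
    nlinarith [sq_nonneg (n : ℝ), n.cast_nonneg (α := ℝ)]
  have := mul_le_mul_of_nonneg_right pow_four_sub_le (sq_nonneg t)
  push_cast at defect_le
  linarith

lemma abs_entrySum_minor_le {B : Matrix (Fin (n + 1)) (Fin (n + 1)) ℝ} (hB : ∀ i j, |B i j| ≤ 1)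
    (i p : Fin (n + 1)) : |entrySum (minor B i p)| ≤ |entrySum B| + 2 * ((n : ℝ) + 1) := by
  have decomposition :
      entrySum (minor B i p) = entrySum B - (∑ q, B i q + ∑ j : Fin n, B (i.succAbove j) p) := by
    simp only [entrySum, minor_apply]
    rw [Fin.sum_univ_succAbove _ i]
    simp only [fun j : Fin n => Fin.sum_univ_succAbove (fun q => B (i.succAbove j) q) p,
      sum_add_distrib]
    ring
  have row_le : |∑ q, B i q| ≤ (n : ℝ) + 1 :=
    (abs_sum_le_sum_abs _ _).trans ((sum_le_sum fun q _ => hB i q).trans (by simp))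
  have col_le : |∑ j : Fin n, B (i.succAbove j) p| ≤ n :=
    (abs_sum_le_sum_abs _ _).trans ((sum_le_sum fun j _ => hB _ p).trans (by simp))
  rw [decomposition]
  refine (abs_sub _ _).trans ?_
  linarith [abs_add_le (∑ q, B i q) (∑ j : Fin n, B (i.succAbove j) p)]

/-- Bounded entries, together with the bounds on the mean and on the variance of the rank statistic
that a standardized matrix satisfies and that, up to a change of `L`, are inherited by minors. -/
structure IsTame (L : ℝ) (B : Matrix (Fin n) (Fin n) ℝ) : Prop where
  abs_le_one : ∀ i j, |B i j| ≤ 1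
  abs_entrySum_le : |entrySum B| ≤ L * n
  swapSum_sq_le : swapSum (· ^ 2) B ≤ L * (n : ℝ) ^ 3

/-- Tame matrices whose third moment is of order `γ` and whose variance is at least of order `c`. -/
structure IsNondegenerate (L c γ : ℝ) (B : Matrix (Fin n) (Fin n) ℝ) : Prop extends IsTame L B where
  swapSum_cube_le : swapSum (|·| ^ 3) B ≤ γ * L * (n : ℝ) ^ 3
  le_swapSum_sq : c * (n : ℝ) ^ 3 ≤ swapSum (· ^ 2) B

variable {L c γ : ℝ}

lemma IsTame.minor {B : Matrix (Fin (n + 1)) (Fin (n + 1)) ℝ} (h : IsTame L B) (hL : 0 ≤ L)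
    (i p : Fin (n + 1)) : IsTame (8 * L + 4) (minor B i p) := by
  rcases n.eq_zero_or_pos with rfl | hn
  · exact ⟨fun a => a.elim0, by simp [entrySum], by simp [swapSum]⟩
  have one_le : (1 : ℝ) ≤ n := by exact_mod_cast hn
  refine ⟨fun a b => h.abs_le_one _ _, ?_, ?_⟩
  · have minor_le := abs_entrySum_minor_le h.abs_le_one i p
    have total_le := h.abs_entrySum_le
    push_cast at total_le
    nlinarith
  · have minor_le := swapSum_minor_le (g := (· ^ 2)) (fun _ => sq_nonneg _) B i p
    have total_le := h.swapSum_sq_le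
    push_cast at total_le
    have : ((n : ℝ) + 1) ^ 3 ≤ (2 * n) ^ 3 := by gcongr; linarith
    nlinarith [pow_nonneg (n.cast_nonneg (α := ℝ)) 3]

lemma swapSum_cube_minor_le {B : Matrix (Fin (n + 1)) (Fin (n + 1)) ℝ} (h : IsNondegenerate L c γ B)
    (hL : 0 ≤ L) (hγ : 0 ≤ γ) (i p : Fin (n + 1)) :
    swapSum (|·| ^ 3) (minor B i p) ≤ γ * (8 * L + 4) * (n : ℝ) ^ 3 := by
  rcases n.eq_zero_or_pos with rfl | hn
  · simp [swapSum]
  have one_le : (1 : ℝ) ≤ n := by exact_mod_cast hn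
  calc swapSum (|·| ^ 3) (minor B i p)
      ≤ swapSum (|·| ^ 3) B := swapSum_minor_le (fun _ => by positivity) B i p
    _ ≤ γ * L * ((n + 1 : ℕ) : ℝ) ^ 3 := h.swapSum_cube_le
    _ ≤ γ * L * (2 * n) ^ 3 := by gcongr; push_cast; linarith
    _ = γ * (8 * L) * (n : ℝ) ^ 3 := by ring
    _ ≤ γ * (8 * L + 4) * (n : ℝ) ^ 3 := by gcongr; linarith

lemma exists_isNondegenerate_minor (hL : 0 < L) (hc : 0 < c) :
    ∃ γ₀ : ℝ, 0 < γ₀ ∧ ∀ γ, 0 ≤ γ → γ ≤ γ₀ →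
      ∀ (n : ℕ) (B : Matrix (Fin (n + 1)) (Fin (n + 1)) ℝ), IsNondegenerate L c γ B →
        ∀ i p, IsNondegenerate (8 * L + 4) (c / 2) γ (minor B i p) := by
  set t := √c / 4 with ht
  have t_pos : 0 < t := by positivity
  have t_sq : t ^ 2 = c / 16 := by rw [ht, div_pow, Real.sq_sqrt hc.le]; norm_num
  refine ⟨c * t / (4 * L), by positivity, fun γ hγ hγle n B h i p =>
    ⟨h.toIsTame.minor hL.le i p, swapSum_cube_minor_le h hL.le hγ i p, ?_⟩⟩
  have minor_ge := swapSum_sq_le_minor_add B i p t_pos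
  have sq_ge := h.le_swapSum_sq
  have cube_div_le : swapSum (|·| ^ 3) B / t ≤ c / 4 * ((n : ℝ) + 1) ^ 3 := by
    rw [div_le_iff₀ t_pos]
    calc swapSum (|·| ^ 3) B ≤ γ * L * ((n : ℝ) + 1) ^ 3 := by
          simpa only [Nat.cast_add_one] using h.swapSum_cube_le
      _ ≤ c * t / (4 * L) * L * ((n : ℝ) + 1) ^ 3 := by gcongr
      _ = c / 4 * ((n : ℝ) + 1) ^ 3 * t := by field_simp
  have : c / 2 * (n : ℝ) ^ 3 ≤ c / 2 * ((n : ℝ) + 1) ^ 3 := by gcongr; linarith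
  push_cast at sq_ge
  rw [t_sq] at minor_ge
  linarith

end Regularity

section Moments

variable {n : ℕ}

lemma abs_rankT_le {B : Matrix (Fin n) (Fin n) ℝ} (hB : ∀ i j, |B i j| ≤ 1)
    (π : Equiv.Perm (Fin n)) : |rankT B π| ≤ n :=
  (abs_sum_le_sum_abs _ _).trans ((sum_le_sum fun i _ => hB i (π i)).trans (by simp))

lemma abs_add_pow_sub_add_pow_le {S y d : ℝ} (hy : |y| ≤ 2) (hd : |d| ≤ 4) (r : ℕ) :
    |(S + (y + d)) ^ (2 * r + 1) - (S + y) ^ (2 * r + 1)| ≤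
      |d| * ((2 * r + 1 : ℕ) * (2 ^ (2 * r - 1) * (S ^ (2 * r) + 6 ^ (2 * r)))) := by
  have diff_le := abs_pow_sub_pow_le (S + (y + d)) (S + y) (2 * r + 1)
  rw [show S + (y + d) - (S + y) = d by ring, mul_assoc, Nat.add_sub_cancel] at diff_le
  have max_le : max |S + (y + d)| |S + y| ≤ |S| + 6 :=
    max_le (by linarith [abs_add_le S (y + d), abs_add_le y d]) (by linarith [abs_add_le S y])
  refine diff_le.trans ?_
  gcongr
  calc max |S + (y + d)| |S + y| ^ (2 * r) ≤ (|S| + 6) ^ (2 * r) :=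
        pow_le_pow_left₀ (le_max_of_le_left (abs_nonneg _)) max_le _
    _ ≤ 2 ^ (2 * r - 1) * (|S| ^ (2 * r) + 6 ^ (2 * r)) :=
        add_pow_le (abs_nonneg S) (by norm_num) _
    _ = 2 ^ (2 * r - 1) * (S ^ (2 * r) + 6 ^ (2 * r)) := by rw [(even_two_mul r).pow_abs]

lemma mul_abs_pow_le_half_add {L : ℝ} (hL : 0 ≤ L) (x : ℝ) (m : ℕ) :
    L * |x| ^ m ≤ |x| ^ (m + 1) / 2 + L * (2 * L) ^ m := by
  rcases le_total (2 * L) |x| with h | h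
  · have : 2 * L * |x| ^ m ≤ |x| * |x| ^ m := by gcongr
    have : 0 ≤ L * (2 * L) ^ m := by positivity
    rw [pow_succ']
    linarith
  · exact le_add_of_nonneg_of_le (by positivity) (by gcongr)

variable {L : ℝ}

lemma permExp_rankT_pow_succ_le {B : Matrix (Fin (n + 2)) (Fin (n + 2)) ℝ} (hL : 0 ≤ L)
    (hB : |entrySum B| ≤ L * ((n : ℝ) + 2)) (r : ℕ) :
    ((n : ℝ) + 2) * permExp (fun π => rankT B π ^ (2 * (r + 1))) ≤
      2 * permExp (fun π => (((n : ℝ) + 2) * rankT B π - entrySum B) * rankT B π ^ (2 * r + 1)) +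
        2 * (L * (2 * L) ^ (2 * r + 1)) * ((n : ℝ) + 2) := by
  rw [← permExp_const_mul, ← permExp_const_mul 2, ← permExp_const (2 * _ * _), ← permExp_add]
  refine permExp_mono fun π => ?_
  set T := rankT B π
  have even_pow : |T| ^ (2 * r + 1 + 1) = T ^ (2 * (r + 1)) := (even_two_mul (r + 1)).pow_abs T
  have drift_le : entrySum B * T ^ (2 * r + 1) ≤
      ((n : ℝ) + 2) * (T ^ (2 * (r + 1)) / 2 + L * (2 * L) ^ (2 * r + 1)) :=
    calc entrySum B * T ^ (2 * r + 1) ≤ |entrySum B| * |T| ^ (2 * r + 1) := by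
          rw [← abs_pow, ← abs_mul]
          exact le_abs_self _
      _ ≤ (L * ((n : ℝ) + 2)) * |T| ^ (2 * r + 1) := by gcongr
      _ = ((n : ℝ) + 2) * (L * |T| ^ (2 * r + 1)) := by ring
      _ ≤ _ := by
          rw [← even_pow]
          gcongr
          exact mul_abs_pow_le_half_add hL T _
  have : T * T ^ (2 * r + 1) = T ^ (2 * (r + 1)) := by ring
  linear_combination 2 * drift_le - 2 * ((n : ℝ) + 2) * this

lemma permExp_stein_pow_le {B : Matrix (Fin (n + 2)) (Fin (n + 2)) ℝ} {C : ℝ}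
    (hB : ∀ i j, |B i j| ≤ 1) (r : ℕ)
    (hC : ∀ i p j q, permExp (fun σ => rankT (minor (minor B i p) j q) σ ^ (2 * r)) ≤ C) :
    4 * permExp (fun π => (((n : ℝ) + 2) * rankT B π - entrySum B) * rankT B π ^ (2 * r + 1)) ≤
      swapSum (· ^ 2) B * ((2 * r + 1 : ℕ) * (2 ^ (2 * r - 1) * (C + 6 ^ (2 * r)))) /
        (((n : ℝ) + 2) * ((n : ℝ) + 1)) := by
  rw [permExp_stein_identity B fun t => t ^ (2 * r + 1), swapSum_eq_sum_succAbove (by norm_num)]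
  simp only [sum_mul]
  refine div_le_div_of_nonneg_right (sum_le_sum fun i _ => sum_le_sum fun j _ =>
    sum_le_sum fun p _ => sum_le_sum fun q _ => ?_) (by positivity)
  set d := swapGain B i (i.succAbove j) p (p.succAbove q)
  set y := B i p + B (i.succAbove j) (p.succAbove q)
  have hy : |y| ≤ 2 := (abs_add_le _ _).trans
    (by linarith [hB i p, hB (i.succAbove j) (p.succAbove q)])
  rw [rankExp, rankExp, ← permExp_sub, ← sq_abs d, sq, mul_assoc]
  refine (le_abs_self _).trans ?_
  rw [abs_mul]
  gcongr
  refine (abs_permExp_le _).trans ((permExp_mono fun σ =>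
    abs_add_pow_sub_add_pow_le hy (abs_swapGain_le hB _ _ _ _) r).trans ?_)
  simp only [permExp_const_mul, permExp_add, permExp_const]
  gcongr
  exact hC i p j q

lemma exists_permExp_rankT_even_pow_le (r : ℕ) (hL : 0 ≤ L) : ∃ C : ℝ, 0 ≤ C ∧
    ∀ (n : ℕ) (B : Matrix (Fin n) (Fin n) ℝ), IsTame L B →
      permExp (fun π => rankT B π ^ (2 * r)) ≤ C := by
  induction r generalizing L with
  | zero => exact ⟨1, zero_le_one, fun n B _ => by simp [permExp_const]⟩
  | succ r ih =>
    obtain ⟨C, hC, moment_le⟩ := ih (L := 8 * (8 * L + 4) + 4) (by positivity)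
    set K : ℝ := (2 * r + 1 : ℕ) * (2 ^ (2 * r - 1) * (C + 6 ^ (2 * r)))
    have : 0 ≤ K := by positivity
    refine ⟨L * K + 2 * (L * (2 * L) ^ (2 * r + 1)) + 1, by positivity, fun n B hB => ?_⟩
    rcases lt_or_ge n 2 with hn | hn
    · have abs_le_one (π : Equiv.Perm (Fin n)) : |rankT B π| ≤ 1 :=
        (abs_rankT_le hB.abs_le_one π).trans (by exact_mod_cast Nat.lt_succ_iff.mp hn)
      refine (permExp_mono fun π => ?_).trans
        ((permExp_const 1).le.trans (le_add_of_nonneg_left (by positivity)))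
      rw [← (even_two_mul (r + 1)).pow_abs]
      exact pow_le_one₀ (abs_nonneg _) (abs_le_one π)
    obtain ⟨n, rfl⟩ := Nat.exists_eq_add_of_le' hn
    have total_le := hB.abs_entrySum_le
    have sq_le := hB.swapSum_sq_le
    push_cast at total_le sq_le
    have drift_le := permExp_rankT_pow_succ_le hL total_le r
    have stein_le := permExp_stein_pow_le hB.abs_le_one r fun i p j q =>
      moment_le n _ ((hB.minor hL i p).minor (by positivity) j q)
    have cubic_ratio : swapSum (· ^ 2) B * K / (((n : ℝ) + 2) * (n + 1)) ≤
        2 * L * K * ((n : ℝ) + 2) := by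
      rw [div_le_iff₀ (by positivity)]
      calc swapSum (· ^ 2) B * K ≤ L * ((n : ℝ) + 2) ^ 3 * K := by gcongr
        _ = L * K * ((n : ℝ) + 2) ^ 2 * (n + 2) := by ring
        _ ≤ L * K * ((n : ℝ) + 2) ^ 2 * (2 * (n + 1)) := by
            gcongr
            linarith [n.cast_nonneg (α := ℝ)]
        _ = 2 * L * K * ((n : ℝ) + 2) * (((n : ℝ) + 2) * (n + 1)) := by ring
    refine le_of_mul_le_mul_left ?_ (by positivity : 0 < (n : ℝ) + 2)
    linarith

lemma exists_permExp_one_add_abs_rankT_pow_le (r : ℕ) (hL : 0 ≤ L) : ∃ C : ℝ, 0 ≤ C ∧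
    ∀ (n : ℕ) (B : Matrix (Fin n) (Fin n) ℝ), IsTame L B →
      permExp (fun π => (1 + |rankT B π|) ^ r) ≤ C := by
  obtain ⟨C, hC, moment_le⟩ := exists_permExp_rankT_even_pow_le r hL
  refine ⟨2 ^ (2 * r - 1) * (1 + C), by positivity, fun n B hB => ?_⟩
  calc permExp (fun π => (1 + |rankT B π|) ^ r)
      ≤ permExp (fun π => 2 ^ (2 * r - 1) * (1 + rankT B π ^ (2 * r))) :=
        permExp_mono fun π => calc
          (1 + |rankT B π|) ^ r ≤ (1 + |rankT B π|) ^ (2 * r) :=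
            pow_le_pow_right₀ (by linarith [abs_nonneg (rankT B π)]) (by lia)
          _ ≤ 2 ^ (2 * r - 1) * (1 ^ (2 * r) + |rankT B π| ^ (2 * r)) :=
            add_pow_le zero_le_one (abs_nonneg _) _
          _ = 2 ^ (2 * r - 1) * (1 + rankT B π ^ (2 * r)) := by
            rw [one_pow, (even_two_mul r).pow_abs]
    _ = 2 ^ (2 * r - 1) * (1 + permExp (fun π => rankT B π ^ (2 * r))) := by
        rw [permExp_const_mul, permExp_add, permExp_const]
    _ ≤ 2 ^ (2 * r - 1) * (1 + C) := by gcongr; exact moment_le n B hB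

end Moments

section Variance

variable {n : ℕ}

lemma permExp_embedding {ι : Type*} [Fintype ι] (w : ι ↪ Fin n) (Φ : (ι ↪ Fin n) → ℝ) :
    permExp (fun π => Φ (w.trans π.toEmbedding)) =
      (∑ v, Φ v) / (n.descFactorial (Fintype.card ι) : ℝ) := by
  have card_eq : Fintype.card (ι ↪ Fin n) = n.descFactorial (Fintype.card ι) := by
    simp [Fintype.card_embedding_eq]
  have card_ne_zero : (n.descFactorial (Fintype.card ι) : ℝ) ≠ 0 := by
    rw [← card_eq]
    exact_mod_cast (Fintype.card_pos_iff.mpr ⟨w⟩).ne'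
  have indep_of_start (v : ι ↪ Fin n) : permExp (fun π => Φ (v.trans π.toEmbedding)) =
      permExp (fun π => Φ (w.trans π.toEmbedding)) := by
    obtain ⟨σ, hσ⟩ := Equiv.Perm.exists_extending_pair w v w.injective v.injective
    rw [← permExp_comp_equiv (Equiv.mulRight σ) fun π => Φ (w.trans π.toEmbedding)]
    congr! 3 with π
    ext a
    simp [← hσ]
  have shift (π : Equiv.Perm (Fin n)) : ∑ v : ι ↪ Fin n, Φ (v.trans π.toEmbedding) = ∑ v, Φ v :=
    (Equiv.embeddingCongr (Equiv.refl ι) π).sum_comp Φ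
  rw [eq_div_iff card_ne_zero, mul_comm]
  calc (n.descFactorial (Fintype.card ι) : ℝ) * permExp (fun π => Φ (w.trans π.toEmbedding))
      = permExp fun π => ∑ v : ι ↪ Fin n, Φ (v.trans π.toEmbedding) := by
        simp [permExp_sum, indep_of_start, card_eq]
    _ = ∑ v, Φ v := by simp only [shift, permExp_const]

/-- The sum of `g` over the exchange increments that are available at the permutation `π`. -/
def permSwapSum (g : ℝ → ℝ) (B : Matrix (Fin n) (Fin n) ℝ) (π : Equiv.Perm (Fin n)) : ℝ :=
  ∑ i, ∑ j, g (swapGain B i j (π i) (π j))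

lemma permExp_permSwapSum {g : ℝ → ℝ} (hg : g 0 = 0)
    (B : Matrix (Fin (n + 2)) (Fin (n + 2)) ℝ) :
    permExp (permSwapSum g B) = swapSum g B / (((n : ℝ) + 2) * ((n : ℝ) + 1)) := by
  rw [swapSum_eq_sum_succAbove hg, sum_div]
  unfold permSwapSum
  simp only [permExp_sum]
  refine sum_congr rfl fun i _ => ?_
  rw [Fin.sum_univ_succAbove _ i]
  simp only [swapGain_self_row, hg, permExp_const, zero_add]
  rw [sum_div]
  refine sum_congr rfl fun j _ => ?_
  rw [permExp_two_images_rankT B i j fun p q _ => g (swapGain B i (i.succAbove j) p q)]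
  simp only [permExp_const]

lemma permExp_mul_disjoint_le {F G : Fin (n + 4) → Fin (n + 4) → ℝ} (hF : ∀ p q, 0 ≤ F p q)
    (hG : ∀ p q, 0 ≤ G p q) {i j k l : Fin (n + 4)}
    (hinj : Function.Injective ![i, j, k, l]) :
    permExp (fun π => F (π i) (π j) * G (π k) (π l)) ≤
      (∑ p, ∑ q, F p q) * (∑ p, ∑ q, G p q) /
        (((n : ℝ) + 4) * (n + 3) * (n + 2) * (n + 1)) := by
  have descFactorial_eq : ((n + 4).descFactorial 4 : ℝ) =
      ((n : ℝ) + 4) * (n + 3) * (n + 2) * (n + 1) := by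
    simp [Nat.descFactorial_succ]
    ring
  let values : (Fin 4 ↪ Fin (n + 4)) ↪
      (Fin (n + 4) × Fin (n + 4)) × (Fin (n + 4) × Fin (n + 4)) :=
    ⟨fun v => ((v 0, v 1), (v 2, v 3)), fun v v' h => by
      simp only [Prod.mk.injEq] at h
      ext a
      fin_cases a <;> simp [h]⟩
  calc permExp (fun π => F (π i) (π j) * G (π k) (π l))
      = (∑ v : Fin 4 ↪ Fin (n + 4), F (v 0) (v 1) * G (v 2) (v 3)) /
          (n + 4).descFactorial (Fintype.card (Fin 4)) :=
        permExp_embedding (⟨_, hinj⟩ : Fin 4 ↪ Fin (n + 4)) fun v => F (v 0) (v 1) * G (v 2) (v 3)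
    _ ≤ (∑ x : (Fin (n + 4) × Fin (n + 4)) × (Fin (n + 4) × Fin (n + 4)),
          F x.1.1 x.1.2 * G x.2.1 x.2.2) / (n + 4).descFactorial (Fintype.card (Fin 4)) := by
        gcongr
        refine (sum_map univ values fun x => F x.1.1 x.1.2 * G x.2.1 x.2.2).symm.trans_le ?_
        exact sum_le_univ_sum_of_nonneg fun x => mul_nonneg (hF _ _) (hG _ _)
    _ = _ := by
        rw [Fintype.card_fin, descFactorial_eq]
        simp only [Fintype.sum_prod_type, ← mul_sum, ← sum_mul]

lemma mul_le_disjoint_add_coincident (x : Fin n → Fin n → ℝ) (i j k l : Fin n) :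
    x i j * x k l ≤
      (if k ≠ i ∧ k ≠ j ∧ l ≠ i ∧ l ≠ j then x i j * x k l else 0) +
        ((if k = i then (x i j ^ 2 + x k l ^ 2) / 2 else 0) +
          (if k = j then (x i j ^ 2 + x k l ^ 2) / 2 else 0) +
          (if l = i then (x i j ^ 2 + x k l ^ 2) / 2 else 0) +
          (if l = j then (x i j ^ 2 + x k l ^ 2) / 2 else 0)) := by
  have amgm : x i j * x k l ≤ (x i j ^ 2 + x k l ^ 2) / 2 := by
    linarith [two_mul_le_add_sq (x i j) (x k l)]
  have sum_nonneg : 0 ≤ (x i j ^ 2 + x k l ^ 2) / 2 := by positivity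
  split_ifs <;> first | linarith | tauto

lemma sq_sum_le_sum_disjoint_add (x : Fin n → Fin n → ℝ) :
    (∑ i, ∑ j, x i j) ^ 2 ≤
      (∑ i, ∑ j, ∑ k, ∑ l, if k ≠ i ∧ k ≠ j ∧ l ≠ i ∧ l ≠ j then x i j * x k l else 0) +
        4 * n * ∑ i, ∑ j, x i j ^ 2 := by
  have expand : (∑ i, ∑ j, x i j) ^ 2 = ∑ i, ∑ j, ∑ k, ∑ l, x i j * x k l := by
    simp only [sq, sum_mul]
    simp only [mul_sum]
  rw [expand]
  refine (sum_le_sum fun i _ => sum_le_sum fun j _ => sum_le_sum fun k _ => sum_le_sum fun l _ =>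
    mul_le_disjoint_add_coincident x i j k l).trans_eq ?_
  have sum_row_if (a : Fin n) (y : Fin n → Fin n → ℝ) :
      ∑ k, ∑ l, (if k = a then y k l else 0) = ∑ l, y a l := by
    rw [sum_comm]
    simp
  have sum_transpose : ∑ i, ∑ j, x j i ^ 2 = ∑ i, ∑ j, x i j ^ 2 := sum_comm
  simp only [sum_add_distrib, sum_row_if, sum_ite_eq', mem_univ, if_true, ← sum_div, sum_const,
    card_univ, Fintype.card_fin, nsmul_eq_mul, ← mul_sum, sum_transpose]
  ring

lemma variance_coeff_le {m U V : ℝ} (hm : 0 ≤ m) (hV : 0 ≤ V) (hUV : U ^ 2 ≤ (m + 4) ^ 4 * V) :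
    U ^ 2 / ((m + 4) * (m + 3) * (m + 2) * (m + 1)) +
      4 * (m + 4) * (V / ((m + 4) * (m + 3))) - (U / ((m + 4) * (m + 3))) ^ 2 ≤
      70 * V / (m + 4) := by
  have factor_le : (m + 4) ^ 3 * (4 * m + 10) ≤ 64 * ((m + 3) ^ 2 * ((m + 2) * (m + 1))) := by
    nlinarith [pow_nonneg hm 2, pow_nonneg hm 3, pow_nonneg hm 4]
  have disjoint_le : U ^ 2 / ((m + 4) * (m + 3) * (m + 2) * (m + 1)) -
      (U / ((m + 4) * (m + 3))) ^ 2 ≤ 64 * V / (m + 4) :=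
    calc U ^ 2 / ((m + 4) * (m + 3) * (m + 2) * (m + 1)) - (U / ((m + 4) * (m + 3))) ^ 2
        = U ^ 2 * ((4 * m + 10) / (((m + 4) * (m + 3)) ^ 2 * ((m + 2) * (m + 1)))) := by
          field_simp
          ring
      _ ≤ (m + 4) ^ 4 * V *
            ((4 * m + 10) / (((m + 4) * (m + 3)) ^ 2 * ((m + 2) * (m + 1)))) := by gcongr
      _ = V / (m + 4) *
            ((m + 4) ^ 3 * (4 * m + 10) / ((m + 3) ^ 2 * ((m + 2) * (m + 1)))) := by
          field_simp
      _ ≤ V / (m + 4) * 64 := by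
          gcongr
          rwa [div_le_iff₀ (by positivity)]
      _ = 64 * V / (m + 4) := by ring
  have coincident_le : 4 * (m + 4) * (V / ((m + 4) * (m + 3))) ≤ 6 * V / (m + 4) := by
    rw [mul_div_assoc', div_le_div_iff₀ (by positivity) (by positivity)]
    nlinarith [mul_nonneg hV (mul_nonneg hm hm), mul_nonneg hV hm]
  have : 70 * V / (m + 4) = 64 * V / (m + 4) + 6 * V / (m + 4) := by ring
  linarith

lemma permExp_sub_permExp_sq (Z : Equiv.Perm (Fin n) → ℝ) :
    permExp (fun π => (Z π - permExp Z) ^ 2) =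
      permExp (fun π => Z π ^ 2) - permExp Z ^ 2 := by
  have expand (π : Equiv.Perm (Fin n)) : (Z π - permExp Z) ^ 2 =
      Z π ^ 2 - 2 * permExp Z * Z π + permExp Z ^ 2 := by ring
  simp only [expand, permExp_add, permExp_sub, permExp_const_mul, permExp_const]
  ring

lemma sq_swapSum_le (g : ℝ → ℝ) (B : Matrix (Fin n) (Fin n) ℝ) :
    swapSum g B ^ 2 ≤ (n : ℝ) ^ 4 * swapSum (fun x => g x ^ 2) B := by
  have cauchy_schwarz := sq_sum_le_card_mul_sum_sq (s := univ)
    (f := fun x : Fin n × Fin n × Fin n × Fin n => g (swapGain B x.1 x.2.1 x.2.2.1 x.2.2.2))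
  simp only [Fintype.sum_prod_type, card_univ, Fintype.card_prod, Fintype.card_fin]
    at cauchy_schwarz
  push_cast at cauchy_schwarz
  refine cauchy_schwarz.trans_eq ?_
  simp only [swapSum]
  ring

lemma permExp_disjoint_pairs_le {g : ℝ → ℝ} (hg₀ : g 0 = 0) (hg : ∀ x, 0 ≤ g x)
    (B : Matrix (Fin (n + 4)) (Fin (n + 4)) ℝ) :
    permExp (fun π => ∑ i, ∑ j, ∑ k, ∑ l, if k ≠ i ∧ k ≠ j ∧ l ≠ i ∧ l ≠ j then
      g (swapGain B i j (π i) (π j)) * g (swapGain B k l (π k) (π l)) else 0) ≤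
      swapSum g B ^ 2 / (((n : ℝ) + 4) * (n + 3) * (n + 2) * (n + 1)) := by
  have pair_nonneg (i j : Fin (n + 4)) : 0 ≤ ∑ p, ∑ q, g (swapGain B i j p q) :=
    sum_nonneg fun _ _ => sum_nonneg fun _ _ => hg _
  have summand_le (i j k l : Fin (n + 4)) :
      permExp (fun π => if k ≠ i ∧ k ≠ j ∧ l ≠ i ∧ l ≠ j then
        g (swapGain B i j (π i) (π j)) * g (swapGain B k l (π k) (π l)) else 0) ≤
      (∑ p, ∑ q, g (swapGain B i j p q)) * (∑ p, ∑ q, g (swapGain B k l p q)) /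
        (((n : ℝ) + 4) * (n + 3) * (n + 2) * (n + 1)) := by
    have rhs_nonneg := mul_nonneg (pair_nonneg i j) (pair_nonneg k l)
    split_ifs with disjoint
    · obtain ⟨hki, hkj, hli, hlj⟩ := disjoint
      rcases eq_or_ne i j with rfl | hij
      · simp [hg₀, permExp_const]
      rcases eq_or_ne k l with rfl | hkl
      · simp [hg₀, permExp_const]
      refine permExp_mul_disjoint_le (F := fun p q => g (swapGain B i j p q))
        (G := fun p q => g (swapGain B k l p q)) (fun _ _ => hg _) (fun _ _ => hg _)
        fun a b hab => ?_
      fin_cases a <;> fin_cases b <;> simp_all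
    · rw [permExp_const]
      positivity
  simp only [permExp_sum]
  refine (sum_le_sum fun i _ => sum_le_sum fun j _ => sum_le_sum fun k _ => sum_le_sum fun l _ =>
    summand_le i j k l).trans_eq ?_
  simp only [swapSum, sq, ← sum_div, ← mul_sum, ← sum_mul]

lemma permExp_permSwapSum_sub_sq_le {g : ℝ → ℝ} (hg₀ : g 0 = 0) (hg : ∀ x, 0 ≤ g x)
    (B : Matrix (Fin (n + 4)) (Fin (n + 4)) ℝ) :
    permExp (fun π => (permSwapSum g B π - permExp (permSwapSum g B)) ^ 2) ≤
      70 * swapSum (fun x => g x ^ 2) B / ((n : ℝ) + 4) := by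
  have mean_eq {f : ℝ → ℝ} (hf : f 0 = 0) :
      permExp (permSwapSum f B) = swapSum f B / (((n : ℝ) + 4) * (n + 3)) := by
    rw [permExp_permSwapSum (n := n + 2) hf]
    push_cast
    ring_nf
  have second_moment_le : permExp (fun π => permSwapSum g B π ^ 2) ≤
      swapSum g B ^ 2 / (((n : ℝ) + 4) * (n + 3) * (n + 2) * (n + 1)) +
        4 * ((n : ℝ) + 4) * (swapSum (fun x => g x ^ 2) B / (((n : ℝ) + 4) * (n + 3))) := by
    refine (permExp_mono fun π => sq_sum_le_sum_disjoint_add fun i j =>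
      g (swapGain B i j (π i) (π j))).trans ?_
    rw [permExp_add, permExp_const_mul, ← mean_eq (by simp [hg₀])]
    push_cast
    exact add_le_add (permExp_disjoint_pairs_le hg₀ hg B) le_rfl
  rw [permExp_sub_permExp_sq, mean_eq hg₀]
  have cauchy_schwarz := sq_swapSum_le g B
  push_cast at cauchy_schwarz
  linarith [variance_coeff_le n.cast_nonneg (swapSum_nonneg (fun x => sq_nonneg (g x)) B)
    cauchy_schwarz]

end Variance

section Concentration

variable {n : ℕ} {L c γ α z ε : ℝ} {g F : ℝ → ℝ}

/-- The concentration functional `|x| * min |x| α`, a quadratic function made linear beyond `α`. -/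
noncomputable def truncGain (α x : ℝ) : ℝ := |x| * min |x| α

@[simp] lemma truncGain_zero (α : ℝ) : truncGain α 0 = 0 := by simp [truncGain]

lemma truncGain_nonneg (hα : 0 ≤ α) (x : ℝ) : 0 ≤ truncGain α x :=
  mul_nonneg (abs_nonneg x) (le_min (abs_nonneg x) hα)

lemma sq_sub_abs_cube_div_le_truncGain (hα : 0 < α) (x : ℝ) :
    x ^ 2 - α⁻¹ * |x| ^ 3 ≤ truncGain α x := by
  rw [← sq_abs, truncGain]
  have := abs_nonneg x
  rcases le_total |x| α with h | h
  · rw [min_eq_left h, ← sq]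
    exact sub_le_self _ (by positivity)
  · have : |x| ^ 2 ≤ α⁻¹ * |x| ^ 3 := by
      rw [inv_mul_eq_div, le_div_iff₀ hα, pow_succ |x| 2]
      gcongr
    exact (sub_nonpos.mpr this).trans (mul_nonneg (abs_nonneg x) (le_min (abs_nonneg x) hα.le))

lemma truncGain_sq_le (hα : 0 ≤ α) (x : ℝ) : truncGain α x ^ 2 ≤ α ^ 2 * x ^ 2 := by
  rw [truncGain, mul_pow, sq_abs, mul_comm]
  gcongr
  exact min_le_right _ _

/-- Truncation of a real number to the interval `[0, b]`. -/
noncomputable def clip (b x : ℝ) : ℝ := max 0 (min x b)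

lemma clip_monotone (b : ℝ) : Monotone (clip b) := fun x y hxy => by
  unfold clip
  gcongr

lemma clip_nonneg (b x : ℝ) : 0 ≤ clip b x := le_max_left _ _

lemma clip_le {b : ℝ} (hb : 0 ≤ b) (x : ℝ) : clip b x ≤ b := max_le hb (min_le_right _ _)

lemma clip_of_nonpos (b : ℝ) {x : ℝ} (hx : x ≤ 0) : clip b x = 0 :=
  max_eq_left ((min_le_left _ _).trans hx)

lemma clip_of_le {b x : ℝ} (hb : 0 ≤ b) (hx : b ≤ x) : clip b x = b := by
  rw [clip, min_eq_right hx, max_eq_right hb]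

lemma clip_of_mem {b x : ℝ} (hx : x ∈ Set.Icc 0 b) : clip b x = x := by
  rw [clip, min_eq_left hx.2, max_eq_right hx.1]

lemma truncGain_le_mul_clip_sub (hα : 0 < α) {w : ℝ} (hw : w ∈ Set.Icc z (z + ε)) (d : ℝ) :
    truncGain α d ≤
      d * (clip (ε + 2 * α) (w + d - (z - α)) - clip (ε + 2 * α) (w - (z - α))) := by
  obtain ⟨hzw, hwz⟩ := hw
  rw [clip_of_mem (x := w - (z - α)) ⟨by linarith, by linarith⟩, truncGain]
  rcases le_total 0 d with hd | hd
  · rw [abs_of_nonneg hd]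
    refine mul_le_mul_of_nonneg_left ?_ hd
    have : w - (z - α) + min d α ≤ min (w + d - (z - α)) (ε + 2 * α) :=
      le_min (by linarith [min_le_left d α]) (by linarith [min_le_right d α])
    linarith [le_max_right 0 (min (w + d - (z - α)) (ε + 2 * α)), clip.eq_1 (ε + 2 * α)
      (w + d - (z - α))]
  · rw [abs_of_nonpos hd, neg_mul, ← mul_neg]
    refine mul_le_mul_of_nonpos_left ?_ hd
    have : clip (ε + 2 * α) (w + d - (z - α)) ≤ w - (z - α) - min (-d) α :=
      max_le (by linarith [min_le_right (-d) α])
        ((min_le_left _ _).trans (by linarith [min_le_left (-d) α]))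
    linarith

lemma mul_sub_nonneg_of_monotone (hF : Monotone F) (w d : ℝ) : 0 ≤ d * (F (w + d) - F w) := by
  rcases le_total 0 d with hd | hd
  · exact mul_nonneg hd (sub_nonneg.mpr (hF (by linarith)))
  · exact mul_nonneg_of_nonpos_of_nonpos hd (sub_nonpos.mpr (hF (by linarith)))

-- The additive constant is chosen so that `F` vanishes on the side of `z` where `0` lies; then
-- `F w ≠ 0` forces `|z| ≤ |w| + 1 + α`, and the weight at `z` may be replaced by that at `w`.
lemma exists_monotone_truncGain_le (k : ℕ) {a : ℝ} (hα : 0 < α) (hαa : α ≤ a) (hε : 0 ≤ ε)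
    (hε₁ : ε ≤ 1) (z : ℝ) : ∃ F : ℝ → ℝ, Monotone F ∧
      (∀ w ∈ Set.Icc z (z + ε), ∀ d, truncGain α d ≤ d * (F (w + d) - F w)) ∧
      ∀ w, (1 + |z|) ^ k * |F w| ≤ (ε + 2 * α) * (2 + a) ^ k * (1 + |w|) ^ k := by
  have ha : 0 < a := hα.trans_le hαa
  have width_nonneg : 0 ≤ ε + 2 * α := by positivity
  have weight_le (w y : ℝ) (hy : |y| ≤ ε + 2 * α) (hyz : y ≠ 0 → |z| ≤ |w| + 1 + α) :
      (1 + |z|) ^ k * |y| ≤ (ε + 2 * α) * (2 + a) ^ k * (1 + |w|) ^ k := by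
    rcases eq_or_ne y 0 with rfl | hy₀
    · rw [abs_zero, mul_zero]
      positivity
    calc (1 + |z|) ^ k * |y| ≤ ((2 + a) * (1 + |w|)) ^ k * (ε + 2 * α) := by
          gcongr
          nlinarith [hyz hy₀, abs_nonneg w]
      _ = (ε + 2 * α) * (2 + a) ^ k * (1 + |w|) ^ k := by rw [mul_pow]; ring
  have shifted_monotone : Monotone fun w => clip (ε + 2 * α) (w - (z - α)) :=
    fun x y hxy => clip_monotone _ (by linarith)
  rcases le_total 0 z with hz | hz
  · refine ⟨_, shifted_monotone, fun w hw d => truncGain_le_mul_clip_sub hα hw d,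
      fun w => weight_le w _ ?_ fun clip_ne => ?_⟩
    · rw [abs_of_nonneg (clip_nonneg _ _)]
      exact clip_le width_nonneg _
    · rw [abs_of_nonneg hz]
      by_contra! far
      exact clip_ne (clip_of_nonpos _ (by linarith [le_abs_self w]))
  · refine ⟨fun w => clip (ε + 2 * α) (w - (z - α)) - (ε + 2 * α),
      fun x y hxy => sub_le_sub_right (shifted_monotone hxy) _, fun w hw d => ?_,
      fun w => weight_le w _ ?_ fun clip_ne => ?_⟩
    · rw [sub_sub_sub_cancel_right]
      exact truncGain_le_mul_clip_sub hα hw d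
    · rw [abs_sub_comm, abs_of_nonneg (sub_nonneg.mpr (clip_le width_nonneg _))]
      exact sub_le_self _ (clip_nonneg _ _)
    · rw [abs_of_nonpos hz]
      by_contra! far
      exact clip_ne (sub_eq_zero.mpr (clip_of_le width_nonneg (by linarith [neg_le_abs w])))

lemma permExp_indicator_mul_permSwapSum_le (hF : Monotone F) {s : Set ℝ}
    (gain_le : ∀ w ∈ s, ∀ d, g d ≤ d * (F (w + d) - F w)) (B : Matrix (Fin n) (Fin n) ℝ) :
    permExp (fun π => s.indicator 1 (rankT B π) * permSwapSum g B π) ≤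
      4 * permExp (fun π => (n * rankT B π - entrySum B) * F (rankT B π)) := by
  rw [← sum_permExp_swapGain_mul_sub]
  simp only [← permExp_sum]
  refine permExp_mono fun π => ?_
  by_cases hπ : rankT B π ∈ s
  · rw [Set.indicator_of_mem hπ, Pi.one_apply, one_mul]
    exact sum_le_sum fun i _ => sum_le_sum fun j _ => gain_le _ hπ _
  · rw [Set.indicator_of_notMem hπ, zero_mul]
    exact sum_nonneg fun i _ => sum_nonneg fun j _ => mul_sub_nonneg_of_monotone hF _ _

lemma IsTame.abs_mul_rankT_sub_entrySum_le {B : Matrix (Fin n) (Fin n) ℝ} (hB : IsTame L B)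
    (hL : 0 ≤ L) (π : Equiv.Perm (Fin n)) :
    |n * rankT B π - entrySum B| ≤ n * (1 + L) * (1 + |rankT B π|) := by
  calc |n * rankT B π - entrySum B| ≤ n * |rankT B π| + |entrySum B| := by
        simpa [abs_mul] using abs_sub (n * rankT B π) (entrySum B)
    _ ≤ n * |rankT B π| + L * n + (n + n * L * |rankT B π|) := by
        linarith [hB.abs_entrySum_le, (by positivity : 0 ≤ n + n * L * |rankT B π|)]
    _ = n * (1 + L) * (1 + |rankT B π|) := by ring

lemma exists_mul_permExp_indicator_mul_permSwapSum_le (k : ℕ) (hL : 0 ≤ L) {a : ℝ} (ha : 0 ≤ a) :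
    ∃ C : ℝ, 0 ≤ C ∧ ∀ (n : ℕ) (B : Matrix (Fin n) (Fin n) ℝ), IsTame L B →
      ∀ z ε α : ℝ, 0 ≤ ε → ε ≤ 1 → 0 < α → α ≤ a →
        (1 + |z|) ^ k * permExp (fun π => (Set.Icc z (z + ε)).indicator 1 (rankT B π) *
          permSwapSum (truncGain α) B π) ≤ C * n * (ε + 2 * α) := by
  obtain ⟨C, hC, moment_le⟩ := exists_permExp_one_add_abs_rankT_pow_le (k + 1) hL
  refine ⟨4 * (2 + a) ^ k * (1 + L) * C, by positivity,
    fun n B hB z ε α hε hε₁ hα hαa => ?_⟩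
  obtain ⟨F, hF, gain_le, weight_le⟩ := exists_monotone_truncGain_le k hα hαa hε hε₁ z
  have pointwise (π : Equiv.Perm (Fin n)) :
      (1 + |z|) ^ k * ((n * rankT B π - entrySum B) * F (rankT B π)) ≤
        n * (1 + L) * ((ε + 2 * α) * (2 + a) ^ k) * (1 + |rankT B π|) ^ (k + 1) := calc
    _ ≤ |(1 + |z|) ^ k * ((n * rankT B π - entrySum B) * F (rankT B π))| := le_abs_self _
    _ = |n * rankT B π - entrySum B| * ((1 + |z|) ^ k * |F (rankT B π)|) := by
        rw [abs_mul, abs_mul, abs_of_nonneg (by positivity : 0 ≤ (1 + |z|) ^ k)]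
        ring
    _ ≤ n * (1 + L) * (1 + |rankT B π|) *
          ((ε + 2 * α) * (2 + a) ^ k * (1 + |rankT B π|) ^ k) :=
        mul_le_mul (hB.abs_mul_rankT_sub_entrySum_le hL π) (weight_le _) (by positivity)
          (by positivity)
    _ = _ := by ring
  calc _ ≤ (1 + |z|) ^ k *
        (4 * permExp (fun π => (n * rankT B π - entrySum B) * F (rankT B π))) := by
        gcongr
        exact permExp_indicator_mul_permSwapSum_le hF gain_le B
    _ = 4 * permExp (fun π =>
          (1 + |z|) ^ k * ((n * rankT B π - entrySum B) * F (rankT B π))) := by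
        rw [permExp_const_mul]
        ring
    _ ≤ 4 * (n * (1 + L) * ((ε + 2 * α) * (2 + a) ^ k) *
          permExp (fun π => (1 + |rankT B π|) ^ (k + 1))) := by
        rw [← permExp_const_mul (n * (1 + L) * ((ε + 2 * α) * (2 + a) ^ k))]
        gcongr
        exact permExp_mono pointwise
    _ ≤ 4 * (n * (1 + L) * ((ε + 2 * α) * (2 + a) ^ k) * C) := by
        gcongr
        exact moment_le n B hB
    _ = _ := by ring

lemma IsTame.permExp_permSwapSum_truncGain_sub_sq_le {B : Matrix (Fin (n + 4)) (Fin (n + 4)) ℝ}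
    (hB : IsTame L B) (hα : 0 ≤ α) :
    permExp (fun π => (permSwapSum (truncGain α) B π -
      permExp (permSwapSum (truncGain α) B)) ^ 2) ≤ 70 * L * α ^ 2 * ((n : ℝ) + 4) ^ 2 := by
  have sq_le := hB.swapSum_sq_le
  push_cast at sq_le
  refine (permExp_permSwapSum_sub_sq_le (truncGain_zero α) (truncGain_nonneg hα) B).trans ?_
  rw [div_le_iff₀ (by positivity)]
  calc 70 * swapSum (fun x => truncGain α x ^ 2) B ≤ 70 * (α ^ 2 * swapSum (· ^ 2) B) := by
        rw [← swapSum_const_mul (α ^ 2)]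
        gcongr
        exact swapSum_mono (truncGain_sq_le hα) B
    _ ≤ 70 * (α ^ 2 * (L * ((n : ℝ) + 4) ^ 3)) := by gcongr
    _ = _ := by ring

lemma mul_sub_le_mul_sq_add_sq_div {s : ℝ} (hs : 0 < s) (q e x : ℝ) :
    q * (e - x) ≤ s * q ^ 2 + (x - e) ^ 2 / s := by
  rw [← sub_le_iff_le_add', le_div_iff₀ hs]
  nlinarith [sq_nonneg (s * q - (e - x)), sq_nonneg (s * q + (e - x))]

lemma mul_weighted_indicator_le (k : ℕ) (hε : ε ≤ 1) {s : ℝ} (hs : 0 < s) (e x w : ℝ) :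
    e * ((1 + |z|) ^ k * (Set.Icc z (z + ε)).indicator 1 w) ≤
      (1 + |z|) ^ k * ((Set.Icc z (z + ε)).indicator 1 w * x) +
        (s * 2 ^ (2 * k) * (1 + |w|) ^ (2 * k) + s⁻¹ * (x - e) ^ 2) := by
  by_cases hw : w ∈ Set.Icc z (z + ε)
  · rw [Set.indicator_of_mem hw, Pi.one_apply, mul_one, one_mul]
    have abs_z_le : |z| ≤ |w| + 1 := by
      rw [abs_le]
      constructor <;> linarith [hw.1, hw.2, neg_abs_le w, le_abs_self w]
    have weight_le : ((1 + |z|) ^ k) ^ 2 ≤ 2 ^ (2 * k) * (1 + |w|) ^ (2 * k) := by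
      rw [← pow_mul, mul_comm k, ← mul_pow]
      gcongr
      linarith [abs_nonneg w]
    have am_gm := mul_sub_le_mul_sq_add_sq_div hs ((1 + |z|) ^ k) e x
    have := mul_le_mul_of_nonneg_left weight_le hs.le
    rw [div_eq_inv_mul] at am_gm
    linarith
  · rw [Set.indicator_of_notMem hw, mul_zero, mul_zero, zero_mul, mul_zero, zero_add]
    positivity

lemma exists_permExp_permSwapSum_mul_le (k : ℕ) (hL : 0 ≤ L) : ∃ C : ℝ, 0 ≤ C ∧
    ∀ (n : ℕ) (B : Matrix (Fin (n + 4)) (Fin (n + 4)) ℝ), IsTame L B →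
      ∀ z ε α : ℝ, ε ≤ 1 → 0 < α →
        permExp (permSwapSum (truncGain α) B) *
          ((1 + |z|) ^ k * permExp (fun π => (Set.Icc z (z + ε)).indicator 1 (rankT B π))) ≤
        (1 + |z|) ^ k * permExp (fun π => (Set.Icc z (z + ε)).indicator 1 (rankT B π) *
          permSwapSum (truncGain α) B π) + C * ((n : ℝ) + 4) * α := by
  obtain ⟨C, hC, moment_le⟩ := exists_permExp_one_add_abs_rankT_pow_le (2 * k) hL
  refine ⟨2 ^ (2 * k) * C + 70 * L, by positivity, fun n B hB z ε α hε hα => ?_⟩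
  set Z := permSwapSum (truncGain α) B
  set s : ℝ := α * (n + 4)
  have hs : 0 < s := by positivity
  have variance_le : s⁻¹ * permExp (fun π => (Z π - permExp Z) ^ 2) ≤ 70 * L * s := by
    rw [inv_mul_le_iff₀ hs]
    refine (hB.permExp_permSwapSum_truncGain_sub_sq_le hα.le).trans_eq ?_
    simp only [s]
    ring
  have weighted_moment_le :
      s * 2 ^ (2 * k) * permExp (fun π => (1 + |rankT B π|) ^ (2 * k)) ≤ s * 2 ^ (2 * k) * C := by
    gcongr
    exact moment_le _ B hB
  have averaged := permExp_mono fun π =>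
    mul_weighted_indicator_le k (z := z) hε hs (permExp Z) (Z π) (rankT B π)
  simp only [permExp_add, permExp_const_mul] at averaged
  refine averaged.trans ?_
  simp only [s] at variance_le weighted_moment_le ⊢
  linarith

lemma IsNondegenerate.le_permExp_permSwapSum_truncGain
    {B : Matrix (Fin (n + 2)) (Fin (n + 2)) ℝ} (hB : IsNondegenerate L c γ B) (hL : 0 < L)
    (hc : 0 < c) (hγ : 0 < γ) :
    c / 2 * ((n : ℝ) + 2) ≤ permExp (permSwapSum (truncGain (2 * L / c * γ)) B) := by
  have hα : 0 < 2 * L / c * γ := by positivity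
  have cube_le := hB.swapSum_cube_le
  have le_sq := hB.le_swapSum_sq
  push_cast at cube_le le_sq
  have removed_le : (2 * L / c * γ)⁻¹ * swapSum (|·| ^ 3) B ≤ c / 2 * ((n : ℝ) + 2) ^ 3 := by
    rw [inv_mul_le_iff₀ hα]
    refine cube_le.trans_eq ?_
    field_simp
  have le_truncated : c / 2 * ((n : ℝ) + 2) ^ 3 ≤ swapSum (truncGain (2 * L / c * γ)) B := by
    have := swapSum_mono (sq_sub_abs_cube_div_le_truncGain hα) B
    rw [swapSum_sub, swapSum_const_mul] at this
    linarith
  rw [permExp_permSwapSum (truncGain_zero _), le_div_iff₀ (by positivity)]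
  calc c / 2 * ((n : ℝ) + 2) * ((n + 2) * (n + 1))
      ≤ c / 2 * ((n : ℝ) + 2) * ((n + 2) * (n + 2)) := by gcongr; norm_num
    _ = c / 2 * ((n : ℝ) + 2) ^ 3 := by ring
    _ ≤ _ := le_truncated

lemma exists_mul_permExp_indicator_Icc_le (k : ℕ) (hL : 0 < L) (hc : 0 < c) : ∃ C : ℝ, 0 ≤ C ∧
    ∀ γ, 0 < γ → γ ≤ 1 → ∀ (n : ℕ) (B : Matrix (Fin (n + 4)) (Fin (n + 4)) ℝ),
      IsNondegenerate L c γ B → ∀ z ε : ℝ, 0 ≤ ε → ε ≤ 1 →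
        (1 + |z|) ^ k * permExp (fun π => (Set.Icc z (z + ε)).indicator 1 (rankT B π)) ≤
          C * (ε + γ) := by
  set a : ℝ := 2 * L / c
  have ha : 0 < a := by positivity
  obtain ⟨C₁, hC₁, upper⟩ := exists_mul_permExp_indicator_mul_permSwapSum_le k hL.le ha.le
  obtain ⟨C₂, hC₂, lower⟩ := exists_permExp_permSwapSum_mul_le k hL.le
  refine ⟨(c / 2)⁻¹ * (C₁ + 2 * C₁ * a + C₂ * a), by positivity,
    fun γ hγ hγ₁ n B hB z ε hε hε₁ => ?_⟩
  have hα : 0 < a * γ := by positivity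
  have mean_ge := IsNondegenerate.le_permExp_permSwapSum_truncGain (n := n + 2) hB hL hc hγ
  have lower := lower n B hB.toIsTame z ε (a * γ) hε₁ hα
  have upper := upper _ B hB.toIsTame z ε (a * γ) hε hε₁ hα (mul_le_of_le_one_right ha.le hγ₁)
  push_cast at mean_ge upper
  set P := (1 + |z|) ^ k * permExp (fun π => (Set.Icc z (z + ε)).indicator 1 (rankT B π))
  have P_nonneg : 0 ≤ P :=
    mul_nonneg (by positivity)
      (permExp_nonneg fun π => Set.indicator_nonneg (fun _ _ => zero_le_one) _)
  rw [mul_assoc, ← div_eq_inv_mul, le_div_iff₀' (by positivity)]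
  refine le_of_mul_le_mul_left ?_ (by positivity : 0 < (n : ℝ) + 4)
  calc ((n : ℝ) + 4) * (c / 2 * P) = c / 2 * (n + 2 + 2) * P := by ring
    _ ≤ C₁ * (n + 4) * (ε + 2 * (a * γ)) + C₂ * (n + 4) * (a * γ) := by
        linarith [mul_le_mul_of_nonneg_right mean_ge P_nonneg]
    _ ≤ C₁ * (n + 4) * (ε + 2 * (a * γ)) + C₂ * (n + 4) * (a * γ) +
          (n + 4) * (C₁ * γ + (2 * C₁ * a + C₂ * a) * ε) := le_add_of_nonneg_right (by positivity)
    _ = _ := by ring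

end Concentration

section Gaussian

lemma gaussD_eq_gaussianPDFReal (x : ℝ) : gaussD x = ProbabilityTheory.gaussianPDFReal 0 1 x := by
  simp [gaussD, ProbabilityTheory.gaussianPDFReal]

lemma gaussD_pos (x : ℝ) : 0 < gaussD x := by
  rw [gaussD]
  positivity

@[fun_prop]
lemma continuous_gaussD : Continuous gaussD := by
  unfold gaussD
  fun_prop

lemma integral_gaussD : ∫ x, gaussD x = 1 := by
  simp only [gaussD_eq_gaussianPDFReal]
  exact ProbabilityTheory.integral_gaussianPDFReal_eq_one 0 one_ne_zero

lemma hasDerivAt_gaussD (x : ℝ) : HasDerivAt gaussD (-x * gaussD x) x := by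
  have exponent : HasDerivAt (fun x : ℝ => -(x ^ 2) / 2) (-x) x :=
    ((hasDerivAt_pow 2 x).neg.div_const 2).congr_deriv (by simp; ring)
  exact (exponent.exp.const_mul _).congr_deriv (by rw [gaussD]; ring)

lemma integrable_abs_pow_mul_gaussD (k : ℕ) : Integrable fun x => |x| ^ k * gaussD x := by
  have := integrable_rpow_mul_exp_neg_mul_sq (b := 1 / 2) (by norm_num) (s := k)
    (by linarith [k.cast_nonneg (α := ℝ)])
  refine (this.norm.const_mul (Real.sqrt (2 * Real.pi))⁻¹).congr (.of_forall fun x => ?_)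
  simp only [Real.norm_eq_abs, abs_mul, Real.rpow_natCast, abs_pow, Real.abs_exp, gaussD]
  ring_nf

lemma integrable_one_add_abs_pow_mul_gaussD (k : ℕ) :
    Integrable fun x => (1 + |x|) ^ k * gaussD x := by
  refine (((integrable_abs_pow_mul_gaussD 0).add
    (integrable_abs_pow_mul_gaussD k)).const_mul (2 ^ (k - 1))).mono' (by fun_prop)
    (.of_forall fun x => ?_)
  have := gaussD_pos x
  rw [Real.norm_of_nonneg (by positivity)]
  calc (1 + |x|) ^ k * gaussD x ≤ 2 ^ (k - 1) * (1 ^ k + |x| ^ k) * gaussD x := by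
        gcongr
        exact add_pow_le zero_le_one (abs_nonneg x) k
    _ = 2 ^ (k - 1) * (|x| ^ 0 * gaussD x + |x| ^ k * gaussD x) := by ring

lemma exists_abs_pow_mul_gaussD_le (k : ℕ) : ∃ C : ℝ, 0 ≤ C ∧ ∀ x, |x| ^ k * gaussD x ≤ C := by
  refine ⟨(Real.sqrt (2 * Real.pi))⁻¹ * (k.factorial * Real.exp 1), by positivity, fun x => ?_⟩
  have pow_le := Real.pow_div_factorial_le_exp |x| (abs_nonneg x) k
  rw [div_le_iff₀' (by positivity)] at pow_le
  have exp_le : Real.exp |x| * Real.exp (-(x ^ 2) / 2) ≤ Real.exp 1 := by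
    rw [← Real.exp_add, Real.exp_le_exp, ← sq_abs]
    linarith [sq_nonneg (|x| - 1)]
  calc |x| ^ k * gaussD x = (Real.sqrt (2 * Real.pi))⁻¹ * (|x| ^ k * Real.exp (-(x ^ 2) / 2)) := by
        rw [gaussD]
        ring
    _ ≤ (Real.sqrt (2 * Real.pi))⁻¹ *
          (k.factorial * Real.exp |x| * Real.exp (-(x ^ 2) / 2)) := by gcongr
    _ ≤ _ := by rw [mul_assoc (k.factorial : ℝ)]; gcongr

lemma one_add_abs_pow_mul_gaussD_le_of_mul_sub_nonneg (k : ℕ) {x t : ℝ} (h : 0 ≤ x * (t - x)) :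
    (1 + |t|) ^ k * gaussD t ≤ (1 + |x|) ^ k * gaussD x *
      (Real.sqrt (2 * Real.pi) * ((1 + |t - x|) ^ k * gaussD (t - x))) := by
  have weight_le : (1 + |t|) ^ k ≤ (1 + |x|) ^ k * (1 + |t - x|) ^ k := by
    rw [← mul_pow]
    gcongr
    nlinarith [add_sub_cancel x t ▸ abs_add_le x (t - x),
      mul_nonneg (abs_nonneg x) (abs_nonneg (t - x))]
  have density_le : gaussD t ≤ gaussD x * (Real.sqrt (2 * Real.pi) * gaussD (t - x)) := by
    unfold gaussD
    rw [mul_inv_cancel_left₀ (by positivity), mul_assoc, ← Real.exp_add]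
    gcongr
    linarith
  calc _ ≤ (1 + |x|) ^ k * (1 + |t - x|) ^ k *
        (gaussD x * (Real.sqrt (2 * Real.pi) * gaussD (t - x))) :=
        mul_le_mul weight_le density_le (gaussD_pos t).le (by positivity)
    _ = _ := by ring

/-- The weighted Gaussian mass `E (1 + |Z|)^k`, with `Z` standard normal. -/
noncomputable def gaussMoment (k : ℕ) : ℝ := ∫ x, (1 + |x|) ^ k * gaussD x

lemma gaussMoment_nonneg (k : ℕ) : 0 ≤ gaussMoment k :=
  integral_nonneg fun x => mul_nonneg (by positivity) (gaussD_pos x).le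

/-- The expectation of `h` under the standard normal distribution. -/
noncomputable def gaussMean (h : ℝ → ℝ) : ℝ := ∫ x, h x * gaussD x

end Gaussian

section SteinEquation

variable {k : ℕ} {h : ℝ → ℝ}

lemma norm_mul_gaussD_le (h_le : ∀ x, |h x| ≤ (1 + |x|) ^ k) (x : ℝ) :
    ‖h x * gaussD x‖ ≤ (1 + |x|) ^ k * gaussD x := by
  rw [Real.norm_eq_abs, abs_mul, abs_of_pos (gaussD_pos x)]
  exact mul_le_mul_of_nonneg_right (h_le x) (gaussD_pos x).le

lemma abs_gaussMean_le (h_le : ∀ x, |h x| ≤ (1 + |x|) ^ k) : |gaussMean h| ≤ gaussMoment k :=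
  norm_integral_le_of_norm_le (integrable_one_add_abs_pow_mul_gaussD k)
    (.of_forall (norm_mul_gaussD_le h_le))

lemma integrable_mul_gaussD (hc : Continuous h) (h_le : ∀ x, |h x| ≤ (1 + |x|) ^ k) :
    Integrable fun x => h x * gaussD x :=
  (integrable_one_add_abs_pow_mul_gaussD k).mono' (by fun_prop)
    (.of_forall (norm_mul_gaussD_le h_le))

/-- The integral `∫_{-∞}^x (h - E h(Z)) ψ`, where `ψ` is the density of the standard normal `Z`. -/
noncomputable def centeredIntegral (h : ℝ → ℝ) (x : ℝ) : ℝ :=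
  ∫ t in Set.Iic x, (h t - gaussMean h) * gaussD t

/-- The solution `f` of Stein's equation `f' x - x * f x = h x - E h(Z)`. -/
noncomputable def steinSol (h : ℝ → ℝ) (x : ℝ) : ℝ := centeredIntegral h x / gaussD x

lemma integrable_centered (hc : Continuous h) (h_le : ∀ x, |h x| ≤ (1 + |x|) ^ k) :
    Integrable fun x => (h x - gaussMean h) * gaussD x := by
  simp only [sub_mul]
  exact (integrable_mul_gaussD hc h_le).sub
    (by simpa using (integrable_abs_pow_mul_gaussD 0).const_mul (gaussMean h))

lemma integral_centered (hc : Continuous h) (h_le : ∀ x, |h x| ≤ (1 + |x|) ^ k) :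
    ∫ x, (h x - gaussMean h) * gaussD x = 0 := by
  simp only [sub_mul]
  rw [integral_sub (integrable_mul_gaussD hc h_le)
    (by simpa using (integrable_abs_pow_mul_gaussD 0).const_mul (gaussMean h)),
    integral_const_mul, integral_gaussD, mul_one, gaussMean, sub_self]

lemma hasDerivAt_centeredIntegral (hc : Continuous h) (h_le : ∀ x, |h x| ≤ (1 + |x|) ^ k) (x : ℝ) :
    HasDerivAt (centeredIntegral h) ((h x - gaussMean h) * gaussD x) x := by
  have integrable := integrable_centered hc h_le
  have continuous : Continuous fun x => (h x - gaussMean h) * gaussD x := by fun_prop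
  have eq_integral : centeredIntegral h = fun x =>
      (∫ t in (0 : ℝ)..x, (h t - gaussMean h) * gaussD t) + centeredIntegral h 0 := by
    ext y
    rw [← intervalIntegral.integral_Iic_sub_Iic integrable.integrableOn integrable.integrableOn]
    exact (sub_add_cancel _ _).symm
  rw [eq_integral]
  exact (continuous.integral_hasStrictDerivAt 0 x).hasDerivAt.add_const _

lemma abs_centered_le (h_le : ∀ x, |h x| ≤ (1 + |x|) ^ k) (t : ℝ) :
    |(h t - gaussMean h) * gaussD t| ≤ (1 + gaussMoment k) * ((1 + |t|) ^ k * gaussD t) := by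
  rw [abs_mul, abs_of_pos (gaussD_pos t), ← mul_assoc]
  refine mul_le_mul_of_nonneg_right ?_ (gaussD_pos t).le
  have one_le_weight : (1 : ℝ) ≤ (1 + |t|) ^ k := one_le_pow₀ (by linarith [abs_nonneg t])
  calc |h t - gaussMean h| ≤ (1 + |t|) ^ k + gaussMoment k * 1 := by
        rw [mul_one]
        exact (abs_sub _ _).trans (add_le_add (h_le t) (abs_gaussMean_le h_le))
    _ ≤ (1 + |t|) ^ k + gaussMoment k * (1 + |t|) ^ k := by
        gcongr
        exact gaussMoment_nonneg k
    _ = _ := by ring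

/-- Bounds the growth of the solution of Stein's equation. -/
noncomputable def steinConst (k : ℕ) : ℝ :=
  (1 + gaussMoment k) * (Real.sqrt (2 * Real.pi) * gaussMoment k)

lemma steinConst_nonneg (k : ℕ) : 0 ≤ steinConst k := by
  have := gaussMoment_nonneg k
  unfold steinConst
  positivity

lemma abs_setIntegral_centered_le (h_le : ∀ x, |h x| ≤ (1 + |x|) ^ k) {x : ℝ} {s : Set ℝ}
    (hs : MeasurableSet s) (outward : ∀ t ∈ s, 0 ≤ x * (t - x)) :
    |∫ t in s, (h t - gaussMean h) * gaussD t| ≤ steinConst k * (1 + |x|) ^ k * gaussD x := by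
  have := gaussMoment_nonneg k
  set K : ℝ := (1 + gaussMoment k) * ((1 + |x|) ^ k * gaussD x * Real.sqrt (2 * Real.pi))
  have K_nonneg : 0 ≤ K := by
    have := gaussD_pos x
    positivity
  have majorant_integrable :
      Integrable fun t => K * ((1 + |t - x|) ^ k * gaussD (t - x)) :=
    ((integrable_one_add_abs_pow_mul_gaussD k).comp_sub_right x).const_mul _
  calc ‖∫ t in s, (h t - gaussMean h) * gaussD t‖
      ≤ ∫ t in s, K * ((1 + |t - x|) ^ k * gaussD (t - x)) := by
        refine norm_integral_le_of_norm_le majorant_integrable.integrableOn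
          ((ae_restrict_iff' hs).mpr (.of_forall fun t ht => (abs_centered_le h_le t).trans ?_))
        refine (mul_le_mul_of_nonneg_left (one_add_abs_pow_mul_gaussD_le_of_mul_sub_nonneg k
          (outward t ht)) (by positivity)).trans_eq ?_
        simp only [K]
        ring
    _ ≤ ∫ t, K * ((1 + |t - x|) ^ k * gaussD (t - x)) :=
        setIntegral_le_integral majorant_integrable (.of_forall fun t =>
          mul_nonneg K_nonneg (mul_nonneg (by positivity) (gaussD_pos _).le))
    _ = steinConst k * (1 + |x|) ^ k * gaussD x := by
        rw [integral_const_mul,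
          integral_sub_right_eq_self (fun t : ℝ => (1 + |t|) ^ k * gaussD t) x, ← gaussMoment,
          steinConst]
        ring

lemma abs_centeredIntegral_le (hc : Continuous h) (h_le : ∀ x, |h x| ≤ (1 + |x|) ^ k) (x : ℝ) :
    |centeredIntegral h x| ≤ steinConst k * (1 + |x|) ^ k * gaussD x := by
  have integrable := integrable_centered hc h_le
  rcases le_total x 0 with hx | hx
  · exact abs_setIntegral_centered_le h_le measurableSet_Iic fun t ht =>
      mul_nonneg_of_nonpos_of_nonpos hx (sub_nonpos.mpr ht)
  · have eq_neg : centeredIntegral h x = -∫ t in Set.Ioi x, (h t - gaussMean h) * gaussD t := by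
      rw [eq_neg_iff_add_eq_zero, ← integral_centered hc h_le]
      exact intervalIntegral.integral_Iic_add_Ioi integrable.integrableOn integrable.integrableOn
    rw [eq_neg, abs_neg]
    exact abs_setIntegral_centered_le h_le measurableSet_Ioi fun t ht =>
      mul_nonneg hx (sub_nonneg.mpr (Set.mem_Ioi.mp ht).le)

/-- The derivative of `steinSol h`, as prescribed by Stein's equation. -/
noncomputable def steinSolDeriv (h : ℝ → ℝ) (x : ℝ) : ℝ := x * steinSol h x + h x - gaussMean h

lemma hasDerivAt_steinSol (hc : Continuous h) (h_le : ∀ x, |h x| ≤ (1 + |x|) ^ k) (x : ℝ) :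
    HasDerivAt (steinSol h) (steinSolDeriv h x) x := by
  have gaussD_ne := (gaussD_pos x).ne'
  refine ((hasDerivAt_centeredIntegral hc h_le x).div (hasDerivAt_gaussD x) gaussD_ne).congr_deriv
    ?_
  rw [steinSolDeriv, steinSol]
  field_simp
  ring

lemma abs_steinSol_le (hc : Continuous h) (h_le : ∀ x, |h x| ≤ (1 + |x|) ^ k) (x : ℝ) :
    |steinSol h x| ≤ steinConst k * (1 + |x|) ^ k := by
  rw [steinSol, abs_div, abs_of_pos (gaussD_pos x), div_le_iff₀ (gaussD_pos x)]
  exact abs_centeredIntegral_le hc h_le x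

lemma abs_steinSolDeriv_le (hc : Continuous h) (h_le : ∀ x, |h x| ≤ (1 + |x|) ^ k) (x : ℝ) :
    |steinSolDeriv h x| ≤ (steinConst k + 1 + gaussMoment k) * (1 + |x|) ^ (k + 1) := by
  have := gaussMoment_nonneg k
  have one_le : 1 ≤ 1 + |x| := le_add_of_nonneg_right (abs_nonneg x)
  calc |steinSolDeriv h x| ≤ |x| * |steinSol h x| + |h x| + |gaussMean h| := by
        rw [← abs_mul]
        exact (abs_sub _ _).trans (add_le_add_left (abs_add_le _ _) _)
    _ ≤ (1 + |x|) * (steinConst k * (1 + |x|) ^ k) + (1 + |x|) ^ (k + 1) +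
          gaussMoment k * (1 + |x|) ^ (k + 1) := by
        gcongr ?_ * ?_ + ?_ + ?_
        · linarith
        · exact abs_steinSol_le hc h_le x
        · exact (h_le x).trans (pow_le_pow_right₀ one_le k.le_succ)
        · exact (abs_gaussMean_le h_le).trans (le_mul_of_one_le_right this (one_le_pow₀ one_le))
    _ = _ := by ring

lemma abs_mul_steinSol_sub_le (hc : Continuous h) (h_le : ∀ x, |h x| ≤ (1 + |x|) ^ k)
    {a b R : ℝ} (ha : |a| ≤ R) (hb : |b| ≤ R) :
    |a * steinSol h a - b * steinSol h b| ≤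
      (2 * steinConst k + 1 + gaussMoment k) * (1 + R) ^ (k + 2) * |a - b| := by
  have := gaussMoment_nonneg k
  have := steinConst_nonneg k
  have deriv_le (x : ℝ) (hx : |x| ≤ R) : ‖1 * steinSol h x + x * steinSolDeriv h x‖ ≤
      (2 * steinConst k + 1 + gaussMoment k) * (1 + R) ^ (k + 2) := calc
    _ ≤ |steinSol h x| + |x| * |steinSolDeriv h x| := by
        rw [one_mul, Real.norm_eq_abs, ← abs_mul]
        exact abs_add_le _ _
    _ ≤ steinConst k * (1 + |x|) ^ (k + 2) +
          (1 + |x|) * ((steinConst k + 1 + gaussMoment k) * (1 + |x|) ^ (k + 1)) := by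
        gcongr ?_ + ?_ * ?_
        · refine (abs_steinSol_le hc h_le x).trans ?_
          gcongr
          · linarith [abs_nonneg x]
          · simp
        · linarith
        · exact abs_steinSolDeriv_le hc h_le x
    _ = (2 * steinConst k + 1 + gaussMoment k) * (1 + |x|) ^ (k + 2) := by ring
    _ ≤ _ := by gcongr
  exact (convex_Icc (-R) R).norm_image_sub_le_of_norm_hasDerivWithin_le
    (fun x _ => ((hasDerivAt_id x).mul (hasDerivAt_steinSol hc h_le x)).hasDerivWithinAt)
    (fun x hx => deriv_le x (abs_le.mpr hx)) (abs_le.mp hb) (abs_le.mp ha)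

end SteinEquation

section SmoothedIndicator

variable {k : ℕ} {z ε x : ℝ}

/-- The piecewise linear function equal to `1` on `(-∞, z]` and to `0` on `[z + ε, ∞)`. -/
noncomputable def ramp (z ε x : ℝ) : ℝ := clip 1 ((z + ε - x) / ε)

lemma ramp_nonneg (z ε x : ℝ) : 0 ≤ ramp z ε x := clip_nonneg _ _

lemma ramp_le_one (z ε x : ℝ) : ramp z ε x ≤ 1 := clip_le zero_le_one _

lemma ramp_eq_one (hε : 0 < ε) (hx : x ≤ z) : ramp z ε x = 1 :=
  clip_of_le zero_le_one (by rw [le_div_iff₀ hε]; linarith)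

lemma ramp_eq_zero (hε : 0 < ε) (hx : z + ε ≤ x) : ramp z ε x = 0 :=
  clip_of_nonpos _ (div_nonpos_of_nonpos_of_nonneg (by linarith) hε.le)

lemma abs_ramp_sub_le (hε : 0 < ε) (a b : ℝ) : |ramp z ε a - ramp z ε b| ≤ |a - b| / ε := by
  simp only [ramp, clip, max_comm (0 : ℝ)]
  refine (abs_max_sub_max_le_abs _ _ _).trans ((abs_min_sub_min_le_max _ _ _ _).trans ?_)
  rw [sub_self, abs_zero, max_eq_left (abs_nonneg _), ← sub_div, abs_div, abs_of_pos hε,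
    sub_sub_sub_cancel_left, abs_sub_comm]

lemma abs_ramp_sub_le_indicator (hε : 0 < ε) {a b : ℝ} (hab : |a - b| ≤ ε) :
    |ramp z ε a - ramp z ε b| ≤
      |a - b| / ε * (Set.Icc (z - ε) (z + 2 * ε)).indicator 1 b := by
  obtain ⟨h₁, h₂⟩ := abs_le.mp hab
  by_cases hb : b ∈ Set.Icc (z - ε) (z + 2 * ε)
  · rw [Set.indicator_of_mem hb, Pi.one_apply, mul_one]
    exact abs_ramp_sub_le hε a b
  rw [Set.indicator_of_notMem hb, mul_zero, abs_nonpos_iff, sub_eq_zero]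
  rw [Set.mem_Icc, not_and_or, not_le, not_le] at hb
  rcases hb with hb | hb
  · rw [ramp_eq_one hε (by linarith), ramp_eq_one hε (by linarith)]
  · rw [ramp_eq_zero hε (by linarith), ramp_eq_zero hε (by linarith)]

/-- The continuous replacement `|x|^k * ramp z ε x` of `|x|^k * 1_{(-∞, z]}(x)`. -/
noncomputable def smoothTest (k : ℕ) (z ε x : ℝ) : ℝ := |x| ^ k * ramp z ε x

lemma continuous_smoothTest (k : ℕ) (z ε : ℝ) : Continuous (smoothTest k z ε) := by
  unfold smoothTest ramp clip
  fun_prop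

lemma smoothTest_nonneg (k : ℕ) (z ε x : ℝ) : 0 ≤ smoothTest k z ε x :=
  mul_nonneg (by positivity) (ramp_nonneg z ε x)

lemma smoothTest_le (k : ℕ) (z ε x : ℝ) : smoothTest k z ε x ≤ |x| ^ k :=
  mul_le_of_le_one_right (by positivity) (ramp_le_one z ε x)

lemma abs_smoothTest_le (k : ℕ) (z ε x : ℝ) : |smoothTest k z ε x| ≤ (1 + |x|) ^ k := by
  rw [abs_of_nonneg (smoothTest_nonneg k z ε x)]
  refine (smoothTest_le k z ε x).trans ?_
  gcongr
  linarith

lemma abs_smoothTest_sub_le (hε : 0 < ε) {a b R : ℝ} (ha : |a| ≤ R) (hb : |b| ≤ R)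
    (hab : |a - b| ≤ ε) :
    |smoothTest k z ε a - smoothTest k z ε b| ≤ k * R ^ (k - 1) * |a - b| +
      |a - b| / ε * (|b| ^ k * (Set.Icc (z - ε) (z + 2 * ε)).indicator 1 b) := by
  have pow_sub_le : |(|a| ^ k - |b| ^ k)| ≤ k * R ^ (k - 1) * |a - b| := calc
    _ ≤ |(|a| - |b|)| * k * max |a| |b| ^ (k - 1) := by
        simpa only [abs_abs] using abs_pow_sub_pow_le |a| |b| k
    _ ≤ |a - b| * k * R ^ (k - 1) := by
        have := abs_abs_sub_abs_le_abs_sub a b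
        gcongr ?_ * k * ?_ ^ (k - 1)
        exact max_le ha hb
    _ = _ := by ring
  calc |smoothTest k z ε a - smoothTest k z ε b|
      = |(|a| ^ k - |b| ^ k) * ramp z ε a + |b| ^ k * (ramp z ε a - ramp z ε b)| := by
        simp only [smoothTest]
        ring_nf
    _ ≤ |(|a| ^ k - |b| ^ k)| * 1 + |b| ^ k * |ramp z ε a - ramp z ε b| := by
        refine (abs_add_le _ _).trans ?_
        rw [abs_mul, abs_mul, abs_of_nonneg (ramp_nonneg z ε a), abs_pow, abs_abs]
        gcongr
        exact ramp_le_one z ε a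
    _ ≤ k * R ^ (k - 1) * |a - b| * 1 +
          |b| ^ k * (|a - b| / ε * (Set.Icc (z - ε) (z + 2 * ε)).indicator 1 b) := by
        gcongr
        exact abs_ramp_sub_le_indicator hε hab
    _ = _ := by ring

/-- Bounds the Lipschitz constant of the regular part of `steinSolDeriv (smoothTest k z ε)`. -/
noncomputable def smoothLipConst (k : ℕ) : ℝ := 2 * steinConst k + 1 + gaussMoment k + k

lemma smoothLipConst_nonneg (k : ℕ) : 0 ≤ smoothLipConst k := by
  have := gaussMoment_nonneg k
  have := steinConst_nonneg k
  unfold smoothLipConst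
  positivity

lemma abs_steinSolDeriv_smoothTest_sub_le (hε : 0 < ε) {a b R : ℝ} (ha : |a| ≤ R) (hb : |b| ≤ R)
    (hab : |a - b| ≤ ε) :
    |steinSolDeriv (smoothTest k z ε) a - steinSolDeriv (smoothTest k z ε) b| ≤
      smoothLipConst k * |a - b| * (1 + R) ^ (k + 2) +
        |a - b| / ε * (|b| ^ k * (Set.Icc (z - ε) (z + 2 * ε)).indicator 1 b) := by
  have R_nonneg : 0 ≤ R := (abs_nonneg a).trans ha
  have regular_le := abs_mul_steinSol_sub_le (continuous_smoothTest k z ε)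
    (abs_smoothTest_le k z ε) ha hb
  have test_le := abs_smoothTest_sub_le (k := k) (z := z) hε ha hb hab
  have pow_le : k * R ^ (k - 1) * |a - b| ≤ k * (1 + R) ^ (k + 2) * |a - b| := by
    gcongr
    exact (pow_le_pow_left₀ R_nonneg (by linarith) _).trans
      (pow_le_pow_right₀ (by linarith) (by lia))
  rw [smoothLipConst]
  calc _ = |(a * steinSol (smoothTest k z ε) a - b * steinSol (smoothTest k z ε) b) +
        (smoothTest k z ε a - smoothTest k z ε b)| := by
        simp only [steinSolDeriv]
        ring_nf
    _ ≤ _ := (abs_add_le _ _).trans (by linarith)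

end SmoothedIndicator

section Smoothness

lemma lipschitzOnWith_of_dist_le_of_convex {E F : Type*} [SeminormedAddCommGroup E]
    [NormedSpace ℝ E] [PseudoMetricSpace F] {f : E → F} {s : Set E} (hs : Convex ℝ s)
    {δ : ℝ} (hδ : 0 < δ) {C : NNReal}
    (hf : ∀ x ∈ s, ∀ y ∈ s, dist x y ≤ δ → dist (f x) (f y) ≤ C * dist x y) :
    LipschitzOnWith C f s := by
  refine LipschitzOnWith.of_dist_le_mul fun x hx y hy => ?_
  obtain ⟨N, hN⟩ := exists_nat_gt (dist x y / δ)
  have N_pos : (0 : ℝ) < N := (by positivity : 0 ≤ dist x y / δ).trans_lt hN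
  set point : ℕ → E := fun i => AffineMap.lineMap x y ((i : ℝ) / N)
  have point_mem (i : ℕ) (hi : i ≤ N) : point i ∈ s :=
    hs.lineMap_mem hx hy ⟨by positivity, div_le_one_of_le₀ (by exact_mod_cast hi) N_pos.le⟩
  have dist_point (i : ℕ) : dist (point i) (point (i + 1)) = dist x y / N := by
    simp only [point]
    rw [dist_lineMap_lineMap, Real.dist_eq, Nat.cast_succ, ← sub_div, sub_add_cancel_left, abs_div,
      abs_neg, abs_one, abs_of_pos N_pos]
    ring
  have step_le : ∀ i ∈ range N,
      dist (f (point i)) (f (point (i + 1))) ≤ C * (dist x y / N) := fun i hi => by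
    rw [← dist_point i]
    refine hf _ (point_mem i (mem_range.mp hi).le) _ (point_mem _ (mem_range.mp hi)) ?_
    rw [dist_point, div_le_comm₀ N_pos hδ]
    exact hN.le
  calc dist (f x) (f y) = dist (f (point 0)) (f (point N)) := by
        simp [point, div_self N_pos.ne']
    _ ≤ ∑ i ∈ range N, dist (f (point i)) (f (point (i + 1))) :=
        dist_le_range_sum_dist (fun i => f (point i)) N
    _ ≤ ∑ _i ∈ range N, C * (dist x y / N) := sum_le_sum step_le
    _ = C * dist x y := by
        rw [sum_const, card_range, nsmul_eq_mul]
        field_simp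

variable {L c : ℝ}

lemma abs_steinSolDeriv_smoothTest_add_sub_le (k : ℕ) {z γ : ℝ} (hγ : 0 < γ) (hγ₁ : γ ≤ 1 / 3)
    {T y y' : ℝ} (hy : |y| ≤ 7) (hy' : |y'| ≤ 7) (hyy' : |y - y'| ≤ γ) :
    |steinSolDeriv (smoothTest k z γ) (T + y) - steinSolDeriv (smoothTest k z γ) (T + y')| ≤
      smoothLipConst k * |y - y'| * 8 ^ (k + 2) * (1 + |T|) ^ (k + 2) +
        |y - y'| / γ * 8 ^ k * ((1 + |z - γ - y'|) ^ k *
          (Set.Icc (z - γ - y') (z - γ - y' + 3 * γ)).indicator 1 T) := by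
  have := smoothLipConst_nonneg k
  have translated := abs_steinSolDeriv_smoothTest_sub_le (k := k) (z := z) (R := |T| + 7) hγ
    ((abs_add_le T y).trans (by linarith)) ((abs_add_le T y').trans (by linarith))
    (by rwa [add_sub_add_left_eq_sub])
  rw [add_sub_add_left_eq_sub] at translated
  have regular_le : (1 + (|T| + 7)) ^ (k + 2) ≤ 8 ^ (k + 2) * (1 + |T|) ^ (k + 2) := by
    rw [← mul_pow]
    gcongr
    linarith [abs_nonneg T]
  have singular_le : |T + y'| ^ k * (Set.Icc (z - γ) (z + 2 * γ)).indicator 1 (T + y') ≤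
      8 ^ k * ((1 + |z - γ - y'|) ^ k *
        (Set.Icc (z - γ - y') (z - γ - y' + 3 * γ)).indicator 1 T) := by
    by_cases hT : T + y' ∈ Set.Icc (z - γ) (z + 2 * γ)
    · have hT' : T ∈ Set.Icc (z - γ - y') (z - γ - y' + 3 * γ) :=
        ⟨by linarith [hT.1], by linarith [hT.2]⟩
      rw [Set.indicator_of_mem hT, Set.indicator_of_mem hT', Pi.one_apply, Pi.one_apply, mul_one,
        mul_one, ← mul_pow]
      gcongr
      have abs_T_le : |T| ≤ |z - γ - y'| + 1 := calc
        |T| = |(z - γ - y') + (T - (z - γ - y'))| := by ring_nf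
        _ ≤ |z - γ - y'| + |T - (z - γ - y')| := abs_add_le _ _
        _ ≤ _ := by
          gcongr
          exact abs_le.mpr ⟨by linarith [hT'.1], by linarith [hT'.2]⟩
      linarith [abs_add_le T y', abs_nonneg (z - γ - y')]
    · rw [Set.indicator_of_notMem hT, mul_zero]
      exact mul_nonneg (by positivity) (mul_nonneg (by positivity)
        (Set.indicator_nonneg (fun _ _ => zero_le_one) _))
  refine translated.trans (add_le_add ?_ ?_)
  · rw [mul_assoc _ (8 ^ (k + 2) : ℝ)]
    gcongr
  · rw [mul_assoc _ (8 ^ k : ℝ)]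
    gcongr

lemma exists_lipschitzOnWith_rankExp_steinSolDeriv (k : ℕ) (hL : 0 < L) (hc : 0 < c) :
    ∃ C : NNReal, ∀ γ, 0 < γ → γ ≤ 1 / 3 →
      ∀ (n : ℕ) (B : Matrix (Fin (n + 4)) (Fin (n + 4)) ℝ), IsNondegenerate L c γ B → ∀ z,
        LipschitzOnWith C (rankExp (steinSolDeriv (smoothTest k z γ)) B)
          (Metric.closedBall 0 7) := by
  obtain ⟨C₀, hC₀, concentration⟩ := exists_mul_permExp_indicator_Icc_le k hL hc
  obtain ⟨C₁, hC₁, moment_le⟩ := exists_permExp_one_add_abs_rankT_pow_le (k + 2) hL.le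
  have := smoothLipConst_nonneg k
  refine ⟨⟨smoothLipConst k * 8 ^ (k + 2) * C₁ + 8 ^ k * (4 * C₀), by positivity⟩,
    fun γ hγ hγ₁ n B hB z => ?_⟩
  refine lipschitzOnWith_of_dist_le_of_convex (convex_closedBall 0 7) hγ fun y hy y' hy' hyy' => ?_
  rw [mem_closedBall_zero_iff, Real.norm_eq_abs] at hy hy'
  rw [Real.dist_eq] at hyy' ⊢
  have concentration := concentration γ hγ (by linarith) n B hB (z - γ - y') (3 * γ)
    (by linarith) (by linarith)
  calc |rankExp (steinSolDeriv (smoothTest k z γ)) B y -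
        rankExp (steinSolDeriv (smoothTest k z γ)) B y'|
      ≤ permExp (fun π =>
          smoothLipConst k * |y - y'| * 8 ^ (k + 2) * (1 + |rankT B π|) ^ (k + 2) +
          |y - y'| / γ * 8 ^ k * ((1 + |z - γ - y'|) ^ k *
            (Set.Icc (z - γ - y') (z - γ - y' + 3 * γ)).indicator 1 (rankT B π))) := by
        simp only [rankExp]
        rw [← permExp_sub]
        exact (abs_permExp_le _).trans (permExp_mono fun π =>
          abs_steinSolDeriv_smoothTest_add_sub_le k hγ hγ₁ hy hy' hyy')
    _ ≤ smoothLipConst k * |y - y'| * 8 ^ (k + 2) * C₁ +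
          |y - y'| / γ * 8 ^ k * (C₀ * (3 * γ + γ)) := by
        simp only [permExp_add, permExp_const_mul]
        gcongr
        exact moment_le _ B hB.toIsTame
    _ = (smoothLipConst k * 8 ^ (k + 2) * C₁ + 8 ^ k * (4 * C₀)) * |y - y'| := by
        field_simp
        ring

end Smoothness

section SmoothedApproximation

/-- Approximate versions of the moment identities of a standardized matrix, for a matrix with
bounded entries. The comparison value `4 n² (n - 1)` is the swap sum of squares of a matrix with
vanishing row and column sums whose squared entries sum to `n - 1`. -/
structure IsNearStandard {n : ℕ} (γ : ℝ) (B : Matrix (Fin n) (Fin n) ℝ) : Prop where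
  abs_le_one : ∀ i j, |B i j| ≤ 1
  abs_entrySum_le : |entrySum B| ≤ γ * n
  abs_swapSum_sq_sub_le :
    |swapSum (· ^ 2) B - 4 * (n : ℝ) ^ 2 * ((n : ℝ) - 1)| ≤ γ * (n : ℝ) ^ 3
  swapSum_cube_le : swapSum (|·| ^ 3) B ≤ γ * (n : ℝ) ^ 3

variable {n : ℕ} {γ : ℝ}

lemma IsNearStandard.seven_le {B : Matrix (Fin n) (Fin n) ℝ} (h : IsNearStandard γ B)
    (hγ : γ ≤ 1 / 4) (hn : 2 ≤ n) : 7 ≤ n := by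
  by_contra! n_lt
  have n_le : (n : ℝ) ≤ 6 := by exact_mod_cast Nat.le_of_lt_succ n_lt
  have le_n : (2 : ℝ) ≤ n := by exact_mod_cast hn
  have sq_le_cube : swapSum (· ^ 2) B ≤ (n : ℝ) ^ 4 * (1 / 3) ^ 2 + 3 * swapSum (|·| ^ 3) B := by
    rw [← swapSum_const _ B, ← swapSum_const_mul 3, ← swapSum_add]
    refine swapSum_mono (fun x => ?_) B
    linarith [sq_le_sq_add_abs_cube_div x (by norm_num : (0 : ℝ) < 1 / 3)]
  have sq_ge := (abs_le.mp h.abs_swapSum_sq_sub_le).1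
  have cube_le := h.swapSum_cube_le
  have n_cube_pos : (0 : ℝ) < (n : ℝ) ^ 3 := by positivity
  nlinarith [mul_le_mul_of_nonneg_left n_le n_cube_pos.le,
    mul_le_mul_of_nonneg_left le_n (sq_nonneg (n : ℝ)),
    mul_le_mul_of_nonneg_right hγ n_cube_pos.le]

lemma IsNearStandard.isNondegenerate {B : Matrix (Fin n) (Fin n) ℝ} (h : IsNearStandard γ B)
    (hγ : 0 ≤ γ) (hγ₁ : γ ≤ 1 / 3) (hn : 7 ≤ n) : IsNondegenerate 5 1 γ B := by
  have le_n : (7 : ℝ) ≤ n := by exact_mod_cast hn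
  have error_le : γ * (n : ℝ) ^ 3 ≤ 1 / 3 * (n : ℝ) ^ 3 := by gcongr
  have seven_mul_sq_le : 7 * (n : ℝ) ^ 2 ≤ (n : ℝ) ^ 3 := by nlinarith [sq_nonneg (n : ℝ)]
  have sq_bounds := abs_le.mp h.abs_swapSum_sq_sub_le
  refine ⟨⟨h.abs_le_one, h.abs_entrySum_le.trans ?_, ?_⟩, h.swapSum_cube_le.trans ?_, ?_⟩
  · gcongr
    linarith
  · linarith [sq_nonneg (n : ℝ), sq_bounds.2]
  · gcongr
    linarith
  · linarith [sq_bounds.1]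

lemma abs_sub_le_of_abs_stein_sub_le {C m t V G w x y : ℝ} (hC : 0 ≤ C) (hm : 4 / 3 ≤ m)
    (ht : |t| ≤ γ * m) (hV : |V - 4 * m ^ 2 * (m - 1)| ≤ γ * m ^ 3) (hG : G ≤ γ * m ^ 3)
    (h : |4 * (m * w - t * y) - V / (m * (m - 1)) * x| ≤ 7 * C * G / (m * (m - 1))) :
    |x - w| ≤ (|x| + |y| + 7 * C) * γ := by
  have m_pos : 0 < m := by linarith
  have m_sub_pos : 0 < m - 1 := by linarith
  have cube_le : m ^ 3 ≤ 4 * m ^ 2 * (m - 1) := by nlinarith [sq_nonneg m]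
  have γ_nonneg : 0 ≤ γ := nonneg_of_mul_nonneg_left ((abs_nonneg _).trans ht) m_pos
  have variance_le : |(V - 4 * m ^ 2 * (m - 1)) / (4 * m ^ 2 * (m - 1))| ≤ γ := by
    rw [abs_div, abs_of_pos (by positivity : 0 < 4 * m ^ 2 * (m - 1)), div_le_iff₀ (by positivity)]
    exact hV.trans (by gcongr)
  have mean_le : |t / m| ≤ γ := by
    rwa [abs_div, abs_of_pos m_pos, div_le_iff₀ m_pos]
  have remainder_le : 7 * C * G / (m * (m - 1)) ≤ 4 * m * (7 * C * γ) := by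
    rw [div_le_iff₀ (by positivity)]
    calc 7 * C * G ≤ 7 * C * (γ * (4 * m ^ 2 * (m - 1))) := by
          gcongr
          exact hG.trans (by gcongr)
      _ = _ := by ring
  have error_le : |(4 * (m * w - t * y) - V / (m * (m - 1)) * x) / (4 * m)| ≤ 7 * C * γ := by
    rw [abs_div, abs_of_pos (by positivity : 0 < 4 * m), div_le_iff₀' (by positivity)]
    exact h.trans remainder_le
  calc |x - w|
      = |-((V - 4 * m ^ 2 * (m - 1)) / (4 * m ^ 2 * (m - 1)) * x) - t / m * y -
          (4 * (m * w - t * y) - V / (m * (m - 1)) * x) / (4 * m)| := by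
        congr 1
        field_simp
        ring
    _ ≤ |(V - 4 * m ^ 2 * (m - 1)) / (4 * m ^ 2 * (m - 1))| * |x| + |t / m| * |y| +
          |(4 * (m * w - t * y) - V / (m * (m - 1)) * x) / (4 * m)| := by
        refine (abs_sub _ _).trans (add_le_add_left ((abs_sub _ _).trans ?_) _)
        rw [abs_neg, abs_mul, abs_mul]
    _ ≤ γ * |x| + γ * |y| + 7 * C * γ := by gcongr
    _ = _ := by ring

lemma IsNearStandard.abs_permExp_sub_permExp_rankT_mul_le
    {B : Matrix (Fin (n + 3)) (Fin (n + 3)) ℝ} (h : IsNearStandard γ B) {f φ : ℝ → ℝ}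
    (hf : ∀ x, HasDerivAt f (φ x) x) {C : NNReal}
    (hC : ∀ i p j q k l, LipschitzOnWith C (rankExp φ (minor (minor (minor B i p) j q) k l))
      (Metric.closedBall 0 7)) :
    |permExp (fun π => φ (rankT B π)) - permExp (fun π => rankT B π * f (rankT B π))| ≤
      (|permExp (fun π => φ (rankT B π))| + |permExp (fun π => f (rankT B π))| + 7 * C) * γ := by
  have stein_le := abs_stein_sub_le h.abs_le_one hf hC
  have split_expectation : permExp (fun π => (((n : ℝ) + 3) * rankT B π - entrySum B) *
      f (rankT B π)) = ((n : ℝ) + 3) * permExp (fun π => rankT B π * f (rankT B π)) -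
        entrySum B * permExp (fun π => f (rankT B π)) := by
    simp only [sub_mul, mul_assoc, permExp_sub, permExp_const_mul]
  rw [split_expectation, show (n : ℝ) + 2 = n + 3 - 1 by ring] at stein_le
  exact abs_sub_le_of_abs_stein_sub_le C.coe_nonneg
    (by linarith [n.cast_nonneg (α := ℝ)]) (by exact_mod_cast h.abs_entrySum_le)
    (by exact_mod_cast h.abs_swapSum_sq_sub_le) (by exact_mod_cast h.swapSum_cube_le) stein_le

lemma exists_isNondegenerate_minor_minor_minor {L c : ℝ} (hL : 0 < L) (hc : 0 < c) :
    ∃ L' c' γ₀ : ℝ, 0 < L' ∧ 0 < c' ∧ 0 < γ₀ ∧ ∀ γ, 0 ≤ γ → γ ≤ γ₀ →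
      ∀ (n : ℕ) (B : Matrix (Fin (n + 3)) (Fin (n + 3)) ℝ), IsNondegenerate L c γ B →
        ∀ i p j q k l, IsNondegenerate L' c' γ (minor (minor (minor B i p) j q) k l) := by
  obtain ⟨γ₁, hγ₁, minor₁⟩ := exists_isNondegenerate_minor hL hc
  obtain ⟨γ₂, hγ₂, minor₂⟩ := exists_isNondegenerate_minor
    (L := 8 * L + 4) (c := c / 2) (by positivity) (by positivity)
  obtain ⟨γ₃, hγ₃, minor₃⟩ := exists_isNondegenerate_minor
    (L := 8 * (8 * L + 4) + 4) (c := c / 2 / 2) (by positivity) (by positivity)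
  refine ⟨8 * (8 * (8 * L + 4) + 4) + 4, c / 2 / 2 / 2, min γ₁ (min γ₂ γ₃), by positivity,
    by positivity, by positivity, fun γ hγ hγle n B hB i p j q k l => ?_⟩
  obtain ⟨hγ₁, hγ₂, hγ₃⟩ := by simpa only [le_min_iff] using hγle
  exact minor₃ γ hγ hγ₃ _ _ (minor₂ γ hγ hγ₂ _ _ (minor₁ γ hγ hγ₁ _ _ hB i p) j q) k l

lemma abs_permExp_comp_rankT_le {g : ℝ → ℝ} {K : ℝ} {r : ℕ} (hK : 0 ≤ K)
    (hg : ∀ x, |g x| ≤ K * (1 + |x|) ^ r) {B : Matrix (Fin n) (Fin n) ℝ} {C : ℝ}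
    (hC : permExp (fun π => (1 + |rankT B π|) ^ r) ≤ C) :
    |permExp (fun π => g (rankT B π))| ≤ K * C := calc
  _ ≤ permExp (fun π => K * (1 + |rankT B π|) ^ r) :=
    (abs_permExp_le _).trans (permExp_mono fun _ => hg _)
  _ ≤ K * C := by
    rw [permExp_const_mul]
    gcongr

lemma exists_abs_permExp_smoothTest_sub_le (k : ℕ) :
    ∃ γ₀ C : ℝ, 0 < γ₀ ∧ 0 ≤ C ∧ ∀ γ, 0 < γ → γ ≤ γ₀ → ∀ (n : ℕ) (B : Matrix (Fin n) (Fin n) ℝ),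
      7 ≤ n → IsNearStandard γ B → ∀ z,
        |permExp (fun π => smoothTest k z γ (rankT B π)) - gaussMean (smoothTest k z γ)| ≤
          C * γ := by
  obtain ⟨L, c, γ₁, hL, hc, hγ₁, nondegenerate_minor⟩ :=
    exists_isNondegenerate_minor_minor_minor (L := 5) (c := 1) (by norm_num) (by norm_num)
  obtain ⟨C, lipschitz⟩ := exists_lipschitzOnWith_rankExp_steinSolDeriv k hL hc
  obtain ⟨C₁, hC₁, moment_le⟩ :=
    exists_permExp_one_add_abs_rankT_pow_le (L := 5) (k + 1) (by norm_num)
  obtain ⟨C₂, hC₂, moment_le'⟩ := exists_permExp_one_add_abs_rankT_pow_le (L := 5) k (by norm_num)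
  have := steinConst_nonneg k
  have := gaussMoment_nonneg k
  refine ⟨min (1 / 3) γ₁, (steinConst k + 1 + gaussMoment k) * C₁ + steinConst k * C₂ + 7 * C,
    by positivity, by positivity, fun γ hγ hγle n B hn hB z => ?_⟩
  obtain ⟨m, rfl⟩ := Nat.exists_eq_add_of_le' hn
  obtain ⟨hγ₃, hγ₁⟩ := le_min_iff.mp hγle
  set h := smoothTest k z γ
  have continuous_h : Continuous h := continuous_smoothTest k z γ
  have h_le : ∀ x, |h x| ≤ (1 + |x|) ^ k := abs_smoothTest_le k z γ
  have nondegenerate := hB.isNondegenerate hγ.le hγ₃ hn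
  have stein_equation : permExp (fun π => h (rankT B π)) - gaussMean h =
      permExp (fun π => steinSolDeriv h (rankT B π)) -
        permExp (fun π => rankT B π * steinSol h (rankT B π)) := by
    rw [← permExp_const (n := m + 7) (gaussMean h), ← permExp_sub, ← permExp_sub]
    congr 1 with π
    rw [steinSolDeriv]
    ring
  rw [stein_equation]
  refine (IsNearStandard.abs_permExp_sub_permExp_rankT_mul_le (n := m + 4) hB
    (hasDerivAt_steinSol continuous_h h_le) fun i p j q k l => lipschitz γ hγ hγ₃ m _
      (nondegenerate_minor γ hγ.le hγ₁ (m + 4) B nondegenerate i p j q k l) z).trans ?_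
  gcongr
  · exact abs_permExp_comp_rankT_le (by positivity) (abs_steinSolDeriv_le continuous_h h_le)
      (moment_le _ B nondegenerate.toIsTame)
  · exact abs_permExp_comp_rankT_le (by positivity) (abs_steinSol_le continuous_h h_le)
      (moment_le' _ B nondegenerate.toIsTame)

end SmoothedApproximation

section SharpTruncation

/-- The truncated power `|x|^k * 1_{(-∞, z]}(x)`. -/
noncomputable def truncAbsPow (k : ℕ) (z x : ℝ) : ℝ := |x| ^ k * (if x ≤ z then 1 else 0)

lemma truncAbsPow_le_smoothTest (k : ℕ) {z ε : ℝ} (hε : 0 < ε) (x : ℝ) :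
    truncAbsPow k z x ≤ smoothTest k z ε x := by
  rw [truncAbsPow, smoothTest]
  gcongr
  split_ifs with h
  · rw [ramp_eq_one hε h]
  · exact ramp_nonneg z ε x

lemma smoothTest_le_truncAbsPow_add (k : ℕ) {z ε : ℝ} (hε : 0 < ε) (x : ℝ) :
    smoothTest k z ε x ≤ truncAbsPow k (z + ε) x := by
  rw [truncAbsPow, smoothTest]
  gcongr
  split_ifs with h
  · exact ramp_le_one z ε x
  · rw [ramp_eq_zero hε (not_le.mp h).le]

lemma truncAbsPow_mul_gaussD (k : ℕ) (z : ℝ) :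
    (fun x => truncAbsPow k z x * gaussD x) =
      (Set.Iic z).indicator fun x => |x| ^ k * gaussD x := by
  ext x
  rw [Set.indicator_apply, truncAbsPow]
  simp only [Set.mem_Iic, mul_ite, ite_mul, mul_one, mul_zero, zero_mul]

lemma integrable_truncAbsPow_mul_gaussD (k : ℕ) (z : ℝ) :
    Integrable fun x => truncAbsPow k z x * gaussD x := by
  rw [truncAbsPow_mul_gaussD]
  exact (integrable_abs_pow_mul_gaussD k).indicator measurableSet_Iic

lemma gaussMean_truncAbsPow (k : ℕ) (z : ℝ) :
    gaussMean (truncAbsPow k z) = ∫ x in Set.Iic z, |x| ^ k * gaussD x := by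
  rw [gaussMean, truncAbsPow_mul_gaussD, integral_indicator measurableSet_Iic]

lemma gaussMean_mono {g h : ℝ → ℝ} (hg : Integrable fun x => g x * gaussD x)
    (hh : Integrable fun x => h x * gaussD x) (hgh : ∀ x, g x ≤ h x) :
    gaussMean g ≤ gaussMean h :=
  integral_mono hg hh fun x => mul_le_mul_of_nonneg_right (hgh x) (gaussD_pos x).le

lemma exists_gaussMean_truncAbsPow_add_le (k : ℕ) : ∃ C : ℝ, 0 ≤ C ∧ ∀ z ε, 0 ≤ ε →
    gaussMean (truncAbsPow k (z + ε)) ≤ gaussMean (truncAbsPow k z) + C * ε := by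
  obtain ⟨C, hC, density_le⟩ := exists_abs_pow_mul_gaussD_le k
  refine ⟨C, hC, fun z ε hε => ?_⟩
  have integrable := integrable_abs_pow_mul_gaussD k
  rw [← sub_le_iff_le_add', gaussMean_truncAbsPow, gaussMean_truncAbsPow,
    intervalIntegral.integral_Iic_sub_Iic integrable.integrableOn integrable.integrableOn]
  have integral_le := intervalIntegral.norm_integral_le_of_norm_le_const (a := z) (b := z + ε)
    (f := fun x => |x| ^ k * gaussD x) fun x _ =>
      (Real.norm_of_nonneg (mul_nonneg (by positivity) (gaussD_pos x).le)).trans_le (density_le x)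
  rw [add_sub_cancel_left, abs_of_nonneg hε] at integral_le
  exact (le_abs_self _).trans integral_le

lemma exists_abs_permExp_truncAbsPow_sub_le (k : ℕ) :
    ∃ γ₀ C : ℝ, 0 < γ₀ ∧ 0 ≤ C ∧ ∀ γ, 0 < γ → γ ≤ γ₀ → ∀ (n : ℕ) (B : Matrix (Fin n) (Fin n) ℝ),
      2 ≤ n → IsNearStandard γ B → ∀ z,
        |permExp (fun π => truncAbsPow k z (rankT B π)) - gaussMean (truncAbsPow k z)| ≤
          C * γ := by
  obtain ⟨γ₀, C, hγ₀, hC, smooth_le⟩ := exists_abs_permExp_smoothTest_sub_le k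
  obtain ⟨C', hC', gaussian_step⟩ := exists_gaussMean_truncAbsPow_add_le k
  refine ⟨min (1 / 4) γ₀, C + C', by positivity, by positivity,
    fun γ hγ hγle n B hn hB z => ?_⟩
  obtain ⟨hγ₄, hγ₀⟩ := le_min_iff.mp hγle
  have smooth_le (w : ℝ) :=
    abs_sub_le_iff.mp (smooth_le γ hγ hγ₀ n B (hB.seven_le hγ₄ hn) hB w)
  have integrable_smooth (w : ℝ) : Integrable fun x => smoothTest k w γ x * gaussD x :=
    integrable_mul_gaussD (continuous_smoothTest k w γ) (abs_smoothTest_le k w γ)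
  rw [abs_sub_le_iff]
  constructor
  · have perm_le : permExp (fun π => truncAbsPow k z (rankT B π)) ≤
        permExp (fun π => smoothTest k z γ (rankT B π)) :=
      permExp_mono fun π => truncAbsPow_le_smoothTest k hγ _
    have gauss_le := gaussMean_mono (integrable_smooth z)
      (integrable_truncAbsPow_mul_gaussD k (z + γ)) (smoothTest_le_truncAbsPow_add k hγ)
    linarith [(smooth_le z).1, gaussian_step z γ hγ.le]
  · have perm_ge : permExp (fun π => smoothTest k (z - γ) γ (rankT B π)) ≤
        permExp (fun π => truncAbsPow k z (rankT B π)) := permExp_mono fun π => by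
      simpa only [sub_add_cancel] using smoothTest_le_truncAbsPow_add k (z := z - γ) hγ _
    have gauss_ge := gaussMean_mono (integrable_truncAbsPow_mul_gaussD k (z - γ))
      (integrable_smooth (z - γ)) (truncAbsPow_le_smoothTest k hγ)
    have gaussian_step := gaussian_step (z - γ) γ hγ.le
    rw [sub_add_cancel] at gaussian_step
    linarith [(smooth_le (z - γ)).2]

end SharpTruncation

section LargeEntryMoments

variable {n : ℕ}

/-- The sum of the `r`-th absolute powers of the entries of `a`. -/
def absPowSum (r : ℕ) (a : Matrix (Fin n) (Fin n) ℝ) : ℝ := ∑ i, ∑ j, |a i j| ^ r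

lemma absPowSum_nonneg (r : ℕ) (a : Matrix (Fin n) (Fin n) ℝ) : 0 ≤ absPowSum r a := by
  unfold absPowSum
  positivity

lemma entrySum_eq_absPowSum_one {c : Matrix (Fin n) (Fin n) ℝ} (hc : ∀ i j, 0 ≤ c i j) :
    entrySum c = absPowSum 1 c := by
  simp only [entrySum, absPowSum, pow_one, abs_of_nonneg (hc _ _)]

lemma absPowSum_minor_le (r : ℕ) (a : Matrix (Fin (n + 1)) (Fin (n + 1)) ℝ) (i p : Fin (n + 1)) :
    absPowSum r (minor a i p) ≤ absPowSum r a := by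
  simp only [absPowSum, minor_apply]
  rw [Fin.sum_univ_succAbove (fun j => ∑ q, |a j q| ^ r) i]
  refine le_add_of_nonneg_of_le (by positivity) (sum_le_sum fun j _ => ?_)
  rw [Fin.sum_univ_succAbove (fun q => |a (i.succAbove j) q| ^ r) p]
  exact le_add_of_nonneg_left (by positivity)

lemma absPowSum_minor_div_le (r : ℕ) (a : Matrix (Fin (n + 1)) (Fin (n + 1)) ℝ)
    (i p : Fin (n + 1)) :
    absPowSum r (minor a i p) / n ≤ 2 * (absPowSum r a / ((n + 1 : ℕ) : ℝ)) := by
  have minor_le := absPowSum_minor_le r a i p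
  have total_nonneg := absPowSum_nonneg r a
  rcases n.eq_zero_or_pos with rfl | hn
  · rw [Nat.cast_zero, div_zero]
    positivity
  have one_le : (1 : ℝ) ≤ n := by exact_mod_cast hn
  push_cast
  rw [← mul_div_assoc, div_le_div_iff₀ (by positivity) (by positivity)]
  calc absPowSum r (minor a i p) * ((n : ℝ) + 1) ≤ absPowSum r a * (2 * n) := by
        gcongr
        linarith
    _ = 2 * absPowSum r a * n := by ring

lemma absPowSum_le_absPowSum {c : Matrix (Fin n) (Fin n) ℝ} (hc : ∀ i j, c i j = 0 ∨ 1 ≤ c i j)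
    {r s : ℕ} (hr : r ≠ 0) (hrs : r ≤ s) : absPowSum r c ≤ absPowSum s c :=
  sum_le_sum fun i _ => sum_le_sum fun j _ => by
    rcases hc i j with h | h
    · rw [h, abs_zero, zero_pow hr]
      positivity
    · exact pow_le_pow_right₀ (h.trans (le_abs_self _)) hrs

lemma permExp_rankT_mul (c : Matrix (Fin (n + 1)) (Fin (n + 1)) ℝ)
    (F : Equiv.Perm (Fin (n + 1)) → ℝ) :
    permExp (fun π => rankT c π * F π) =
      (∑ i, ∑ p, c i p * permExp (fun σ => F (insertPerm i p σ))) / ((n : ℝ) + 1) := by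
  simp only [rankT, sum_mul, permExp_sum, sum_div _ (fun i => ∑ p, c i p * _)]
  refine sum_congr rfl fun i _ => ?_
  simp only [permExp_eq_avg_insertPerm_row i, insertPerm_apply_self, permExp_const_mul]

lemma rankT_nonneg {c : Matrix (Fin n) (Fin n) ℝ} (hc : ∀ i j, 0 ≤ c i j)
    (π : Equiv.Perm (Fin n)) : 0 ≤ rankT c π :=
  sum_nonneg fun _ _ => hc _ _

lemma permExp_rankT_pow_succ_le_of_minor {c : Matrix (Fin (n + 1)) (Fin (n + 1)) ℝ} {M : ℝ}
    {r : ℕ} (hc : ∀ i j, 0 ≤ c i j)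
    (hM : ∀ i p, permExp (fun σ => rankT (minor c i p) σ ^ r) ≤ M) :
    permExp (fun π => rankT c π ^ (r + 1)) ≤
      2 ^ r * (M * absPowSum 1 c + absPowSum (r + 1) c) / ((n : ℝ) + 1) := by
  simp only [pow_succ' (rankT c _), permExp_rankT_mul, rankT_insertPerm, absPowSum, mul_sum,
    ← sum_add_distrib]
  refine div_le_div_of_nonneg_right (sum_le_sum fun i _ => sum_le_sum fun p _ => ?_) (by positivity)
  calc c i p * permExp (fun σ => (rankT (minor c i p) σ + c i p) ^ r)
      ≤ c i p * permExp (fun σ => 2 ^ r * (rankT (minor c i p) σ ^ r + c i p ^ r)) := by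
        refine mul_le_mul_of_nonneg_left (permExp_mono fun σ => ?_) (hc i p)
        have rank_nonneg := rankT_nonneg (c := minor c i p) (fun _ _ => hc _ _) σ
        have entry_nonneg := hc i p
        refine (add_pow_le rank_nonneg entry_nonneg r).trans ?_
        gcongr
        · exact one_le_two
        · exact Nat.sub_le r 1
    _ ≤ c i p * (2 ^ r * (M + c i p ^ r)) := by
        rw [permExp_const_mul, permExp_add, permExp_const]
        have := hc i p
        gcongr
        exact hM i p
    _ = 2 ^ r * (M * |c i p| ^ 1 + |c i p| ^ (r + 1)) := by
        rw [abs_of_nonneg (hc i p)]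
        ring

lemma exists_permExp_rankT_pow_succ_le (r : ℕ) {Λ : ℝ} (hΛ : 0 ≤ Λ) : ∃ C : ℝ, 0 ≤ C ∧
    ∀ (n : ℕ) (c : Matrix (Fin n) (Fin n) ℝ), (∀ i j, c i j = 0 ∨ 1 ≤ c i j) →
      absPowSum 1 c / n ≤ Λ →
        permExp (fun π => rankT c π ^ (r + 1)) ≤ C * (absPowSum (r + 1) c / n) := by
  induction r generalizing Λ with
  | zero =>
    refine ⟨2, zero_le_two, fun n c hc _ => ?_⟩
    have entry_nonneg (i j) : 0 ≤ c i j := by rcases hc i j with h | h <;> linarith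
    rcases n with _ | n
    · simp [permExp, rankT]
    refine (permExp_rankT_pow_succ_le_of_minor entry_nonneg (r := 0) fun _ _ =>
      (permExp_const 1).le).trans_eq ?_
    push_cast
    ring
  | succ r ih =>
    obtain ⟨C, hC, minor_moment_le⟩ := ih (Λ := 2 * Λ) (by positivity)
    refine ⟨2 ^ (r + 1) * (2 * C * Λ + 1), by positivity, fun n c hc sum_le => ?_⟩
    have entry_nonneg (i j) : 0 ≤ c i j := by rcases hc i j with h | h <;> linarith
    rcases n with _ | n
    · simp [permExp, rankT]
    have moment_le (i p : Fin (n + 1)) : permExp (fun σ => rankT (minor c i p) σ ^ (r + 1)) ≤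
        C * (2 * (absPowSum (r + 2) c / ((n + 1 : ℕ) : ℝ))) := calc
      permExp (fun σ => rankT (minor c i p) σ ^ (r + 1))
          ≤ C * (absPowSum (r + 1) (minor c i p) / n) :=
            minor_moment_le n _ (fun _ _ => hc _ _)
              ((absPowSum_minor_div_le 1 c i p).trans (by gcongr))
      _ ≤ C * (2 * (absPowSum (r + 1) c / ((n + 1 : ℕ) : ℝ))) := by
          gcongr
          exact absPowSum_minor_div_le (r + 1) c i p
      _ ≤ C * (2 * (absPowSum (r + 2) c / ((n + 1 : ℕ) : ℝ))) := by
          gcongr 3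
          exact absPowSum_le_absPowSum hc r.succ_ne_zero (Nat.le_succ _)
    have Q_nonneg := absPowSum_nonneg (r + 2) c
    calc permExp (fun π => rankT c π ^ (r + 1 + 1))
        ≤ 2 ^ (r + 1) * (C * (2 * (absPowSum (r + 2) c / ((n + 1 : ℕ) : ℝ))) * absPowSum 1 c +
            absPowSum (r + 2) c) / ((n : ℝ) + 1) :=
          permExp_rankT_pow_succ_le_of_minor entry_nonneg moment_le
      _ = 2 ^ (r + 1) * (2 * C * (absPowSum 1 c / ((n + 1 : ℕ) : ℝ)) + 1) *
            (absPowSum (r + 2) c / ((n + 1 : ℕ) : ℝ)) := by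
          push_cast
          field_simp
      _ ≤ _ := by gcongr

lemma exists_permExp_rankT_mul_abs_rankT_pow_le (k : ℕ) {L : ℝ} (hL : 0 ≤ L) : ∃ C : ℝ, 0 ≤ C ∧
    ∀ (n : ℕ) (c B : Matrix (Fin n) (Fin n) ℝ), (∀ i j, 0 ≤ c i j) → IsTame L B →
      permExp (fun π => rankT c π * |rankT B π| ^ k) ≤ C * (absPowSum 1 c / n) := by
  obtain ⟨C, hC, moment_le⟩ :=
    exists_permExp_one_add_abs_rankT_pow_le k (L := 8 * L + 4) (by positivity)
  refine ⟨C, hC, fun n c B hc hB => ?_⟩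
  rcases n with _ | n
  · simp [permExp, rankT]
  simp only [permExp_rankT_mul, rankT_insertPerm, ← entrySum_eq_absPowSum_one hc, entrySum,
    mul_div_assoc', mul_sum, Nat.cast_succ]
  refine div_le_div_of_nonneg_right (sum_le_sum fun i _ => sum_le_sum fun p _ => ?_) (by positivity)
  rw [mul_comm C]
  refine mul_le_mul_of_nonneg_left ((permExp_mono fun σ => ?_).trans
    (moment_le n _ (hB.minor hL i p))) (hc i p)
  gcongr
  linarith [abs_add_le (rankT (minor B i p) σ) (B i p), hB.abs_le_one i p]

end LargeEntryMoments

section Truncation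

/-- `x` truncated at modulus one: entries exceeding the level are replaced by zero. -/
noncomputable def smallPart (x : ℝ) : ℝ := if |x| ≤ 1 then x else 0

/-- The modulus of the part of `x` that `smallPart` discards. -/
noncomputable def largePart (x : ℝ) : ℝ := if |x| ≤ 1 then 0 else |x|

lemma abs_smallPart_le_one (x : ℝ) : |smallPart x| ≤ 1 := by
  unfold smallPart
  split_ifs with h <;> simp [h]

lemma abs_smallPart_le_abs (x : ℝ) : |smallPart x| ≤ |x| := by
  unfold smallPart
  split_ifs <;> simp

lemma abs_sub_smallPart (x : ℝ) : |x - smallPart x| = largePart x := by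
  unfold smallPart largePart
  split_ifs <;> simp

lemma smallPart_sq_add_largePart_sq (x : ℝ) : |smallPart x| ^ 2 + |largePart x| ^ 2 = |x| ^ 2 := by
  unfold smallPart largePart
  split_ifs <;> simp

lemma largePart_eq_zero_or_one_le (x : ℝ) : largePart x = 0 ∨ 1 ≤ largePart x := by
  unfold largePart
  split_ifs with h
  · exact .inl rfl
  · exact .inr (not_le.mp h).le

lemma largePart_nonneg (x : ℝ) : 0 ≤ largePart x := by
  rcases largePart_eq_zero_or_one_le x with h | h <;> linarith

lemma largePart_le_abs (x : ℝ) : largePart x ≤ |x| := by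
  unfold largePart
  split_ifs <;> simp

variable {n : ℕ}

lemma absPowSum_mono {r : ℕ} {a b : Matrix (Fin n) (Fin n) ℝ} (h : ∀ i j, |a i j| ≤ |b i j|) :
    absPowSum r a ≤ absPowSum r b :=
  sum_le_sum fun i _ => sum_le_sum fun j _ => pow_le_pow_left₀ (abs_nonneg _) (h i j) r

lemma absPowSum_map_largePart_le (a : Matrix (Fin n) (Fin n) ℝ) {r s : ℕ} (hr : r ≠ 0)
    (hrs : r ≤ s) : absPowSum r (a.map largePart) ≤ absPowSum s a :=
  (absPowSum_le_absPowSum (fun _ _ => largePart_eq_zero_or_one_le _) hr hrs).trans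
    (absPowSum_mono fun i j => by
      rw [abs_of_nonneg (largePart_nonneg _)]
      exact largePart_le_abs _)

lemma abs_sum_smallPart_le {u : Fin n → ℝ} (hu : ∑ i, u i = 0) :
    |∑ i, smallPart (u i)| ≤ ∑ i, |largePart (u i)| := by
  have : ∑ i, smallPart (u i) = -∑ i, (u i - smallPart (u i)) := by
    rw [sum_sub_distrib, hu]
    ring
  rw [this, abs_neg]
  refine (abs_sum_le_sum_abs _ _).trans_eq (sum_congr rfl fun i _ => ?_)
  rw [abs_sub_smallPart, abs_of_nonneg (largePart_nonneg _)]

lemma sq_sum_smallPart_le {u : Fin n → ℝ} (hu : ∑ i, u i = 0) :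
    (∑ i, smallPart (u i)) ^ 2 ≤ n * ∑ i, |largePart (u i)| := by
  rw [← sq_abs, sq]
  refine mul_le_mul ?_ (abs_sum_smallPart_le hu) (abs_nonneg _) n.cast_nonneg
  exact (abs_sum_le_sum_abs _ _).trans
    ((sum_le_sum fun i _ => abs_smallPart_le_one (u i)).trans (by simp))

lemma sum_sum_sub_sq (u : Fin n → ℝ) :
    ∑ i, ∑ j, (u j - u i) ^ 2 = 2 * n * ∑ i, u i ^ 2 - 2 * (∑ i, u i) ^ 2 := by
  simp only [sub_sq, sum_add_distrib, sum_sub_distrib, ← mul_sum, ← sum_mul, sum_const, card_univ,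
    Fintype.card_fin, nsmul_eq_mul]
  ring

lemma swapSum_sq_eq (B : Matrix (Fin n) (Fin n) ℝ) :
    swapSum (· ^ 2) B = 4 * (n : ℝ) ^ 2 * absPowSum 2 B - 4 * n * ∑ i, (∑ j, B i j) ^ 2 -
      4 * n * ∑ j, (∑ i, B i j) ^ 2 + 4 * entrySum B ^ 2 := by
  have inner_sum (i j : Fin n) : ∑ p, ∑ q, swapGain B i j p q ^ 2 =
      2 * n * ∑ p, (B j p - B i p) ^ 2 - 2 * (∑ p, B j p - ∑ p, B i p) ^ 2 := by
    rw [← sum_sub_distrib, ← sum_sum_sub_sq fun p => B j p - B i p]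
    refine sum_congr rfl fun p _ => sum_congr rfl fun q _ => ?_
    unfold swapGain
    ring
  have column_sum : ∑ i, ∑ j, ∑ p, (B j p - B i p) ^ 2 =
      2 * n * absPowSum 2 B - 2 * ∑ j, (∑ i, B i j) ^ 2 := calc
    ∑ i, ∑ j, ∑ p, (B j p - B i p) ^ 2 = ∑ p, ∑ i, ∑ j, (B j p - B i p) ^ 2 :=
      (sum_congr rfl fun i _ => sum_comm).trans sum_comm
    _ = ∑ p, (2 * n * ∑ i, B i p ^ 2 - 2 * (∑ i, B i p) ^ 2) :=
      sum_congr rfl fun p _ => sum_sum_sub_sq fun i => B i p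
    _ = _ := by
      simp only [absPowSum, sq_abs, sum_sub_distrib, ← mul_sum]
      rw [sum_comm]
  simp only [swapSum, inner_sum, sum_sub_distrib, ← mul_sum]
  rw [sum_sum_sub_sq fun i => ∑ p, B i p, column_sum, entrySum]
  ring

lemma abs_swapGain_pow_le (B : Matrix (Fin n) (Fin n) ℝ) (r : ℕ) (i j p q : Fin n) :
    |swapGain B i j p q| ^ (r + 1) ≤
      4 ^ r * (|B i q| ^ (r + 1) + |B j p| ^ (r + 1) + |B i p| ^ (r + 1) + |B j q| ^ (r + 1)) := by
  have triangle : |swapGain B i j p q| ≤ (|B i q| + |B j p|) + (|B i p| + |B j q|) := by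
    rw [swapGain, sub_sub]
    exact (abs_sub _ _).trans (add_le_add (abs_add_le _ _) (abs_add_le _ _))
  calc |swapGain B i j p q| ^ (r + 1)
      ≤ ((|B i q| + |B j p|) + (|B i p| + |B j q|)) ^ (r + 1) := by gcongr
    _ ≤ 2 ^ r * ((|B i q| + |B j p|) ^ (r + 1) + (|B i p| + |B j q|) ^ (r + 1)) :=
        add_pow_le (by positivity) (by positivity) (r + 1)
    _ ≤ 2 ^ r * (2 ^ r * (|B i q| ^ (r + 1) + |B j p| ^ (r + 1)) +
          2 ^ r * (|B i p| ^ (r + 1) + |B j q| ^ (r + 1))) := by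
        gcongr <;> exact add_pow_le (abs_nonneg _) (abs_nonneg _) (r + 1)
    _ = _ := by
        rw [show (4 : ℝ) = 2 * 2 by norm_num, mul_pow]
        ring

lemma swapSum_abs_pow_le (B : Matrix (Fin n) (Fin n) ℝ) (r : ℕ) :
    swapSum (|·| ^ (r + 1)) B ≤ 4 ^ (r + 1) * (n : ℝ) ^ 2 * absPowSum (r + 1) B := by
  refine (sum_le_sum fun i _ => sum_le_sum fun j _ => sum_le_sum fun p _ => sum_le_sum fun q _ =>
    abs_swapGain_pow_le B r i j p q).trans_eq ?_
  simp only [absPowSum, ← mul_sum, sum_add_distrib, sum_const, card_univ, Fintype.card_fin,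
    nsmul_eq_mul]
  ring

/-- A matrix with the moment identities of the standardization of a matrix of positive variance. -/
structure IsStandardized (a : Matrix (Fin n) (Fin n) ℝ) : Prop where
  two_le : 2 ≤ n
  row_sum : ∀ i, ∑ j, a i j = 0
  col_sum : ∀ j, ∑ i, a i j = 0
  absPowSum_two : absPowSum 2 a = (n : ℝ) - 1

namespace IsStandardized

variable {a : Matrix (Fin n) (Fin n) ℝ}

lemma absPowSum_one_largePart_div_le_one (h : IsStandardized a) :
    absPowSum 1 (a.map largePart) / n ≤ 1 := by
  have sum_le := absPowSum_map_largePart_le a one_ne_zero one_le_two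
  rw [h.absPowSum_two] at sum_le
  exact div_le_one_of_le₀ (by linarith) n.cast_nonneg

lemma absPowSum_three_pos (h : IsStandardized a) : 0 < absPowSum 3 a := by
  refine (absPowSum_nonneg 3 a).lt_of_ne' fun cube_eq => ?_
  have entry_eq (i j : Fin n) : a i j = 0 := by
    have row_eq := (sum_eq_zero_iff_of_nonneg fun i _ => by positivity).mp cube_eq i (mem_univ i)
    simpa using (sum_eq_zero_iff_of_nonneg fun j _ => by positivity).mp row_eq j (mem_univ j)
  have sq_eq := h.absPowSum_two
  have two_le : (2 : ℝ) ≤ n := by exact_mod_cast h.two_le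
  simp only [absPowSum, entry_eq] at sq_eq
  norm_num at sq_eq
  linarith

lemma abs_entrySum_smallPart_le (h : IsStandardized a) :
    |entrySum (a.map smallPart)| ≤ absPowSum 1 (a.map largePart) := by
  refine (abs_sum_le_sum_abs _ _).trans (sum_le_sum fun i _ => ?_)
  simpa using abs_sum_smallPart_le (h.row_sum i)

lemma sum_row_sum_smallPart_sq_le (h : IsStandardized a) :
    ∑ i, (∑ j, a.map smallPart i j) ^ 2 ≤ n * absPowSum 1 (a.map largePart) := by
  rw [absPowSum, mul_sum]
  exact sum_le_sum fun i _ => by simpa using sq_sum_smallPart_le (h.row_sum i)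

lemma sum_col_sum_smallPart_sq_le (h : IsStandardized a) :
    ∑ j, (∑ i, a.map smallPart i j) ^ 2 ≤ n * absPowSum 1 (a.map largePart) := by
  rw [absPowSum, sum_comm, mul_sum]
  exact sum_le_sum fun j _ => by simpa using sq_sum_smallPart_le (h.col_sum j)

lemma absPowSum_two_smallPart (h : IsStandardized a) :
    absPowSum 2 (a.map smallPart) = n - 1 - absPowSum 2 (a.map largePart) := by
  rw [← h.absPowSum_two, eq_sub_iff_add_eq]
  simp only [absPowSum, ← sum_add_distrib, Matrix.map_apply, smallPart_sq_add_largePart_sq]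

lemma isTame_smallPart (h : IsStandardized a) : IsTame 4 (a.map smallPart) := by
  have two_le : (2 : ℝ) ≤ n := by exact_mod_cast h.two_le
  have large_le := absPowSum_map_largePart_le a one_ne_zero one_le_two
  rw [h.absPowSum_two] at large_le
  have total_le := h.abs_entrySum_smallPart_le.trans large_le
  refine ⟨fun i j => abs_smallPart_le_one _, by linarith, ?_⟩
  have total_sq_le := pow_le_pow_left₀ (abs_nonneg _) total_le 2
  rw [sq_abs] at total_sq_le
  have : 0 ≤ 4 * (n : ℝ) ^ 2 * absPowSum 2 (a.map largePart) :=
    mul_nonneg (by positivity) (absPowSum_nonneg _ _)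
  have : 0 ≤ 4 * (n : ℝ) * ∑ i, (∑ j, a.map smallPart i j) ^ 2 := by positivity
  have : 0 ≤ 4 * (n : ℝ) * ∑ j, (∑ i, a.map smallPart i j) ^ 2 := by positivity
  rw [swapSum_sq_eq, h.absPowSum_two_smallPart]
  linarith

lemma abs_swapSum_sq_smallPart_sub_le (h : IsStandardized a) :
    |swapSum (· ^ 2) (a.map smallPart) - 4 * (n : ℝ) ^ 2 * ((n : ℝ) - 1)| ≤
      12 * (n : ℝ) ^ 2 * absPowSum 3 a := by
  have one_le : (1 : ℝ) ≤ n := by exact_mod_cast one_le_two.trans h.two_le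
  have large_le := absPowSum_map_largePart_le a one_ne_zero (by norm_num : 1 ≤ 3)
  have squares_le : 4 * (n : ℝ) ^ 2 * absPowSum 2 (a.map largePart) ≤
      4 * (n : ℝ) ^ 2 * absPowSum 3 a := by
    gcongr
    exact absPowSum_map_largePart_le a two_ne_zero (Nat.le_succ 2)
  have rows_le : 4 * n * ∑ i, (∑ j, a.map smallPart i j) ^ 2 ≤ 4 * (n : ℝ) ^ 2 * absPowSum 3 a := by
    rw [sq (n : ℝ), ← mul_assoc, mul_assoc _ (n : ℝ) (absPowSum 3 a)]
    gcongr
    exact h.sum_row_sum_smallPart_sq_le.trans (by gcongr)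
  have cols_le : 4 * n * ∑ j, (∑ i, a.map smallPart i j) ^ 2 ≤ 4 * (n : ℝ) ^ 2 * absPowSum 3 a := by
    rw [sq (n : ℝ), ← mul_assoc, mul_assoc _ (n : ℝ) (absPowSum 3 a)]
    gcongr
    exact h.sum_col_sum_smallPart_sq_le.trans (by gcongr)
  have total_sq_le : entrySum (a.map smallPart) ^ 2 ≤ (n : ℝ) ^ 2 * absPowSum 3 a := by
    rw [← sq_abs, sq]
    have total_le := h.abs_entrySum_smallPart_le
    refine mul_le_mul (total_le.trans ?_) (total_le.trans large_le) (abs_nonneg _) (by positivity)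
    exact ((div_le_one₀ (by linarith)).mp h.absPowSum_one_largePart_div_le_one).trans
      (le_self_pow₀ one_le two_ne_zero)
  have squares_nonneg : 0 ≤ 4 * (n : ℝ) ^ 2 * absPowSum 2 (a.map largePart) :=
    mul_nonneg (by positivity) (absPowSum_nonneg _ _)
  have rows_nonneg : 0 ≤ 4 * (n : ℝ) * ∑ i, (∑ j, a.map smallPart i j) ^ 2 := by positivity
  have cols_nonneg : 0 ≤ 4 * (n : ℝ) * ∑ j, (∑ i, a.map smallPart i j) ^ 2 := by positivity
  have total_nonneg := sq_nonneg (entrySum (a.map smallPart))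
  rw [swapSum_sq_eq, h.absPowSum_two_smallPart, abs_le]
  constructor <;> linarith

lemma isNearStandard_smallPart (h : IsStandardized a) :
    IsNearStandard (64 * (absPowSum 3 a / n)) (a.map smallPart) := by
  have n_ne : (n : ℝ) ≠ 0 := by exact_mod_cast (two_pos.trans_le h.two_le).ne'
  have cube_nonneg := absPowSum_nonneg 3 a
  have scale_eq : 64 * (absPowSum 3 a / n) * (n : ℝ) ^ 3 = 64 * (n : ℝ) ^ 2 * absPowSum 3 a := by
    field_simp
  refine ⟨fun i j => abs_smallPart_le_one _, ?_, ?_, ?_⟩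
  · refine (h.abs_entrySum_smallPart_le.trans
      (absPowSum_map_largePart_le a one_ne_zero (by norm_num : 1 ≤ 3))).trans ?_
    rw [mul_assoc, div_mul_cancel₀ _ n_ne]
    linarith
  · rw [scale_eq]
    refine h.abs_swapSum_sq_smallPart_sub_le.trans ?_
    gcongr
    norm_num
  · rw [scale_eq, show (64 : ℝ) = 4 ^ 3 by norm_num]
    refine (swapSum_abs_pow_le _ 2).trans ?_
    gcongr
    exact absPowSum_mono fun i j => abs_smallPart_le_abs _

end IsStandardized
end Truncation

section RankStatistic

lemma abs_truncAbsPow_le (k : ℕ) (z x : ℝ) : |truncAbsPow k z x| ≤ |x| ^ k := by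
  unfold truncAbsPow
  split_ifs <;> simp

lemma abs_truncAbsPow_sub_le (k : ℕ) (z : ℝ) {x y d : ℝ} (hd : d = 0 ∨ 1 ≤ d)
    (hxy : |x - y| ≤ d) : |truncAbsPow k z x - truncAbsPow k z y| ≤
      (2 ^ k + 1) * (d * |y| ^ k + d ^ (k + 1)) := by
  rcases hd with rfl | one_le
  · simp [sub_eq_zero.mp (abs_nonpos_iff.mp hxy)]
  have x_le : |x| ≤ |y| + d := by
    linarith [abs_sub_abs_le_abs_sub x y]
  have x_pow_le : |x| ^ k ≤ 2 ^ k * (|y| ^ k + d ^ k) := calc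
    |x| ^ k ≤ (|y| + d) ^ k := by gcongr
    _ ≤ 2 ^ (k - 1) * (|y| ^ k + d ^ k) := add_pow_le (abs_nonneg y) (by linarith) k
    _ ≤ 2 ^ k * (|y| ^ k + d ^ k) := by
      gcongr
      exacts [one_le_two, k.sub_le 1]
  calc |truncAbsPow k z x - truncAbsPow k z y|
      ≤ |x| ^ k + |y| ^ k :=
        (abs_sub _ _).trans (add_le_add (abs_truncAbsPow_le k z x) (abs_truncAbsPow_le k z y))
    _ ≤ 2 ^ k * (|y| ^ k + d ^ k) + (|y| ^ k + d ^ k) :=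
        add_le_add x_pow_le (le_add_of_nonneg_right (by positivity))
    _ = (2 ^ k + 1) * (1 * |y| ^ k + d ^ k) := by ring
    _ ≤ (2 ^ k + 1) * (d * |y| ^ k + d ^ (k + 1)) := by
        gcongr
        exact k.le_succ

variable {n : ℕ}

lemma rankT_eq_zero_or_one_le {c : Matrix (Fin n) (Fin n) ℝ} (hc : ∀ i j, c i j = 0 ∨ 1 ≤ c i j)
    (π : Equiv.Perm (Fin n)) : rankT c π = 0 ∨ 1 ≤ rankT c π := by
  by_cases all_zero : ∀ i, c i (π i) = 0
  · exact .inl (sum_eq_zero fun i _ => all_zero i)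
  obtain ⟨i, entry_ne⟩ := not_forall.mp all_zero
  have entry_nonneg (j : Fin n) : 0 ≤ c j (π j) := by
    rcases hc j (π j) with h | h <;> linarith
  exact .inr (((hc i (π i)).resolve_left entry_ne).trans
    (single_le_sum (f := fun j => c j (π j)) (fun j _ => entry_nonneg j) (mem_univ i)))

lemma abs_rankT_sub_rankT_smallPart_le (a : Matrix (Fin n) (Fin n) ℝ) (π : Equiv.Perm (Fin n)) :
    |rankT a π - rankT (a.map smallPart) π| ≤ rankT (a.map largePart) π := by
  rw [rankT, rankT, ← sum_sub_distrib]
  exact (abs_sum_le_sum_abs _ _).trans_eq (sum_congr rfl fun i _ => abs_sub_smallPart _)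

lemma exists_abs_permExp_smallPart_sub_gaussMean_le (k : ℕ) : ∃ C : ℝ, 0 ≤ C ∧
    ∀ (n : ℕ) (a : Matrix (Fin n) (Fin n) ℝ), IsStandardized a → ∀ z,
      |permExp (fun π => truncAbsPow k z (rankT (a.map smallPart) π)) -
        gaussMean (truncAbsPow k z)| ≤ C * (absPowSum 3 a / n) := by
  obtain ⟨γ₀, C, hγ₀, hC, near_standard⟩ := exists_abs_permExp_truncAbsPow_sub_le k
  obtain ⟨M, hM, moment_le⟩ := exists_permExp_one_add_abs_rankT_pow_le k zero_le_four
  have gauss_nonneg := gaussMoment_nonneg k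
  refine ⟨64 * C + 64 * ((M + gaussMoment k) / γ₀), by positivity, fun n a ha z => ?_⟩
  have β_pos : 0 < absPowSum 3 a / n :=
    div_pos ha.absPowSum_three_pos (by exact_mod_cast two_pos.trans_le ha.two_le)
  set β := absPowSum 3 a / n
  have trunc_le (x : ℝ) : |truncAbsPow k z x| ≤ (1 + |x|) ^ k :=
    (abs_truncAbsPow_le k z x).trans (by gcongr; linarith)
  rw [add_mul]
  rcases le_or_gt (64 * β) γ₀ with small | large
  · have := near_standard _ (by positivity) small n _ ha.two_le ha.isNearStandard_smallPart z
    refine le_add_of_le_of_nonneg (this.trans_eq (by ring)) (by positivity)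
  · refine le_add_of_nonneg_of_le (by positivity) ?_
    calc |permExp (fun π => truncAbsPow k z (rankT (a.map smallPart) π)) -
          gaussMean (truncAbsPow k z)|
        ≤ permExp (fun π => (1 + |rankT (a.map smallPart) π|) ^ k) + gaussMoment k :=
          (abs_sub _ _).trans (add_le_add
            ((abs_permExp_le _).trans (permExp_mono fun π => trunc_le _))
            (abs_gaussMean_le trunc_le))
      _ ≤ (M + gaussMoment k) * 1 := by
          rw [mul_one]
          gcongr
          exact moment_le n _ ha.isTame_smallPart
      _ ≤ (M + gaussMoment k) * (64 * β / γ₀) := by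
          gcongr
          exact (one_le_div hγ₀).mpr large.le
      _ = 64 * ((M + gaussMoment k) / γ₀) * β := by ring

lemma exists_abs_permExp_sub_permExp_smallPart_le (k : ℕ) : ∃ C : ℝ, 0 ≤ C ∧
    ∀ (n : ℕ) (a : Matrix (Fin n) (Fin n) ℝ), IsStandardized a → ∀ s, k < s → ∀ z,
      |permExp (fun π => truncAbsPow k z (rankT a π)) -
        permExp (fun π => truncAbsPow k z (rankT (a.map smallPart) π))| ≤
      C * (absPowSum 3 a / n + absPowSum s a / n) := by
  obtain ⟨C₁, hC₁, mixed_le⟩ := exists_permExp_rankT_mul_abs_rankT_pow_le k zero_le_four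
  obtain ⟨C₂, hC₂, large_le⟩ := exists_permExp_rankT_pow_succ_le k zero_le_one
  refine ⟨(2 ^ k + 1) * (C₁ + C₂), by positivity, fun n a ha s hs z => ?_⟩
  have cube_nonneg : 0 ≤ absPowSum 3 a / n := div_nonneg (absPowSum_nonneg 3 a) n.cast_nonneg
  have pow_nonneg : 0 ≤ absPowSum s a / n := div_nonneg (absPowSum_nonneg s a) n.cast_nonneg
  have mixed_le_cube : permExp (fun π =>
      rankT (a.map largePart) π * |rankT (a.map smallPart) π| ^ k) ≤
        C₁ * (absPowSum 3 a / n) := by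
    refine (mixed_le n _ _ (fun _ _ => largePart_nonneg _) ha.isTame_smallPart).trans ?_
    gcongr
    exact absPowSum_map_largePart_le a one_ne_zero (by norm_num)
  have large_le_pow : permExp (fun π => rankT (a.map largePart) π ^ (k + 1)) ≤
      C₂ * (absPowSum s a / n) := by
    refine (large_le n _ (fun _ _ => largePart_eq_zero_or_one_le _)
      ha.absPowSum_one_largePart_div_le_one).trans ?_
    gcongr
    exact absPowSum_map_largePart_le a k.succ_ne_zero hs
  rw [← permExp_sub]
  calc _ ≤ permExp (fun π => (2 ^ k + 1) *
        (rankT (a.map largePart) π * |rankT (a.map smallPart) π| ^ k +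
          rankT (a.map largePart) π ^ (k + 1))) :=
        (abs_permExp_le _).trans (permExp_mono fun π => abs_truncAbsPow_sub_le k z
          (rankT_eq_zero_or_one_le (fun _ _ => largePart_eq_zero_or_one_le _) π)
          (abs_rankT_sub_rankT_smallPart_le a π))
    _ ≤ (2 ^ k + 1) * (C₁ * (absPowSum 3 a / n) + C₂ * (absPowSum s a / n)) := by
        rw [permExp_const_mul, permExp_add]
        gcongr
    _ ≤ (2 ^ k + 1) * ((C₁ + C₂) * (absPowSum 3 a / n) + (C₁ + C₂) * (absPowSum s a / n)) := by
        gcongr <;> linarith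
    _ = (2 ^ k + 1) * (C₁ + C₂) * (absPowSum 3 a / n + absPowSum s a / n) := by ring

lemma two_le_of_sdev_pos {A : Matrix (Fin n) (Fin n) ℝ} (hA : 0 < sdev A) : 2 ≤ n := by
  contrapose! hA
  interval_cases n <;> simp [sdev, sigma2]

lemma sum_ctr_row_eq_zero (hn : n ≠ 0) (A : Matrix (Fin n) (Fin n) ℝ) (i : Fin n) :
    ∑ j, ctr A i j = 0 := by
  simp only [ctr, rowMean, colMean, totMean, sum_add_distrib, sum_sub_distrib, sum_const,
    card_univ, Fintype.card_fin, nsmul_eq_mul, ← sum_div]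
  rw [sum_comm (f := fun j i => A i j)]
  field_simp
  ring

lemma sum_ctr_col_eq_zero (hn : n ≠ 0) (A : Matrix (Fin n) (Fin n) ℝ) (j : Fin n) :
    ∑ i, ctr A i j = 0 := by
  simp only [ctr, rowMean, colMean, totMean, sum_add_distrib, sum_sub_distrib, sum_const,
    card_univ, Fintype.card_fin, nsmul_eq_mul, ← sum_div]
  field_simp
  ring

lemma isStandardized_hatM {A : Matrix (Fin n) (Fin n) ℝ} (hA : 0 < sdev A) :
    IsStandardized (hatM A) := by
  have two_le := two_le_of_sdev_pos hA
  have n_ne : n ≠ 0 := by lia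
  have pred_ne : (n : ℝ) - 1 ≠ 0 := sub_ne_zero.mpr (by exact_mod_cast (by lia : n ≠ 1))
  have sigma2_pos : 0 < sigma2 A := Real.sqrt_pos.mp hA
  refine ⟨two_le, fun i => ?_, fun j => ?_, ?_⟩
  · simp only [hatM, ← sum_div, sum_ctr_row_eq_zero n_ne, zero_div]
  · simp only [hatM, ← sum_div, sum_ctr_col_eq_zero n_ne, zero_div]
  · simp only [absPowSum, sq_abs, hatM, div_pow, ← sum_div]
    rw [sdev, Real.sq_sqrt sigma2_pos.le, div_eq_iff sigma2_pos.ne', sigma2,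
      mul_div_cancel₀ _ pred_ne]

lemma rankTstd_eq_rankT_hatM (hn : n ≠ 0) (A : Matrix (Fin n) (Fin n) ℝ)
    (π : Equiv.Perm (Fin n)) : rankTstd A π = rankT (hatM A) π := by
  simp only [rankTstd, rankT, hatM, ← sum_div]
  congr 1
  simp only [ctr, sum_add_distrib, sum_sub_distrib, sum_const, card_univ, Fintype.card_fin,
    nsmul_eq_mul, muM]
  rw [Equiv.sum_comp π (colMean A)]
  simp only [rowMean, colMean, totMean, ← sum_div]
  rw [sum_comm (f := fun j i => A i j)]
  field_simp
  ring

end RankStatistic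

theorem rank_statistic_truncated_abs_moment_bound_general (k : ℕ) :
    ∃ K7 : ℝ, 0 < K7 ∧
      ∀ (n : ℕ) (A : Matrix (Fin n) (Fin n) ℝ), 0 < sdev A → ∀ s, k < s → ∀ z : ℝ,
        |permExp (fun π => |rankTstd A π| ^ k * (if rankTstd A π ≤ z then (1 : ℝ) else 0))
            - ∫ x in Set.Iic z, |x| ^ k * gaussD x| ≤
          K7 * (betaM A / (n : ℝ) + (∑ i, ∑ j, |hatM A i j| ^ s) / (n : ℝ)) := by
  obtain ⟨C₁, hC₁, truncation_error⟩ := exists_abs_permExp_sub_permExp_smallPart_le k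
  obtain ⟨C₂, hC₂, normal_error⟩ := exists_abs_permExp_smallPart_sub_gaussMean_le k
  refine ⟨C₁ + C₂ + 1, by positivity, fun n A hA s hs z => ?_⟩
  have standardized := isStandardized_hatM hA
  have n_ne : n ≠ 0 := (two_pos.trans_le standardized.two_le).ne'
  change _ ≤ _ * (absPowSum 3 (hatM A) / n + absPowSum s (hatM A) / n)
  have cube_nonneg := div_nonneg (absPowSum_nonneg 3 (hatM A)) n.cast_nonneg
  have pow_nonneg := div_nonneg (absPowSum_nonneg s (hatM A)) n.cast_nonneg
  simp only [rankTstd_eq_rankT_hatM n_ne]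
  rw [← gaussMean_truncAbsPow]
  refine (abs_sub_le _ _ _).trans ((add_le_add (truncation_error n _ standardized s hs z)
    (normal_error n _ standardized z)).trans ?_)
  linarith [mul_nonneg hC₂ pow_nonneg]

/-- for each fixed `k ∈ ℕ` there is a constant `𝒦₇(k) > 0` such that for all
matrices `A` with `σ_A > 0`,
`sup_z |E(|𝒯_A|^k 1_{(−∞,z]}(𝒯_A)) − ∫_{−∞}^z |x|^k ψ| ≤ 𝒦₇(k)(β_A/n + (1/n)Σ|â_{ij}|^{k+4})`. -/
theorem rank_statistic_truncated_abs_moment_bound (k : ℕ) (hk : 1 ≤ k) :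
    ∃ K7 : ℝ, 0 < K7 ∧
      ∀ (n : ℕ), 2 ≤ n → ∀ A : Matrix (Fin n) (Fin n) ℝ, 0 < sdev A →
        ∀ z : ℝ,
          |permExp (fun π => |rankTstd A π| ^ k * (if rankTstd A π ≤ z then (1 : ℝ) else 0))
              - ∫ x in Set.Iic z, |x| ^ k * gaussD x| ≤
            K7 * (betaM A / (n : ℝ) + (∑ i, ∑ j, |hatM A i j| ^ (k + 4)) / (n : ℝ)) := by
  obtain ⟨K7, hK7, bound⟩ := rank_statistic_truncated_abs_moment_bound_general k
  exact ⟨K7, hK7, fun n _ A hA z => bound n A hA (k + 4) (by lia) z⟩
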